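/- Fix k ∈ ℕ (k ≥ 1) and α > 0, and let φ : ℝ → ℂ be a Schwartz function with φ̂ real-valued, 0 ≤ φ̂(ξ) ≤ 1 for all ξ, supp(φ̂) ⊆ [−1, 1] and φ̂(ξ) = 1 for ξ ∈ [−1/2, 1/2]. For a trigonometric polynomial f(x) = Σ_{n=1}^N c_n e^{iλ_n x} with distinct real exponents and j ∈ ℕ, define S_j f(x) := Σ_{n : |λ_n| ≤ 2^j} c_n e^{iλ_n x} and R_j f(x) := Σ_{n=1}^N φ̂(2^{−j} λ_n) c_n e^{iλ_n x}. Then there exists a constant C = C(k, α, φ) > 0 such that for every α-separated trigonometric polynomial f, ‖(Σ_{j=1}^∞ |S_j f − R_j f|²)^{1/2}‖_{S^{2^k}} ≤ C ‖f‖_{S^{2^k}}. -/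

import Mathlib

open MeasureTheory

/-- A trigonometric polynomial `x ↦ Σ_{n<N} c_n e^{iλ_n x}` with strictly increasing real
exponents. -/
structure TrigPoly where
  N : ℕ
  c : ℕ → ℂ
  Λ : ℕ → ℝ
  mono : ∀ n, n + 1 < N → Λ n < Λ (n + 1)

/-- Evaluation of a trigonometric polynomial. -/
noncomputable def TrigPoly.eval (P : TrigPoly) (x : ℝ) : ℂ :=
  ∑ n ∈ Finset.range P.N, P.c n * Complex.exp (Complex.I * (P.Λ n : ℂ) * (x : ℂ))

/-- `α`-separation of the exponents: `λ_{n+1} - λ_n > α`. -/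
def TrigPoly.sep (P : TrigPoly) (α : ℝ) : Prop :=
  ∀ n, n + 1 < P.N → α < P.Λ (n + 1) - P.Λ n

/-- The Stepanov norm `‖f‖_{S^p} = (sup_{x ∈ ℝ} ∫_x^{x+1} |f(s)|^p ds)^{1/p}` of a function
`f : ℝ → ℝ`. -/
noncomputable def stepanovNorm (p : ℝ) (f : ℝ → ℝ) : ℝ :=
  (⨆ x : ℝ, ∫ s in x..(x + 1), |f s| ^ p) ^ (1 / p)

/-- The Fourier transform `φ̂(ξ) = ∫ φ(t) e^{-itξ} dt`. -/
noncomputable def myFourier (φ : ℝ → ℂ) (ξ : ℝ) : ℂ :=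
  ∫ t : ℝ, φ t * Complex.exp (-Complex.I * (t : ℂ) * (ξ : ℂ))

/-- The sharp dyadic partial sum `S_j f(x) = Σ_{|λ_n| ≤ 2^j} c_n e^{iλ_n x}`. -/
noncomputable def TrigPoly.sharpSum (P : TrigPoly) (j : ℕ) (x : ℝ) : ℂ :=
  ∑ n ∈ Finset.range P.N,
    if |P.Λ n| ≤ (2 : ℝ) ^ j then P.c n * Complex.exp (Complex.I * (P.Λ n : ℂ) * (x : ℂ)) else 0

/-- The smoothed dyadic partial sum `R_j f(x) = Σ_n φ̂(2^{-j} λ_n) c_n e^{iλ_n x}`. -/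
noncomputable def TrigPoly.smoothSum (φ : ℝ → ℂ) (P : TrigPoly) (j : ℕ) (x : ℝ) : ℂ :=
  ∑ n ∈ Finset.range P.N,
    myFourier φ (((2 : ℝ) ^ j)⁻¹ * P.Λ n) * P.c n * Complex.exp (Complex.I * (P.Λ n : ℂ) * (x : ℂ))

section
noncomputable def ec (l : ℤ) (y : ℝ) : ℂ := Complex.exp (Complex.I * (l : ℂ) * (y : ℂ))

lemma ec_add (a b : ℤ) (y : ℝ) : ec (a + b) y = ec a y * ec b y := by
  unfold ec; rw [← Complex.exp_add]; congr 1; push_cast; ring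

lemma ec_conj (a : ℤ) (y : ℝ) : (starRingEnd ℂ) (ec a y) = ec (-a) y := by
  unfold ec; rw [← Complex.exp_conj]; congr 1; simp

lemma ec_sub (a b : ℤ) (y : ℝ) : ec (a - b) y = ec a y * (starRingEnd ℂ) (ec b y) := by
  rw [sub_eq_add_neg, ec_add, ec_conj]

lemma norm_ec (a : ℤ) (y : ℝ) : ‖ec a y‖ = 1 := by
  unfold ec
  have : Complex.I * (a : ℂ) * (y : ℂ) = ((a * y : ℝ) : ℂ) * Complex.I := by push_cast; ring
  rw [this, Complex.norm_exp_ofReal_mul_I]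

lemma continuous_ec (a : ℤ) : Continuous (ec a) := by
  unfold ec; fun_prop

lemma integral_ec_ne (a : ℤ) (ha : a ≠ 0) : ∫ y in (-Real.pi)..Real.pi, ec a y = 0 := by
  unfold ec
  have hc : Complex.I * (a : ℂ) ≠ 0 := mul_ne_zero Complex.I_ne_zero (by exact_mod_cast ha)
  rw [integral_exp_mul_complex hc, div_eq_zero_iff]
  left
  rw [sub_eq_zero]
  rw [show Complex.I * (a : ℂ) * ((Real.pi : ℝ) : ℂ)
    = Complex.I * (a : ℂ) * ((-Real.pi : ℝ) : ℂ) + a * (2 * Real.pi * Complex.I) by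
      push_cast; ring]
  rw [Complex.exp_add, Complex.exp_int_mul_two_pi_mul_I, mul_one]

noncomputable def sg (l : ℤ) : ℝ := if 0 ≤ l then 1 else -1

lemma sg_sq (l : ℤ) : sg l * sg l = 1 := by unfold sg; split_ifs <;> norm_num

lemma sg_id (a b : ℤ) : sg a * sg b = 1 - sg (a - b) * (sg a - sg b) := by
  unfold sg
  split_ifs <;> first | (exfalso; omega) | norm_num

noncomputable def tp {ι : Type} (s : Finset ι) (c : ι → ℂ) (l : ι → ℤ) (y : ℝ) : ℂ :=
  ∑ i ∈ s, c i * ec (l i) y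

lemma continuous_tp {ι : Type} (s : Finset ι) (c : ι → ℂ) (l : ι → ℤ) :
    Continuous (tp s c l) := by
  unfold tp
  exact continuous_finsetSum _ fun i _ => continuous_const.mul (continuous_ec _)

lemma tp_mul_conj {ι : Type} (s : Finset ι) (c d : ι → ℂ) (l : ι → ℤ) (y : ℝ) :
    tp s c l y * (starRingEnd ℂ) (tp s d l y)
      = ∑ i ∈ s, ∑ i' ∈ s, c i * (starRingEnd ℂ) (d i') * ec (l i - l i') y := by
  unfold tp
  rw [map_sum, Finset.sum_mul_sum]
  refine Finset.sum_congr rfl fun i _ => Finset.sum_congr rfl fun i' _ => ?_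
  rw [ec_sub, map_mul]; ring

lemma parseval_sg {ι : Type} (s : Finset ι) (c : ι → ℂ) (l : ι → ℤ) :
    ∫ y in (-Real.pi)..Real.pi, ‖tp s (fun i => (sg (l i) : ℂ) * c i) l y‖ ^ 2
      = ∫ y in (-Real.pi)..Real.pi, ‖tp s c l y‖ ^ 2 := by
  have key : ∀ d : ι → ℂ, ((∫ y in (-Real.pi)..Real.pi, ‖tp s d l y‖ ^ 2 : ℝ) : ℂ)
      = ∑ i ∈ s, ∑ i' ∈ s, d i * (starRingEnd ℂ) (d i') *
        ∫ y in (-Real.pi)..Real.pi, ec (l i - l i') y := by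
    intro d
    rw [← intervalIntegral.integral_ofReal]
    have : ∀ y : ℝ, ((‖tp s d l y‖ ^ 2 : ℝ) : ℂ)
        = ∑ i ∈ s, ∑ i' ∈ s, d i * (starRingEnd ℂ) (d i') * ec (l i - l i') y := by
      intro y
      rw [← tp_mul_conj, Complex.mul_conj, Complex.normSq_eq_norm_sq]
    simp_rw [this]
    rw [intervalIntegral.integral_finsetSum]
    · refine Finset.sum_congr rfl fun i _ => ?_
      rw [intervalIntegral.integral_finsetSum]
      · refine Finset.sum_congr rfl fun i' _ => ?_
        rw [intervalIntegral.integral_const_mul]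
      · intro i' _
        exact (continuous_const.mul (continuous_ec _)).intervalIntegrable _ _
    · intro i _
      exact (continuous_finsetSum _ fun i' _ =>
        continuous_const.mul (continuous_ec _)).intervalIntegrable _ _
  have h2 : ((∫ y in (-Real.pi)..Real.pi, ‖tp s (fun i => (sg (l i) : ℂ) * c i) l y‖ ^ 2 : ℝ) : ℂ)
      = ((∫ y in (-Real.pi)..Real.pi, ‖tp s c l y‖ ^ 2 : ℝ) : ℂ) := by
    rw [key, key]
    refine Finset.sum_congr rfl fun i _ => Finset.sum_congr rfl fun i' _ => ?_
    by_cases h : l i = l i'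
    · rw [h, map_mul, Complex.conj_ofReal]
      have := sg_sq (l i')
      have h3 : ((sg (l i') : ℝ) : ℂ) * (sg (l i') : ℂ) = 1 := by exact_mod_cast this
      linear_combination (c i * (starRingEnd ℂ) (c i') *
        ∫ y in (-Real.pi)..Real.pi, ec (l i' - l i') y) * h3
    · rw [integral_ec_ne _ (sub_ne_zero.mpr h)]; simp
  exact_mod_cast h2

lemma cotlar_id {ι : Type} (s : Finset ι) (c : ι → ℂ) (l : ι → ℤ) (y : ℝ) :
    ((‖tp s (fun i => (sg (l i) : ℂ) * c i) l y‖ ^ 2 : ℝ) : ℂ)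
     = ((‖tp s c l y‖ ^ 2 : ℝ) : ℂ) - ∑ i ∈ s, ∑ i' ∈ s, (sg (l i - l i') : ℂ) *
        (((sg (l i) : ℂ) - (sg (l i') : ℂ)) * (c i * (starRingEnd ℂ) (c i'))) * ec (l i - l i') y := by
  rw [← Complex.normSq_eq_norm_sq, ← Complex.mul_conj, ← Complex.normSq_eq_norm_sq,
    ← Complex.mul_conj, tp_mul_conj, tp_mul_conj, ← Finset.sum_sub_distrib]
  refine Finset.sum_congr rfl fun i _ => ?_
  rw [← Finset.sum_sub_distrib]
  refine Finset.sum_congr rfl fun i' _ => ?_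
  rw [map_mul, Complex.conj_ofReal]
  have h : ((sg (l i) : ℝ) : ℂ) * (sg (l i') : ℂ)
    = 1 - (sg (l i - l i') : ℂ) * ((sg (l i) : ℂ) - (sg (l i') : ℂ)) := by
    exact_mod_cast sg_id (l i) (l i')
  linear_combination (c i * (starRingEnd ℂ) (c i') * ec (l i - l i') y) * h

lemma cotlar_h {ι : Type} (s : Finset ι) (c : ι → ℂ) (l : ι → ℤ) (y : ℝ) :
    ‖∑ i ∈ s, ∑ i' ∈ s,
        (((sg (l i) : ℂ) - (sg (l i') : ℂ)) * (c i * (starRingEnd ℂ) (c i'))) * ec (l i - l i') y‖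
     ≤ 2 * (‖tp s (fun i => (sg (l i) : ℂ) * c i) l y‖ * ‖tp s c l y‖) := by
  have : ∑ i ∈ s, ∑ i' ∈ s,
        (((sg (l i) : ℂ) - (sg (l i') : ℂ)) * (c i * (starRingEnd ℂ) (c i'))) * ec (l i - l i') y
      = tp s (fun i => (sg (l i) : ℂ) * c i) l y * (starRingEnd ℂ) (tp s c l y)
       - tp s c l y * (starRingEnd ℂ) (tp s (fun i => (sg (l i) : ℂ) * c i) l y) := by
    rw [tp_mul_conj, tp_mul_conj, ← Finset.sum_sub_distrib]
    refine Finset.sum_congr rfl fun i _ => ?_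
    rw [← Finset.sum_sub_distrib]
    refine Finset.sum_congr rfl fun i' _ => ?_
    rw [map_mul, Complex.conj_ofReal]; ring
  rw [this]
  refine (norm_sub_le _ _).trans ?_
  simp only [norm_mul, RCLike.norm_conj]
  apply le_of_eq; ring

lemma circle_cotlar (m : ℕ) : ∃ C : ℝ, 0 < C ∧ ∀ (κ ι : Type) (t : Finset κ) (s : Finset ι)
    (c : κ → ι → ℂ) (l : κ → ι → ℤ),
    ∫ y in (-Real.pi)..Real.pi,
      (∑ j ∈ t, ‖tp s (fun i => (sg (l j i) : ℂ) * c j i) (l j) y‖ ^ 2) ^ (2 ^ m)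
    ≤ C * ∫ y in (-Real.pi)..Real.pi, (∑ j ∈ t, ‖tp s (c j) (l j) y‖ ^ 2) ^ (2 ^ m) := by
  have hpi : -Real.pi ≤ Real.pi := by linarith [Real.pi_pos]
  induction m with
  | zero =>
    refine ⟨1, one_pos, fun κ ι t s c l => ?_⟩
    simp only [pow_zero, pow_one, one_mul]
    rw [intervalIntegral.integral_finsetSum, intervalIntegral.integral_finsetSum]
    · exact le_of_eq (Finset.sum_congr rfl fun j _ => parseval_sg s (c j) (l j))
    · intro j _
      exact ((continuous_tp _ _ _).norm.pow 2).intervalIntegrable _ _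
    · intro j _
      exact ((continuous_tp _ _ _).norm.pow 2).intervalIntegrable _ _
  | succ m ih =>
    obtain ⟨C, hC, ih⟩ := ih
    set q : ℕ := 2 ^ m with hq
    set A : ℝ := 2 ^ (2 * q) with hA
    have hA0 : 0 < A := by positivity
    set K : ℝ := A * C * 4 ^ q with hK
    have hK0 : 0 < K := by positivity
    refine ⟨2 * A + K ^ 2, by positivity, fun κ ι t s c l => ?_⟩
    set U : ℝ → ℝ := fun y => ∑ j ∈ t, ‖tp s (fun i => (sg (l j i) : ℂ) * c j i) (l j) y‖ ^ 2
      with hU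
    set V : ℝ → ℝ := fun y => ∑ j ∈ t, ‖tp s (c j) (l j) y‖ ^ 2 with hV
    have hUc : Continuous U := continuous_finsetSum _ fun j _ => (continuous_tp _ _ _).norm.pow 2
    have hVc : Continuous V := continuous_finsetSum _ fun j _ => (continuous_tp _ _ _).norm.pow 2
    have hU0 : ∀ y, 0 ≤ U y := fun y => Finset.sum_nonneg fun j _ => by positivity
    have hV0 : ∀ y, 0 ≤ V y := fun y => Finset.sum_nonneg fun j _ => by positivity
    let S : Finset (κ × ι × ι) := t ×ˢ s ×ˢ s
    let d : κ × ι × ι → ℂ := fun x => ((sg (l x.1 x.2.1) : ℂ) - (sg (l x.1 x.2.2) : ℂ)) *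
      (c x.1 x.2.1 * (starRingEnd ℂ) (c x.1 x.2.2))
    let L : κ × ι × ι → ℤ := fun x => l x.1 x.2.1 - l x.1 x.2.2
    let H : ℝ → ℂ := tp S d L
    let EH : ℝ → ℂ := tp S (fun i => (sg (L i) : ℂ) * d i) L
    have hHc : Continuous H := continuous_tp _ _ _
    have hEHc : Continuous EH := continuous_tp _ _ _
    have hid : ∀ y, ((U y : ℝ) : ℂ) = (V y : ℂ) - EH y := by
      intro y
      simp only [hU, hV, EH, tp, S, Finset.sum_product]
      rw [Complex.ofReal_sum, Complex.ofReal_sum, ← Finset.sum_sub_distrib]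
      refine Finset.sum_congr rfl fun j _ => ?_
      exact cotlar_id s (c j) (l j) y
    have hH : ∀ y, ‖H y‖ ^ 2 ≤ 4 * (U y * V y) := by
      intro y
      have h1 : ‖H y‖ ≤ 2 * ∑ j ∈ t, ‖tp s (fun i => (sg (l j i) : ℂ) * c j i) (l j) y‖ *
          ‖tp s (c j) (l j) y‖ := by
        simp only [H]
        rw [tp]
        simp only [S, Finset.sum_product]
        rw [Finset.mul_sum]
        exact (norm_sum_le _ _).trans (Finset.sum_le_sum fun j _ => cotlar_h s (c j) (l j) y)
      have h2 := Finset.sum_mul_sq_le_sq_mul_sq t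
        (fun j => ‖tp s (fun i => (sg (l j i) : ℂ) * c j i) (l j) y‖) (fun j => ‖tp s (c j) (l j) y‖)
      calc ‖H y‖ ^ 2 ≤ (2 * ∑ j ∈ t, ‖tp s (fun i => (sg (l j i) : ℂ) * c j i) (l j) y‖ *
          ‖tp s (c j) (l j) y‖) ^ 2 := by gcongr
        _ ≤ _ := by rw [mul_pow]; norm_num; exact h2
    have hE := ih Unit (κ × ι × ι) {()} S (fun _ => d) (fun _ => L)
    simp only [Finset.sum_singleton] at hE
    have hpow : (2:ℕ) ^ (m + 1) = 2 * q := by rw [pow_succ, hq]; ring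
    rw [hpow]
    have hpt : ∀ y, U y ^ (2 * q) ≤ A * V y ^ (2 * q) + A * (‖EH y‖ ^ 2) ^ q := by
      intro y
      have h1 : U y ≤ V y + ‖EH y‖ := by
        have : ‖((U y : ℝ) : ℂ)‖ ≤ ‖((V y : ℝ) : ℂ)‖ + ‖EH y‖ := by
          rw [hid y]; exact norm_sub_le _ _
        simpa [abs_of_nonneg (hU0 y), abs_of_nonneg (hV0 y)] using this
      calc U y ^ (2 * q) ≤ (V y + ‖EH y‖) ^ (2 * q) := pow_le_pow_left₀ (hU0 y) h1 _
        _ ≤ 2 ^ (2 * q - 1) * (V y ^ (2 * q) + ‖EH y‖ ^ (2 * q)) :=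
          add_pow_le (hV0 y) (norm_nonneg _) _
        _ ≤ A * (V y ^ (2 * q) + ‖EH y‖ ^ (2 * q)) := by
          have := hV0 y
          apply mul_le_mul_of_nonneg_right _ (by positivity)
          exact pow_le_pow_right₀ (by norm_num) (by omega)
        _ = _ := by rw [← pow_mul]; ring
    have hpt2 : ∀ y, A * C * (‖H y‖ ^ 2) ^ q ≤ 1 / 2 * U y ^ (2 * q) + K ^ 2 / 2 * V y ^ (2 * q) := by
      intro y
      have := hU0 y
      have := hV0 y
      calc A * C * (‖H y‖ ^ 2) ^ q ≤ A * C * (4 * (U y * V y)) ^ q := by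
            gcongr; exact hH y
        _ = U y ^ q * (K * V y ^ q) := by rw [mul_pow, mul_pow, hK]; ring
        _ ≤ 1 / 2 * (U y ^ q) ^ 2 + 1 / 2 * (K * V y ^ q) ^ 2 := by
            nlinarith [sq_nonneg (U y ^ q - K * V y ^ q)]
        _ = _ := by rw [mul_pow, ← pow_mul, ← pow_mul, mul_comm q 2]; ring
    have i1 : ∫ y in (-Real.pi)..Real.pi, U y ^ (2 * q) ≤
        A * (∫ y in (-Real.pi)..Real.pi, V y ^ (2 * q)) +
        A * ∫ y in (-Real.pi)..Real.pi, (‖EH y‖ ^ 2) ^ q := by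
      rw [← intervalIntegral.integral_const_mul, ← intervalIntegral.integral_const_mul,
        ← intervalIntegral.integral_add]
      · exact intervalIntegral.integral_mono_on hpi
          (Continuous.intervalIntegrable (by fun_prop) _ _)
          (Continuous.intervalIntegrable (by fun_prop) _ _) (fun y _ => hpt y)
      · exact Continuous.intervalIntegrable (by fun_prop) _ _
      · exact Continuous.intervalIntegrable (by fun_prop) _ _
    have i2 : A * C * (∫ y in (-Real.pi)..Real.pi, (‖H y‖ ^ 2) ^ q) ≤
        1 / 2 * (∫ y in (-Real.pi)..Real.pi, U y ^ (2 * q)) +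
        K ^ 2 / 2 * ∫ y in (-Real.pi)..Real.pi, V y ^ (2 * q) := by
      rw [← intervalIntegral.integral_const_mul, ← intervalIntegral.integral_const_mul,
        ← intervalIntegral.integral_const_mul, ← intervalIntegral.integral_add]
      · exact intervalIntegral.integral_mono_on hpi
          (Continuous.intervalIntegrable (by fun_prop) _ _)
          (Continuous.intervalIntegrable (by fun_prop) _ _) (fun y _ => hpt2 y)
      · exact Continuous.intervalIntegrable (by fun_prop) _ _
      · exact Continuous.intervalIntegrable (by fun_prop) _ _
    have hE' : A * (∫ y in (-Real.pi)..Real.pi, (‖EH y‖ ^ 2) ^ q)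
      ≤ A * (C * ∫ y in (-Real.pi)..Real.pi, (‖H y‖ ^ 2) ^ q) :=
      mul_le_mul_of_nonneg_left hE hA0.le
    change (∫ y in (-Real.pi)..Real.pi, U y ^ (2 * q)) ≤
      (2 * A + K ^ 2) * (∫ y in (-Real.pi)..Real.pi, V y ^ (2 * q))
    nlinarith [i1, i2, hE']
end

section
noncomputable def er (lam : ℝ) (x : ℝ) : ℂ := Complex.exp (Complex.I * (lam : ℂ) * (x : ℂ))

lemma norm_er (a : ℝ) (y : ℝ) : ‖er a y‖ = 1 := by
  unfold er
  have : Complex.I * (a : ℂ) * (y : ℂ) = ((a * y : ℝ) : ℂ) * Complex.I := by push_cast; ring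
  rw [this, Complex.norm_exp_ofReal_mul_I]

lemma er_add (a x y : ℝ) : er a (x + y) = er a x * er a y := by
  unfold er; rw [← Complex.exp_add]; congr 1; push_cast; ring

noncomputable def Wk (M : ℕ) (y : ℝ) : ℂ := (M : ℂ)⁻¹ * ∑ m ∈ Finset.range M, ec m y

lemma continuous_Wk (M : ℕ) : Continuous (Wk M) := by
  unfold Wk
  exact continuous_const.mul (continuous_finsetSum _ fun i _ => continuous_ec _)

lemma norm_Wk_le_one (M : ℕ) (hM : 1 ≤ M) (y : ℝ) : ‖Wk M y‖ ≤ 1 := by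
  unfold Wk
  rw [norm_mul, norm_inv, Complex.norm_natCast]
  have : ‖∑ m ∈ Finset.range M, ec m y‖ ≤ M := by
    refine (norm_sum_le _ _).trans ?_
    simp [norm_ec]
  have hM' : (0:ℝ) < M := by exact_mod_cast hM
  rw [inv_mul_le_iff₀ hM']; linarith

lemma Wk_decay (M : ℕ) (hM : 1 ≤ M) (y : ℝ) (hy : |y| ≤ Real.pi) :
    ‖Wk M y‖ * (M * |y|) ≤ Real.pi := by
  have hM' : (0:ℝ) < M := by exact_mod_cast hM
  have hpi := Real.pi_pos
  have h1 : (ec 1 y - 1) * ∑ m ∈ Finset.range M, ec m y = ec M y - 1 := by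
    have : ∀ m : ℕ, ec m y = (ec 1 y) ^ m := by
      intro m
      induction m with
      | zero => simp [ec]
      | succ k ih => rw [pow_succ, ← ih, ← ec_add]; push_cast; rfl
    simp_rw [this]
    rw [mul_comm, geom_sum_mul]
  have h2 : ‖ec M y - 1‖ ≤ 2 := by
    refine (norm_sub_le _ _).trans ?_
    rw [norm_ec]; norm_num
  have h3 : 2 / Real.pi * |y| ≤ ‖ec 1 y - 1‖ := by
    have : ec 1 y - 1 = Complex.exp (Complex.I * (y : ℂ)) - 1 := by unfold ec; simp
    rw [this, Complex.norm_exp_I_mul_ofReal_sub_one, Real.norm_eq_abs, abs_mul]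
    have := Real.mul_abs_le_abs_sin (x := y / 2) (by rw [abs_div]; norm_num; linarith)
    rw [abs_div] at this
    norm_num at this ⊢
    rw [show 2 / Real.pi * |y| = 2 * (|y| / Real.pi) by ring]
    linarith
  have h4 : ‖ec 1 y - 1‖ * ‖∑ m ∈ Finset.range M, ec m y‖ ≤ 2 := by
    rw [← norm_mul, h1]; exact h2
  have h5 : 2 / Real.pi * |y| * ‖∑ m ∈ Finset.range M, ec m y‖ ≤ 2 :=
    (mul_le_mul_of_nonneg_right h3 (norm_nonneg _)).trans h4
  have h6 : |y| * ‖∑ m ∈ Finset.range M, ec m y‖ ≤ Real.pi := by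
    have := mul_le_mul_of_nonneg_left h5 (by positivity : 0 ≤ Real.pi / 2)
    calc _ = Real.pi / 2 * (2 / Real.pi * |y| * ‖∑ m ∈ Finset.range M, ec m y‖) := by
          field_simp
      _ ≤ _ := this
      _ = _ := by ring
  unfold Wk
  rw [norm_mul, norm_inv, Complex.norm_natCast]
  calc _ = |y| * ‖∑ m ∈ Finset.range M, ec m y‖ := by field_simp
    _ ≤ _ := h6

lemma Wk_lower (M : ℕ) (hM : 1 ≤ M) (y : ℝ) (hy0 : 0 ≤ y) (hy : M * y ≤ 1) :
    1 / 2 ≤ ‖Wk M y‖ := by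
  have hM' : (0:ℝ) < M := by exact_mod_cast hM
  have h1 : (M : ℝ) * (1 / 2) ≤ (∑ m ∈ Finset.range M, ec m y).re := by
    rw [Complex.re_sum]
    calc (M : ℝ) * (1 / 2) = ∑ m ∈ Finset.range M, (1 / 2 : ℝ) := by simp
      _ ≤ _ := by
        refine Finset.sum_le_sum fun m hm => ?_
        have hm' : (m : ℝ) ≤ M := by exact_mod_cast (Finset.mem_range.mp hm).le
        have : ec m y = Complex.exp (((m * y : ℝ) : ℂ) * Complex.I) := by
          unfold ec; congr 1; push_cast; ring
        rw [this, Complex.exp_ofReal_mul_I_re]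
        have h0 : 0 ≤ m * y := by positivity
        have h1 : m * y ≤ 1 := (mul_le_mul_of_nonneg_right hm' hy0).trans hy
        have := Real.one_sub_sq_div_two_le_cos (x := m * y)
        nlinarith
  have h2 := (le_abs_self _).trans (Complex.abs_re_le_norm (∑ m ∈ Finset.range M, ec m y))
  unfold Wk
  rw [norm_mul, norm_inv, Complex.norm_natCast, le_inv_mul_iff₀ hM']
  linarith

/-- polynomial with real frequencies -/
noncomputable def rp (N : ℕ) (c : ℕ → ℂ) (Λ : ℕ → ℝ) (x : ℝ) : ℂ :=
  ∑ n ∈ Finset.range N, c n * er (Λ n) x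

lemma continuous_rp (N : ℕ) (c : ℕ → ℂ) (Λ : ℕ → ℝ) : Continuous (rp N c Λ) := by
  unfold rp er
  fun_prop

lemma norm_rp_le (N : ℕ) (c : ℕ → ℂ) (Λ : ℕ → ℝ) (x : ℝ) :
    ‖rp N c Λ x‖ ≤ ∑ n ∈ Finset.range N, ‖c n‖ := by
  unfold rp
  refine (norm_sum_le _ _).trans (Finset.sum_le_sum fun n _ => ?_)
  rw [norm_mul, norm_er, mul_one]

lemma exists_cut (N M : ℕ) (l : ℕ → ℤ) (hl : ∀ n, n + 1 < N → l n + 2 * M ≤ l (n + 1))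
    (U : ℕ → Prop) (hU : ∀ n n', n ≤ n' → U n → U n') :
    ∃ a : ℤ, ∀ n < N, (U n → a ≤ l n) ∧ (¬ U n → l n + 2 * M ≤ a) := by
  have hmono : ∀ k n, n + k < N → l n ≤ l (n + k) := by
    intro k
    induction k with
    | zero => intro n _; simp
    | succ k ih =>
      intro n h
      have h1 := ih n (by omega)
      have h2 := hl (n + k) (by omega)
      rw [← add_assoc]; omega
  have hmono1 : ∀ n n', n < n' → n' < N → l n + 2 * M ≤ l n' := by
    intro n n' h h'
    have h1 := hl n (by omega)
    have h2 := hmono (n' - (n + 1)) (n + 1) (by omega)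
    rw [show n + 1 + (n' - (n + 1)) = n' by omega] at h2
    omega
  by_cases h : ∃ n, n < N ∧ U n
  · classical
    refine ⟨l (Nat.find h), fun n hn => ⟨fun hu => ?_, fun hu => ?_⟩⟩
    · have h1 := Nat.find_min' h ⟨hn, hu⟩
      have h2 := hmono (n - Nat.find h) (Nat.find h) (by omega)
      rwa [show Nat.find h + (n - Nat.find h) = n by omega] at h2
    · have h1 : n < Nat.find h := by
        by_contra hc
        exact hu (hU _ _ (not_lt.mp hc) (Nat.find_spec h).2)
      exact hmono1 _ _ h1 (Nat.find_spec h).1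
  · refine ⟨l (N - 1) + 2 * M, fun n hn => ⟨fun hu => absurd ⟨n, hn, hu⟩ h, fun _ => ?_⟩⟩
    have h2 := hmono (N - 1 - n) n (by omega)
    rw [show n + (N - 1 - n) = N - 1 by omega] at h2
    omega

lemma tp_prod (N M : ℕ) (c : ℕ → ℂ) (l : ℕ → ℤ) (a : ℤ) (y : ℝ) :
    tp (Finset.range N ×ˢ Finset.range M ×ˢ Finset.range M)
      (fun i : ℕ × ℕ × ℕ => c i.1 * ((M : ℂ)⁻¹ * (M : ℂ)⁻¹))
      (fun i => l i.1 + i.2.1 + i.2.2 - a) y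
    = (∑ n ∈ Finset.range N, c n * ec (l n) y) * Wk M y ^ 2 * ec (-a) y := by
  unfold tp Wk
  rw [Finset.sum_product]
  simp only [Finset.sum_product]
  rw [Finset.sum_mul, Finset.sum_mul]
  refine Finset.sum_congr rfl fun n _ => ?_
  have : (((M:ℂ)⁻¹ * ∑ m ∈ Finset.range M, ec m y)) ^ 2
      = (M:ℂ)⁻¹ * (M:ℂ)⁻¹ * ∑ m ∈ Finset.range M, ∑ m' ∈ Finset.range M, ec m y * ec m' y := by
    rw [← Finset.sum_mul_sum]; ring
  rw [this, Finset.mul_sum, Finset.mul_sum, Finset.sum_mul]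
  refine Finset.sum_congr rfl fun m _ => ?_
  rw [Finset.mul_sum, Finset.mul_sum, Finset.sum_mul]
  refine Finset.sum_congr rfl fun m' _ => ?_
  rw [sub_eq_add_neg, ec_add, ec_add, ec_add]
  ring

lemma transfer_step (m Q : ℕ) (hQ : 1 ≤ Q) (C : ℝ) (hC : 0 < C)
    (hcot : ∀ (κ ι : Type) (t : Finset κ) (s : Finset ι)
    (c : κ → ι → ℂ) (l : κ → ι → ℤ),
    ∫ y in (-Real.pi)..Real.pi,
      (∑ j ∈ t, ‖tp s (fun i => (sg (l j i) : ℂ) * c j i) (l j) y‖ ^ 2) ^ (2 ^ m)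
    ≤ C * ∫ y in (-Real.pi)..Real.pi, (∑ j ∈ t, ‖tp s (c j) (l j) y‖ ^ 2) ^ (2 ^ m))
    (κ : Type) (t : Finset κ) (N : ℕ) (l : ℕ → ℤ) (M : ℕ) (hM : 1 ≤ M)
    (hl : ∀ n, n + 1 < N → l n + 2 * M ≤ l (n + 1))
    (c : κ → ℕ → ℂ) (U : κ → ℕ → Prop) (hU : ∀ j n n', n ≤ n' → U j n → U j n')
    (σ : κ → ℕ → ℝ) (hσ1 : ∀ j n, U j n → σ j n = 1) (hσ2 : ∀ j n, ¬ U j n → σ j n = -1) :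
    ∫ x in (0:ℝ)..1, (∑ j ∈ t, ‖rp N (fun n => (σ j n : ℂ) * c j n)
        (fun n => l n / (Q * M : ℝ)) x‖ ^ 2) ^ (2 ^ m)
    ≤ (16 ^ (2 ^ m) * C * (1 + (Real.pi * Q) ^ 2) ^ 2) * ∫ x : ℝ, ((1 + x ^ 2)⁻¹) ^ 2 *
      (∑ j ∈ t, ‖rp N (c j) (fun n => l n / (Q * M : ℝ)) x‖ ^ 2) ^ (2 ^ m) := by
  have hpi := Real.pi_pos
  have hM' : (0:ℝ) < M := by exact_mod_cast hM
  have hM1 : (1:ℝ) ≤ M := by exact_mod_cast hM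
  have hQ' : (0:ℝ) < Q := by exact_mod_cast hQ
  have hQ1 : (1:ℝ) ≤ Q := by exact_mod_cast hQ
  set D : ℝ := Q * M with hD
  have hD0 : 0 < D := by positivity
  have hD1 : 1 ≤ D := by rw [hD]; nlinarith
  set q : ℕ := 2 ^ m with hq
  have hq1 : 1 ≤ q := Nat.one_le_two_pow
  choose a ha using fun j => exists_cut N M l hl (U j) (hU j)
  have hrp : ∀ (d : ℕ → ℂ) (x : ℝ), rp N d (fun n => l n / D) x
      = ∑ n ∈ Finset.range N, d n * ec (l n) (x / D) := by
    intro d x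
    unfold rp er ec
    refine Finset.sum_congr rfl fun n _ => ?_
    congr 2; push_cast; ring
  set s : Finset (ℕ × ℕ × ℕ) := Finset.range N ×ˢ Finset.range M ×ˢ Finset.range M with hs
  have h1 := hcot κ (ℕ × ℕ × ℕ) t s (fun j i => c j i.1 * ((M : ℂ)⁻¹ * (M : ℂ)⁻¹))
    (fun j i => l i.1 + i.2.1 + i.2.2 - a j)
  have e1 : ∀ j y, ‖tp s (fun i => (sg (l i.1 + i.2.1 + i.2.2 - a j) : ℂ) *
      (c j i.1 * ((M : ℂ)⁻¹ * (M : ℂ)⁻¹))) (fun i => l i.1 + i.2.1 + i.2.2 - a j) y‖ ^ 2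
      = ‖rp N (fun n => (σ j n : ℂ) * c j n) (fun n => l n / D) (D * y)‖ ^ 2 * ‖Wk M y‖ ^ 4 := by
    intro j y
    have : tp s (fun i => (sg (l i.1 + i.2.1 + i.2.2 - a j) : ℂ) *
      (c j i.1 * ((M : ℂ)⁻¹ * (M : ℂ)⁻¹))) (fun i => l i.1 + i.2.1 + i.2.2 - a j) y
      = tp s (fun i => ((σ j i.1 : ℂ) * c j i.1) * ((M : ℂ)⁻¹ * (M : ℂ)⁻¹))
        (fun i => l i.1 + i.2.1 + i.2.2 - a j) y := by
      unfold tp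
      refine Finset.sum_congr rfl fun i hi => ?_
      rw [hs, Finset.mem_product, Finset.mem_product, Finset.mem_range, Finset.mem_range,
        Finset.mem_range] at hi
      obtain ⟨hn, hm, hm'⟩ := hi
      have : sg (l i.1 + i.2.1 + i.2.2 - a j) = σ j i.1 := by
        unfold sg
        by_cases hu : U j i.1
        · have := (ha j i.1 hn).1 hu
          rw [if_pos (by omega), hσ1 _ _ hu]
        · have := (ha j i.1 hn).2 hu
          rw [if_neg (by omega), hσ2 _ _ hu]
      beta_reduce
      rw [this]; ring
    rw [this, hs, tp_prod N M (fun n => (σ j n : ℂ) * c j n) l (a j) y, norm_mul, norm_mul, norm_ec,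
      hrp, mul_div_cancel_left₀ _ hD0.ne', norm_pow]
    ring
  have e2 : ∀ j y, ‖tp s (fun i => 
      (c j i.1 * ((M : ℂ)⁻¹ * (M : ℂ)⁻¹))) (fun i => l i.1 + i.2.1 + i.2.2 - a j) y‖ ^ 2
      = ‖rp N (c j) (fun n => l n / D) (D * y)‖ ^ 2 * ‖Wk M y‖ ^ 4 := by
    intro j y
    rw [hs, tp_prod N M (c j) l (a j) y, norm_mul, norm_mul, norm_ec,
      hrp, mul_div_cancel_left₀ _ hD0.ne', norm_pow]
    ring
  simp only [e1, e2, ← Finset.sum_mul, mul_pow] at h1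
  set G1 : ℝ → ℝ := fun x => ∑ j ∈ t, ‖rp N (fun n => (σ j n : ℂ) * c j n)
        (fun n => l n / D) x‖ ^ 2 with hG1
  set G2 : ℝ → ℝ := fun x => ∑ j ∈ t, ‖rp N (c j) (fun n => l n / D) x‖ ^ 2 with hG2
  have hG1c : Continuous G1 := continuous_finsetSum _ fun j _ => (continuous_rp _ _ _).norm.pow 2
  have hG2c : Continuous G2 := continuous_finsetSum _ fun j _ => (continuous_rp _ _ _).norm.pow 2
  have hG10 : ∀ x, 0 ≤ G1 x := fun x => Finset.sum_nonneg fun j _ => by positivity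
  have hG20 : ∀ x, 0 ≤ G2 x := fun x => Finset.sum_nonneg fun j _ => by positivity
  obtain ⟨B, hB⟩ : ∃ B, ∀ x, G2 x ≤ B :=
    ⟨∑ j ∈ t, (∑ n ∈ Finset.range N, ‖c j n‖) ^ 2, fun x => Finset.sum_le_sum fun j _ =>
      pow_le_pow_left₀ (norm_nonneg _) (norm_rp_le _ _ _ _) 2⟩
  have hWc : Continuous (Wk M) := continuous_Wk M
  have hscale : ∀ F : ℝ → ℝ, ∫ x in (-(Real.pi * D))..(Real.pi * D), F (x / D) =
      D * ∫ y in (-Real.pi)..Real.pi, F y := by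
    intro F
    rw [intervalIntegral.integral_comp_div _ hD0.ne', smul_eq_mul]
    congr 2
    · rw [neg_div, mul_div_cancel_right₀ _ hD0.ne']
    · rw [mul_div_cancel_right₀ _ hD0.ne']
  have h2 := mul_le_mul_of_nonneg_left h1 hD0.le
  rw [← hscale, mul_left_comm D C, ← hscale] at h2
  have hx : ∀ x, D * (x / D) = x := fun x => by field_simp
  simp only [hx] at h2
  change (∫ x in (-(Real.pi * D))..(Real.pi * D), G1 x ^ q * (‖Wk M (x / D)‖ ^ 4) ^ q) ≤
    C * ∫ x in (-(Real.pi * D))..(Real.pi * D), G2 x ^ q * (‖Wk M (x / D)‖ ^ 4) ^ q at h2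
  have hpD : -(Real.pi * D) ≤ Real.pi * D := by nlinarith
  have hpD1 : 1 ≤ Real.pi * D := by nlinarith [Real.two_le_pi]
  have i1 : (1 / 16) ^ q * ∫ x in (0:ℝ)..1, G1 x ^ q ≤
      ∫ x in (-(Real.pi * D))..(Real.pi * D), G1 x ^ q * (‖Wk M (x / D)‖ ^ 4) ^ q := by
    calc (1 / 16) ^ q * ∫ x in (0:ℝ)..1, G1 x ^ q
        = ∫ x in (0:ℝ)..1, (1 / 16) ^ q * G1 x ^ q := by
          rw [intervalIntegral.integral_const_mul]
      _ ≤ ∫ x in (0:ℝ)..1, G1 x ^ q * (‖Wk M (x / D)‖ ^ 4) ^ q := by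
          refine intervalIntegral.integral_mono_on zero_le_one
            (Continuous.intervalIntegrable (by fun_prop) _ _)
            (Continuous.intervalIntegrable (by fun_prop) _ _) (fun x hx => ?_)
          rw [mul_comm]
          have := hG10 x
          gcongr
          have hw := Wk_lower M hM (x / D) (by have := hx.1; positivity) (by
            rw [hD, mul_div_assoc', div_le_one (by positivity)]
            nlinarith [hx.1, hx.2])
          calc (1 / 16 : ℝ) = (1 / 2) ^ 4 := by norm_num
            _ ≤ _ := by gcongr
      _ ≤ _ := by
          refine intervalIntegral.integral_mono_interval (by linarith) zero_le_one hpD1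
            (Filter.Eventually.of_forall fun x => ?_)
            (Continuous.intervalIntegrable (by fun_prop) _ _)
          have := hG10 x
          simp only [Pi.zero_apply]; positivity
  set CQ : ℝ := 1 + (Real.pi * Q) ^ 2 with hCQ
  have hint : Integrable fun x : ℝ => ((1 + x ^ 2)⁻¹) ^ 2 * G2 x ^ q := by
    have hi : Integrable fun x : ℝ => (1 + x ^ 2)⁻¹ * B ^ q := integrable_inv_one_add_sq.mul_const _
    refine hi.mono' (Continuous.aestronglyMeasurable ?_) (Filter.Eventually.of_forall fun x => ?_)
    · refine Continuous.mul (Continuous.pow (Continuous.inv₀ (by fun_prop) ?_) 2) (by fun_prop)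
      intro x; positivity
    · have := hG20 x
      rw [Real.norm_of_nonneg (by positivity)]
      have h1 : (1 + x ^ 2)⁻¹ ≤ 1 := inv_le_one_of_one_le₀ (by nlinarith)
      have h0 : 0 ≤ (1 + x ^ 2)⁻¹ := by positivity
      gcongr
      · nlinarith
      · exact hB x
  have i2 : ∫ x in (-(Real.pi * D))..(Real.pi * D), G2 x ^ q * (‖Wk M (x / D)‖ ^ 4) ^ q ≤
      CQ ^ 2 * ∫ x : ℝ, ((1 + x ^ 2)⁻¹) ^ 2 * G2 x ^ q := by
    rw [← integral_const_mul]
    rw [intervalIntegral.integral_of_le hpD]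
    calc _ ≤ ∫ x in Set.Ioc (-(Real.pi * D)) (Real.pi * D),
            CQ ^ 2 * (((1 + x ^ 2)⁻¹) ^ 2 * G2 x ^ q) := by
          refine setIntegral_mono_on ?_ (hint.const_mul _).integrableOn measurableSet_Ioc ?_
          · rw [← intervalIntegrable_iff_integrableOn_Ioc_of_le hpD]
            exact Continuous.intervalIntegrable (by fun_prop) _ _
          · intro x hx
            have hG := hG20 x
            have hw1 := norm_Wk_le_one M hM (x / D)
            have hw0 := norm_nonneg (Wk M (x / D))
            have hxa : |x / D| ≤ Real.pi := by
              rw [abs_div, abs_of_pos hD0, div_le_iff₀ hD0, abs_le]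
              exact ⟨hx.1.le, hx.2⟩
            have hw2 := Wk_decay M hM (x / D) hxa
            have hw3 : ‖Wk M (x / D)‖ * |x| ≤ Real.pi * Q := by
              rw [abs_div, abs_of_pos hD0, hD] at hw2
              rw [hD]
              calc _ = ‖Wk M (x / (Q * M))‖ * (M * (|x| / (Q * M))) * Q := by field_simp
                _ ≤ _ := by gcongr
            have hw4 : ‖Wk M (x / D)‖ ^ 2 * (1 + x ^ 2) ≤ CQ := by
              have : (‖Wk M (x / D)‖ * |x|) ^ 2 ≤ (Real.pi * Q) ^ 2 := by gcongr
              rw [mul_pow, sq_abs] at this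
              rw [hCQ]; nlinarith
            have hw5 : ‖Wk M (x / D)‖ ^ 2 ≤ CQ * (1 + x ^ 2)⁻¹ := by
              rw [← div_eq_mul_inv, le_div_iff₀ (by positivity)]; exact hw4
            have hw6 : (‖Wk M (x / D)‖ ^ 4) ^ q ≤ CQ ^ 2 * ((1 + x ^ 2)⁻¹) ^ 2 := by
              calc (‖Wk M (x / D)‖ ^ 4) ^ q ≤ (‖Wk M (x / D)‖ ^ 4) ^ 1 :=
                    pow_le_pow_of_le_one (by positivity) (pow_le_one₀ hw0 hw1) hq1
                _ = (‖Wk M (x / D)‖ ^ 2) ^ 2 := by ring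
                _ ≤ (CQ * (1 + x ^ 2)⁻¹) ^ 2 := by gcongr
                _ = _ := by ring
            calc _ ≤ G2 x ^ q * (CQ ^ 2 * ((1 + x ^ 2)⁻¹) ^ 2) := by gcongr
              _ = _ := by ring
      _ ≤ _ := by
          refine setIntegral_le_integral (hint.const_mul _) (Filter.Eventually.of_forall fun x => ?_)
          have := hG20 x
          simp only [Pi.zero_apply]; positivity
  have h16 : (16:ℝ) ^ q * (1 / 16) ^ q = 1 := by rw [← mul_pow]; norm_num
  have hJ : ∫ x in (0:ℝ)..1, G1 x ^ q = 16 ^ q * ((1 / 16) ^ q * ∫ x in (0:ℝ)..1, G1 x ^ q) := by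
    rw [← mul_assoc, h16, one_mul]
  change ∫ x in (0:ℝ)..1, G1 x ^ q ≤ _ * ∫ x : ℝ, ((1 + x ^ 2)⁻¹) ^ 2 * G2 x ^ q
  rw [hJ]
  calc _ ≤ 16 ^ q * (C * (CQ ^ 2 * ∫ x : ℝ, ((1 + x ^ 2)⁻¹) ^ 2 * G2 x ^ q)) := by
        refine mul_le_mul_of_nonneg_left ?_ (by positivity)
        exact i1.trans (h2.trans (mul_le_mul_of_nonneg_left i2 hC.le))
    _ = _ := by ring
end

section
lemma continuous_rp_freq (N : ℕ) (c : ℕ → ℂ) (x : ℝ) : Continuous (fun Λ : ℕ → ℝ => rp N c Λ x) := by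
  unfold rp er
  fun_prop

lemma transfer_limit (m Q : ℕ) (hQ : 1 ≤ Q) : ∃ C > 0, ∀ (J N : ℕ) (Λ : ℕ → ℝ)
    (hl : ∀ n, n + 1 < N → 2 / (Q : ℝ) ≤ Λ (n + 1) - Λ n)
    (c : ℕ → ℕ → ℂ) (U : ℕ → ℕ → Prop) (hU : ∀ j n n', n ≤ n' → U j n → U j n')
    (σ : ℕ → ℕ → ℝ) (hσ1 : ∀ j n, U j n → σ j n = 1) (hσ2 : ∀ j n, ¬ U j n → σ j n = -1),
    ∫ x in (0:ℝ)..1, (∑ j ∈ Finset.range J, ‖rp N (fun n => (σ j n : ℂ) * c j n) Λ x‖ ^ 2) ^ (2 ^ m)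
    ≤ C * ∫ x : ℝ, ((1 + x ^ 2)⁻¹) ^ 2 *
      (∑ j ∈ Finset.range J, ‖rp N (c j) Λ x‖ ^ 2) ^ (2 ^ m) := by
  obtain ⟨C0, hC0, hcot⟩ := circle_cotlar m
  refine ⟨16 ^ (2 ^ m) * C0 * (1 + (Real.pi * Q) ^ 2) ^ 2, by positivity, ?_⟩
  intro J N Λ hl c U hU σ hσ1 hσ2
  have hQ' : (0:ℝ) < Q := by exact_mod_cast hQ
  set q : ℕ := 2 ^ m with hq
  set l : ℕ → ℕ → ℤ := fun i n => ⌊Λ n * (Q * ((i + 1 : ℕ) : ℝ))⌋ with hl_def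
  have hstep : ∀ i : ℕ, _ := fun i : ℕ => transfer_step m Q hQ C0 hC0 hcot ℕ (Finset.range J) N (l i) (i + 1)
    (by omega) (by
      intro n hn
      have h1 := hl n hn
      have hi : (0:ℝ) < ((i + 1 : ℕ) : ℝ) := by positivity
      have h2 : Λ n * (Q * ((i + 1 : ℕ) : ℝ)) + ((2 * (i + 1 : ℕ) : ℤ) : ℝ)
          ≤ Λ (n + 1) * (Q * ((i + 1 : ℕ) : ℝ)) := by
        rw [div_le_iff₀ hQ'] at h1
        have := mul_le_mul_of_nonneg_right h1 hi.le
        push_cast at this ⊢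
        linarith
      have h3 := Int.floor_mono h2
      rw [Int.floor_add_intCast] at h3
      exact h3) c U hU σ hσ1 hσ2
  set Λi : ℕ → ℕ → ℝ := fun i n => (l i n : ℝ) / (Q * ((i + 1 : ℕ) : ℝ)) with hΛi
  have hlim : Filter.Tendsto Λi Filter.atTop (nhds Λ) := by
    rw [tendsto_pi_nhds]
    intro n
    have hz : Filter.Tendsto (fun i : ℕ => (1:ℝ) / ((i : ℝ) + 1)) Filter.atTop (nhds 0) :=
      tendsto_one_div_add_atTop_nhds_zero_nat
    refine tendsto_iff_dist_tendsto_zero.mpr (squeeze_zero (fun _ => dist_nonneg) (fun i => ?_) hz)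
    have hi : (0:ℝ) < ((i + 1 : ℕ) : ℝ) := by positivity
    have hD : 0 < (Q * ((i + 1 : ℕ) : ℝ)) := by positivity
    have hf1 := Int.floor_le (Λ n * (Q * ((i + 1 : ℕ) : ℝ)))
    have hf2 := Int.lt_floor_add_one (Λ n * (Q * ((i + 1 : ℕ) : ℝ)))
    rw [Real.dist_eq]
    have : Λi i n - Λ n = ((l i n : ℝ) - Λ n * (Q * ((i + 1 : ℕ) : ℝ))) / (Q * ((i + 1 : ℕ) : ℝ)) := by
      simp only [hΛi]; field_simp
    rw [this, abs_div, abs_of_pos hD]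
    have hnum : |(l i n : ℝ) - Λ n * (Q * ((i + 1 : ℕ) : ℝ))| ≤ 1 := by
      rw [abs_le]; simp only [hl_def]; constructor <;> linarith
    have hQ1 : (1:ℝ) ≤ Q := by exact_mod_cast hQ
    push_cast at *
    gcongr
    nlinarith
  have hb : ∀ (d : ℕ → ℕ → ℂ) (L : ℕ → ℝ) (x : ℝ), (∑ j ∈ Finset.range J, ‖rp N (d j) L x‖ ^ 2) ^ q
      ≤ (∑ j ∈ Finset.range J, (∑ n ∈ Finset.range N, ‖d j n‖) ^ 2) ^ q := by
    intro d L x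
    refine pow_le_pow_left₀ (Finset.sum_nonneg fun _ _ => by positivity)
      (Finset.sum_le_sum fun j _ => pow_le_pow_left₀ (norm_nonneg _) (norm_rp_le _ _ _ _) 2) q
  have hc : ∀ (d : ℕ → ℕ → ℂ) (L : ℕ → ℝ),
      Continuous fun x => (∑ j ∈ Finset.range J, ‖rp N (d j) L x‖ ^ 2) ^ q := fun d L =>
    (continuous_finsetSum _ fun j _ => (continuous_rp _ _ _).norm.pow 2).pow q
  have hl2 : ∀ (d : ℕ → ℕ → ℂ) (x : ℝ), Filter.Tendsto
      (fun i => (∑ j ∈ Finset.range J, ‖rp N (d j) (Λi i) x‖ ^ 2) ^ q) Filter.atTop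
      (nhds ((∑ j ∈ Finset.range J, ‖rp N (d j) Λ x‖ ^ 2) ^ q)) := by
    intro d x
    have : Continuous fun L : ℕ → ℝ => (∑ j ∈ Finset.range J, ‖rp N (d j) L x‖ ^ 2) ^ q :=
      (continuous_finsetSum _ fun j _ => (continuous_rp_freq _ _ _).norm.pow 2).pow q
    exact (this.tendsto Λ).comp hlim
  have hn : ∀ (d : ℕ → ℕ → ℂ) (L : ℕ → ℝ) (x : ℝ),
    0 ≤ (∑ j ∈ Finset.range J, ‖rp N (d j) L x‖ ^ 2) ^ q := fun d L x =>
    pow_nonneg (Finset.sum_nonneg fun _ _ => by positivity) _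
  have hw : Continuous fun x : ℝ => ((1 + x ^ 2)⁻¹) ^ 2 :=
    (Continuous.inv₀ (by fun_prop) (fun x => by positivity)).pow 2
  refine le_of_tendsto_of_tendsto' (b := Filter.atTop) (f := fun i : ℕ => ∫ x in (0:ℝ)..1, (∑ j ∈ Finset.range J,
      ‖rp N (fun n => (σ j n : ℂ) * c j n) (Λi i) x‖ ^ 2) ^ q)
    (g := fun i => (16 ^ q * C0 * (1 + (Real.pi * Q) ^ 2) ^ 2) * ∫ x : ℝ, ((1 + x ^ 2)⁻¹) ^ 2 *
      (∑ j ∈ Finset.range J, ‖rp N (c j) (Λi i) x‖ ^ 2) ^ q) ?_ ?_ hstep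
  · refine intervalIntegral.tendsto_integral_filter_of_dominated_convergence
      (fun _ => (∑ j ∈ Finset.range J, (∑ n ∈ Finset.range N, ‖(σ j n : ℂ) * c j n‖) ^ 2) ^ q)
      (Filter.Eventually.of_forall fun i => (hc (fun j n => (σ j n : ℂ) * c j n) _).aestronglyMeasurable)
      (Filter.Eventually.of_forall fun i => Filter.Eventually.of_forall fun x _ => ?_)
      (by simp) (Filter.Eventually.of_forall fun x _ => hl2 (fun j n => (σ j n : ℂ) * c j n) x)
    rw [Real.norm_of_nonneg (hn (fun j n => (σ j n : ℂ) * c j n) _ _)]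
    exact hb (fun j n => (σ j n : ℂ) * c j n) _ _
  · refine Filter.Tendsto.const_mul _ ?_
    refine tendsto_integral_of_dominated_convergence
      (fun x => (1 + x ^ 2)⁻¹ * (∑ j ∈ Finset.range J, (∑ n ∈ Finset.range N, ‖c j n‖) ^ 2) ^ q)
      (fun i => (hw.mul (hc c _)).aestronglyMeasurable)
      (integrable_inv_one_add_sq.mul_const _) (fun i => Filter.Eventually.of_forall fun x => ?_)
      (Filter.Eventually.of_forall fun x => (hl2 c x).const_mul _)
    have h1 : (1 + x ^ 2)⁻¹ ≤ 1 := inv_le_one_of_one_le₀ (by nlinarith)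
    have h0 : 0 ≤ (1 + x ^ 2)⁻¹ := by positivity
    have := hn c (Λi i) x
    rw [Real.norm_of_nonneg (by positivity)]
    refine mul_le_mul ?_ (hb c _ _) this h0
    nlinarith

lemma rp_shift (N : ℕ) (c : ℕ → ℂ) (Λ : ℕ → ℝ) (x0 x : ℝ) :
    rp N (fun n => c n * er (Λ n) x0) Λ x = rp N c Λ (x + x0) := by
  unfold rp
  refine Finset.sum_congr rfl fun n _ => ?_
  rw [er_add]; ring

lemma transfer_shift (m Q : ℕ) (hQ : 1 ≤ Q) : ∃ C > 0, ∀ (J N : ℕ) (Λ : ℕ → ℝ)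
    (hl : ∀ n, n + 1 < N → 2 / (Q : ℝ) ≤ Λ (n + 1) - Λ n)
    (c : ℕ → ℕ → ℂ) (U : ℕ → ℕ → Prop) (hU : ∀ j n n', n ≤ n' → U j n → U j n')
    (σ : ℕ → ℕ → ℝ) (hσ1 : ∀ j n, U j n → σ j n = 1) (hσ2 : ∀ j n, ¬ U j n → σ j n = -1) (x0 : ℝ),
    ∫ x in x0..(x0+1), (∑ j ∈ Finset.range J, ‖rp N (fun n => (σ j n : ℂ) * c j n) Λ x‖ ^ 2) ^ (2 ^ m)
    ≤ C * ∫ x : ℝ, ((1 + (x - x0) ^ 2)⁻¹) ^ 2 *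
      (∑ j ∈ Finset.range J, ‖rp N (c j) Λ x‖ ^ 2) ^ (2 ^ m) := by
  obtain ⟨C, hC, h⟩ := transfer_limit m Q hQ
  refine ⟨C, hC, ?_⟩
  intro J N Λ hl c U hU σ hσ1 hσ2 x0
  have h1 := h J N Λ hl (fun j n => c j n * er (Λ n) x0) U hU σ hσ1 hσ2
  simp only [← mul_assoc, rp_shift] at h1
  rw [intervalIntegral.integral_comp_add_right (fun x => (∑ j ∈ Finset.range J,
    ‖rp N (fun n => (σ j n : ℂ) * c j n) Λ x‖ ^ 2) ^ (2 ^ m))] at h1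
  rw [zero_add, add_comm 1 x0] at h1
  refine h1.trans (le_of_eq ?_)
  congr 1
  rw [← integral_add_right_eq_self (fun x : ℝ => ((1 + (x - x0) ^ 2)⁻¹) ^ 2 *
      (∑ j ∈ Finset.range J, ‖rp N (c j) Λ x‖ ^ 2) ^ (2 ^ m)) x0]
  simp

lemma sharp_bound (m Q : ℕ) (hQ : 1 ≤ Q) : ∃ C > 0, ∀ (J N : ℕ) (Λ : ℕ → ℝ)
    (hl : ∀ n, n + 1 < N → 2 / (Q : ℝ) ≤ Λ (n + 1) - Λ n)
    (c : ℕ → ℕ → ℂ) (R : ℕ → ℝ) (hR : ∀ j, 0 ≤ R j) (x0 : ℝ),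
    ∫ x in x0..(x0+1), (∑ j ∈ Finset.range J,
      ‖rp N (fun n => if |Λ n| ≤ R j then c j n else 0) Λ x‖ ^ 2) ^ (2 ^ m)
    ≤ C * ∫ x : ℝ, ((1 + (x - x0) ^ 2)⁻¹) ^ 2 *
      (∑ j ∈ Finset.range J, ‖rp N (c j) Λ x‖ ^ 2) ^ (2 ^ m) := by
  classical
  obtain ⟨C, hC, h⟩ := transfer_shift m Q hQ
  refine ⟨2 * C, by positivity, ?_⟩
  intro J N Λ hl c R hR x0
  have hQ' : (0:ℝ) < Q := by exact_mod_cast hQ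
  have hmono : ∀ n k, n + k < N → Λ n ≤ Λ (n + k) := by
    intro n k
    induction k with
    | zero => simp
    | succ k ih =>
      intro hk
      have h1 := ih (by omega)
      have h2 := hl (n + k) (by omega)
      have : 0 < 2 / (Q:ℝ) := by positivity
      rw [← add_assoc]; linarith
  have hmono' : ∀ n n', n ≤ n' → n' < N → Λ n ≤ Λ n' := by
    intro n n' h1 h2
    have := hmono n (n' - n) (by omega)
    rwa [Nat.add_sub_cancel' h1] at this
  set U1 : ℕ → ℕ → Prop := fun j n => N ≤ n ∨ -R j ≤ Λ n with hU1
  set U2 : ℕ → ℕ → Prop := fun j n => N ≤ n ∨ R j < Λ n with hU2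
  have hU1m : ∀ j n n', n ≤ n' → U1 j n → U1 j n' := by
    intro j n n' hn hu
    simp only [hU1] at *
    by_cases hN : N ≤ n'
    · exact Or.inl hN
    · right; rcases hu with hu | hu
      · omega
      · exact hu.trans (hmono' _ _ hn (by omega))
  have hU2m : ∀ j n n', n ≤ n' → U2 j n → U2 j n' := by
    intro j n n' hn hu
    simp only [hU2] at *
    by_cases hN : N ≤ n'
    · exact Or.inl hN
    · right; rcases hu with hu | hu
      · omega
      · exact hu.trans_le (hmono' _ _ hn (by omega))
  have H1 := h J N Λ hl c U1 hU1m (fun j n => if U1 j n then 1 else -1)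
    (fun j n hu => if_pos hu) (fun j n hu => if_neg hu) x0
  have H2 := h J N Λ hl c U2 hU2m (fun j n => if U2 j n then 1 else -1)
    (fun j n hu => if_pos hu) (fun j n hu => if_neg hu) x0
  set s1 : ℕ → ℕ → ℂ := fun j n => (((if U1 j n then 1 else -1 : ℝ)) : ℂ) * c j n with hs1
  set s2 : ℕ → ℕ → ℂ := fun j n => (((if U2 j n then 1 else -1 : ℝ)) : ℂ) * c j n with hs2
  have key : ∀ j x, ‖rp N (fun n => if |Λ n| ≤ R j then c j n else 0) Λ x‖ ^ 2 ≤
      (‖rp N (s1 j) Λ x‖ ^ 2 + ‖rp N (s2 j) Λ x‖ ^ 2) / 2 := by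
    intro j x
    have e : rp N (fun n => if |Λ n| ≤ R j then c j n else 0) Λ x =
        (1 / 2 : ℂ) * (rp N (s1 j) Λ x - rp N (s2 j) Λ x) := by
      unfold rp
      rw [← Finset.sum_sub_distrib, Finset.mul_sum]
      refine Finset.sum_congr rfl fun n hn => ?_
      have hn' : ¬ N ≤ n := by simpa using hn
      have e1 : U1 j n ↔ -R j ≤ Λ n := by simp [hU1, hn']
      have e2 : U2 j n ↔ R j < Λ n := by simp [hU2, hn']
      simp only [hs1, hs2, e1, e2, abs_le]
      by_cases a1 : -R j ≤ Λ n
      · by_cases a2 : R j < Λ n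
        · rw [if_neg (by intro hh; linarith [hh.2]), if_pos a1, if_pos a2]; ring
        · rw [if_pos ⟨a1, not_lt.mp a2⟩, if_pos a1, if_neg a2]; push_cast; ring
      · have a2 : ¬ R j < Λ n := by
          intro hh; exact a1 (by linarith [hR j])
        rw [if_neg (by intro hh; exact a1 hh.1), if_neg a1, if_neg a2]; ring
    rw [e, norm_mul]
    have h2 := norm_sub_le (rp N (s1 j) Λ x) (rp N (s2 j) Λ x)
    have h3 := norm_nonneg (rp N (s1 j) Λ x - rp N (s2 j) Λ x)
    norm_num
    nlinarith [sq_nonneg (‖rp N (s1 j) Λ x‖ - ‖rp N (s2 j) Λ x‖)]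
  have hc : ∀ (d : ℕ → ℕ → ℂ),
      Continuous fun x => (∑ j ∈ Finset.range J, ‖rp N (d j) Λ x‖ ^ 2) ^ (2 ^ m) := fun d =>
    (continuous_finsetSum _ fun j _ => (continuous_rp _ _ _).norm.pow 2).pow _
  have hn : ∀ (d : ℕ → ℕ → ℂ) (x : ℝ),
    0 ≤ (∑ j ∈ Finset.range J, ‖rp N (d j) Λ x‖ ^ 2) := fun d x =>
    (Finset.sum_nonneg fun _ _ => by positivity)
  calc _ ≤ ∫ x in x0..(x0+1), ((∑ j ∈ Finset.range J, ‖rp N (s1 j) Λ x‖ ^ 2) ^ (2 ^ m)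
        + (∑ j ∈ Finset.range J, ‖rp N (s2 j) Λ x‖ ^ 2) ^ (2 ^ m)) := by
        refine intervalIntegral.integral_mono_on (by linarith)
          ((hc (fun j n => if |Λ n| ≤ R j then c j n else 0)).intervalIntegrable _ _)
          (((hc s1).add (hc s2)).intervalIntegrable _ _) (fun x _ => ?_)
        have a1 := hn s1 x
        have a2 := hn s2 x
        have a3 := hn (fun j n => if |Λ n| ≤ R j then c j n else 0) x
        have a4 : (∑ j ∈ Finset.range J, ‖rp N (fun n => if |Λ n| ≤ R j then c j n else 0) Λ x‖ ^ 2)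
          ≤ ((∑ j ∈ Finset.range J, ‖rp N (s1 j) Λ x‖ ^ 2)
            + (∑ j ∈ Finset.range J, ‖rp N (s2 j) Λ x‖ ^ 2)) / 2 := by
          rw [← Finset.sum_add_distrib, Finset.sum_div]
          exact Finset.sum_le_sum fun j _ => key j x
        refine (pow_le_pow_left₀ a3 a4 _).trans ?_
        generalize (∑ j ∈ Finset.range J, ‖rp N (s1 j) Λ x‖ ^ 2) = A at *
        generalize (∑ j ∈ Finset.range J, ‖rp N (s2 j) Λ x‖ ^ 2) = B at *
        have : (A + B) / 2 ≤ max A B := by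
          have := le_max_left A B; have := le_max_right A B; linarith
        refine (pow_le_pow_left₀ (by positivity) this _).trans ?_
        rcases max_choice A B with hm | hm <;> rw [hm] <;> 
          nlinarith [pow_nonneg a1 (2 ^ m), pow_nonneg a2 (2 ^ m)]
    _ = _ := intervalIntegral.integral_add ((hc s1).intervalIntegrable _ _) ((hc s2).intervalIntegrable _ _)
    _ ≤ _ := add_le_add H1 H2
    _ = _ := by ring
end

section
open scoped ENNReal NNReal

noncomputable def kk (n : ℕ) (t : ℝ) : ℝ := (1 + (2 ^ n * t) ^ 2)⁻¹

lemma kk_pos (n : ℕ) (t : ℝ) : 0 < kk n t := by unfold kk; positivity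
lemma kk_le_one (n : ℕ) (t : ℝ) : kk n t ≤ 1 := by
  unfold kk; exact inv_le_one_of_one_le₀ (by nlinarith [sq_nonneg (2 ^ n * t)])
lemma kk_neg (n : ℕ) (t : ℝ) : kk n (-t) = kk n t := by unfold kk; ring_nf
lemma kk_sub_comm (n : ℕ) (x y : ℝ) : kk n (x - y) = kk n (y - x) := by rw [← kk_neg, neg_sub]
lemma continuous_kk (n : ℕ) : Continuous (kk n) := by
  unfold kk; exact Continuous.inv₀ (by fun_prop) (fun x => by positivity)
lemma kk_anti {l n : ℕ} (h : l ≤ n) (t : ℝ) : kk n t ≤ kk l t := by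
  unfold kk
  have : (2:ℝ) ^ l ≤ 2 ^ n := pow_le_pow_right₀ (by norm_num) h
  have : ((2:ℝ) ^ l) ^ 2 ≤ (2 ^ n) ^ 2 := by gcongr
  rw [mul_pow, mul_pow]
  gcongr

lemma kk_harnack {l n : ℕ} (h : l ≤ n) (u t : ℝ) : kk l u * kk n t ≤ 2 * kk l (u + t) := by
  refine (mul_le_mul_of_nonneg_left (kk_anti h t) (kk_pos _ _).le).trans ?_
  unfold kk
  rw [← mul_inv, ← div_eq_mul_inv, inv_eq_one_div, div_le_div_iff₀ (by positivity) (by positivity)]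
  have : (2 ^ l * (u + t)) ^ 2 ≤ 2 * (2 ^ l * u) ^ 2 + 2 * (2 ^ l * t) ^ 2 := by
    nlinarith [sq_nonneg (2 ^ l * u - 2 ^ l * t)]
  nlinarith [mul_nonneg (sq_nonneg ((2:ℝ) ^ l * u)) (sq_nonneg (2 ^ l * t))]

lemma kk_compare {l : ℕ} {u v : ℝ} (c : ℝ) (hc : 1 ≤ c) (h : |v| ≤ c * |u|) :
    kk l u ≤ c ^ 2 * kk l v := by
  unfold kk
  rw [inv_eq_one_div, ← div_eq_mul_inv, div_le_div_iff₀ (by positivity) (by positivity)]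
  have h2 : v ^ 2 ≤ c ^ 2 * u ^ 2 := by
    rw [← sq_abs v, ← sq_abs u, ← mul_pow]; gcongr
  have h3 : (2 ^ l * v) ^ 2 ≤ c ^ 2 * (2 ^ l * u) ^ 2 := by
    have := mul_le_mul_of_nonneg_left h2 (sq_nonneg ((2:ℝ) ^ l))
    nlinarith
  nlinarith [sq_nonneg (2 ^ l * u)]

lemma kk_scale {l n : ℕ} (h : l ≤ n) (t : ℝ) (ht : 1 ≤ 2 ^ l * |t|) :
    2 ^ n * kk n t ≤ 2 * (2 ^ l * kk l t) := by
  unfold kk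
  have h1 : (2:ℝ) ^ l ≤ 2 ^ n := pow_le_pow_right₀ (by norm_num) h
  have h0 : (0:ℝ) < 2 ^ l := by positivity
  set a : ℝ := 2 ^ l
  set b : ℝ := 2 ^ n
  have ht2 : 1 ≤ a ^ 2 * t ^ 2 := by
    rw [← sq_abs t, ← mul_pow]; nlinarith
  rw [← div_eq_mul_inv, ← div_eq_mul_inv, mul_div_assoc', div_le_div_iff₀ (by positivity) (by positivity)]
  rw [mul_pow, mul_pow]
  have hb : 0 < b := by linarith
  have h3 : b * (1 + a ^ 2 * t ^ 2) ≤ 2 * b * (a ^ 2 * t ^ 2) := by nlinarith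
  have h4 : 2 * b * (a ^ 2 * t ^ 2) ≤ 2 * a * (b ^ 2 * t ^ 2) := by
    have : 0 ≤ a * b * t ^ 2 := by positivity
    nlinarith [mul_le_mul_of_nonneg_left h1 this]
  nlinarith

lemma kk_K3 {l n : ℕ} (h : l ≤ n) (s : ℕ) (hs : 1 ≤ s) (t u : ℝ) :
    2 ^ n * kk n t ^ s * kk l u ^ s ≤
      8 ^ s * kk l (t + u) ^ s * (2 ^ n * kk n t ^ s + 2 ^ l * kk l u ^ s) := by
  have p1 := kk_pos n t
  have p2 := kk_pos l u
  have p3 := kk_pos l (t + u)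
  by_cases h1 : kk l u ≤ 8 * kk l (t + u)
  · have : kk l u ^ s ≤ 8 ^ s * kk l (t + u) ^ s := by rw [← mul_pow]; gcongr
    calc _ = kk l u ^ s * (2 ^ n * kk n t ^ s) := by ring
      _ ≤ (8 ^ s * kk l (t + u) ^ s) * (2 ^ n * kk n t ^ s) := by gcongr
      _ ≤ _ := by
        have : 0 ≤ 8 ^ s * kk l (t + u) ^ s * (2 ^ l * kk l u ^ s) := by positivity
        rw [mul_add]; linarith
  · have h2 : |u| < |t + u| / 2 := by
      by_contra hc
      have := kk_compare (l := l) (u := u) (v := t + u) 2 (by norm_num) (by linarith)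
      apply h1; linarith
    have h3 : |t + u| ≤ 2 * |t| := by
      have := abs_add_le t u; linarith
    have h4 := kk_compare (l := l) (u := t) (v := t + u) 2 (by norm_num) h3
    have h5 : 1 ≤ 2 ^ l * |t| := by
      by_contra hc
      apply h1
      have h6 : 1 / 5 ≤ kk l (t + u) := by
        unfold kk
        rw [one_div]
        apply inv_anti₀ (by positivity)
        have : |2 ^ l * (t + u)| ≤ 2 := by
          rw [abs_mul, abs_of_pos (by positivity : (0:ℝ) < 2 ^ l)]
          have : (2:ℝ) ^ l * |t + u| ≤ 2 ^ l * (2 * |t|) := by gcongr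
          nlinarith
        have : (2 ^ l * (t + u)) ^ 2 ≤ 2 ^ 2 := by rw [← sq_abs]; gcongr
        linarith
      have := kk_le_one l u
      linarith
    obtain ⟨r, rfl⟩ : ∃ r, s = r + 1 := ⟨s - 1, by omega⟩
    have h6 := kk_scale h t h5
    have h7 := kk_anti h t
    have p4 := kk_pos l t
    have h8 : 2 ^ n * kk n t ^ (r + 1) ≤ 8 ^ (r + 1) * kk l (t + u) ^ (r + 1) * 2 ^ l := by
      calc 2 ^ n * kk n t ^ (r + 1) = (2 ^ n * kk n t) * kk n t ^ r := by ring
        _ ≤ (2 * (2 ^ l * kk l t)) * kk l t ^ r := by gcongr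
        _ = 2 * kk l t ^ (r + 1) * 2 ^ l := by ring
        _ ≤ 2 * (2 ^ 2 * kk l (t + u)) ^ (r + 1) * 2 ^ l := by gcongr
        _ = (2 * 4 ^ (r + 1)) * kk l (t + u) ^ (r + 1) * 2 ^ l := by rw [mul_pow]; norm_num; ring
        _ ≤ _ := by
          gcongr
          calc (2:ℝ) * 4 ^ (r + 1) ≤ 2 ^ (r + 1) * 4 ^ (r + 1) := by
                gcongr
                calc (2:ℝ) = 2 ^ 1 := by norm_num
                  _ ≤ 2 ^ (r + 1) := pow_le_pow_right₀ (by norm_num) (by omega)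
            _ = 8 ^ (r + 1) := by rw [← mul_pow]; norm_num
    calc _ ≤ (8 ^ (r + 1) * kk l (t + u) ^ (r + 1) * 2 ^ l) * kk l u ^ (r + 1) := by gcongr
      _ = 8 ^ (r + 1) * kk l (t + u) ^ (r + 1) * (2 ^ l * kk l u ^ (r + 1)) := by ring
      _ ≤ _ := by
        gcongr
        have : 0 ≤ 2 ^ n * kk n t ^ (r + 1) := by positivity
        linarith

noncomputable def kE (s n : ℕ) (t : ℝ) : ℝ≥0∞ := ENNReal.ofReal (2 ^ n * kk n t ^ s)

lemma measurable_kE (s n : ℕ) : Measurable (kE s n) := by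
  unfold kE
  exact (ENNReal.continuous_ofReal.comp (continuous_const.mul ((continuous_kk n).pow s))).measurable

lemma kE_sub_comm (s n : ℕ) (x y : ℝ) : kE s n (x - y) = kE s n (y - x) := by
  unfold kE; rw [kk_sub_comm]

lemma lintegral_kk_one (n : ℕ) : ∫⁻ t, ENNReal.ofReal (2 ^ n * kk n t) = ENNReal.ofReal Real.pi := by
  have hi : Integrable (fun t : ℝ => 2 ^ n * kk n t) := by
    unfold kk
    exact (integrable_inv_one_add_sq.comp_mul_left' (by positivity : (2:ℝ) ^ n ≠ 0)).const_mul _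
  rw [← ofReal_integral_eq_lintegral_ofReal hi (Filter.Eventually.of_forall fun t => by
    have := kk_pos n t; simp only [Pi.zero_apply]; positivity)]
  congr 1
  rw [integral_const_mul]
  unfold kk
  rw [Measure.integral_comp_mul_left (fun t : ℝ => (1 + t ^ 2)⁻¹) (2 ^ n), integral_univ_inv_one_add_sq,
    abs_of_pos (by positivity), smul_eq_mul, ← mul_assoc, mul_inv_cancel₀ (by positivity), one_mul]

lemma lintegral_kE (s n : ℕ) (hs : 1 ≤ s) : ∫⁻ t, kE s n t ≤ ENNReal.ofReal Real.pi := by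
  rw [← lintegral_kk_one n]
  refine lintegral_mono fun t => ENNReal.ofReal_le_ofReal ?_
  have := kk_pos n t
  gcongr
  calc kk n t ^ s ≤ kk n t ^ 1 := pow_le_pow_of_le_one this.le (kk_le_one _ _) hs
    _ = _ := pow_one _

lemma lintegral_kE_sub (s n : ℕ) (hs : 1 ≤ s) (x : ℝ) :
    ∫⁻ y, kE s n (x - y) ≤ ENNReal.ofReal Real.pi := by
  rw [lintegral_sub_left_eq_self (kE s n) x]; exact lintegral_kE s n hs

lemma lintegral_kE_sub' (s n : ℕ) (hs : 1 ≤ s) (x : ℝ) :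
    ∫⁻ y, kE s n (y - x) ≤ ENNReal.ofReal Real.pi := by
  simp_rw [kE_sub_comm s n _ x]; exact lintegral_kE_sub s n hs x

lemma kE_zero_le (s n : ℕ) : ENNReal.ofReal (1 / 2 ^ s) ≤ ∫⁻ t, kE s n t := by
  have h1 : ∫⁻ t in Set.Icc (0:ℝ) (1 / 2 ^ n), ENNReal.ofReal (2 ^ n * (1 / 2 ^ s)) ≤ ∫⁻ t, kE s n t := by
    refine (setLIntegral_mono (measurable_kE s n) fun t ht => ?_).trans (setLIntegral_le_lintegral _ _)
    unfold kE
    apply ENNReal.ofReal_le_ofReal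
    gcongr
    rw [← one_div_pow]
    gcongr
    unfold kk
    rw [one_div]
    apply inv_anti₀ (by positivity)
    have h2 : 2 ^ n * t ≤ 1 := by
      have := ht.2
      rw [le_div_iff₀ (by positivity)] at this; linarith
    have h3 : 0 ≤ 2 ^ n * t := by have := ht.1; positivity
    nlinarith
  refine le_trans ?_ h1
  rw [setLIntegral_const, Real.volume_Icc, ← ENNReal.ofReal_mul (by positivity)]
  apply ENNReal.ofReal_le_ofReal
  rw [sub_zero]
  apply le_of_eq
  field_simp

noncomputable def TT (s n : ℕ) (h : ℝ → ℝ≥0∞) (x : ℝ) : ℝ≥0∞ := ∫⁻ y, kE s n (x - y) * h y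

lemma measurable_TT (s n : ℕ) {h : ℝ → ℝ≥0∞} (hh : Measurable h) : Measurable (TT s n h) := by
  unfold TT
  apply Measurable.lintegral_prod_right' (f := fun p : ℝ × ℝ => kE s n (p.1 - p.2) * h p.2)
  exact ((measurable_kE s n).comp (measurable_fst.sub measurable_snd)).mul (hh.comp measurable_snd)

lemma TT_mono (s n : ℕ) {h g : ℝ → ℝ≥0∞} (hg : ∀ x, h x ≤ g x) (x : ℝ) : TT s n h x ≤ TT s n g x :=
  lintegral_mono fun y => mul_le_mul_right (hg y) _

lemma TT_const_mul (s n : ℕ) {h : ℝ → ℝ≥0∞} (hh : Measurable h) (c : ℝ≥0∞) (x : ℝ) :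
    TT s n (fun y => c * h y) x = c * TT s n h x := by
  unfold TT
  rw [← lintegral_const_mul]
  · congr 1; ext y; ring
  · exact ((measurable_kE s n).comp (measurable_const.sub measurable_id)).mul hh

lemma TT_sum (s n : ℕ) (t : Finset ℕ) {h : ℕ → ℝ → ℝ≥0∞} (hh : ∀ i, Measurable (h i)) (x : ℝ) :
    TT s n (fun y => ∑ i ∈ t, h i y) x = ∑ i ∈ t, TT s n (h i) x := by
  unfold TT
  simp_rw [Finset.mul_sum]
  rw [lintegral_finsetSum]
  intro i _
  exact ((measurable_kE s n).comp (measurable_const.sub measurable_id)).mul (hh i)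

lemma TT_le_const (s n : ℕ) (hs : 1 ≤ s) {h : ℝ → ℝ≥0∞} (D : ℝ≥0∞) (hD : ∀ x, h x ≤ D) (x : ℝ) :
    TT s n h x ≤ ENNReal.ofReal Real.pi * D := by
  unfold TT
  calc _ ≤ ∫⁻ y, kE s n (x - y) * D := lintegral_mono fun y => mul_le_mul_right (hD y) _
    _ = (∫⁻ y, kE s n (x - y)) * D := by
      rw [lintegral_mul_const]
      exact (measurable_kE s n).comp (measurable_const.sub measurable_id)
    _ ≤ _ := mul_le_mul_left (lintegral_kE_sub s n hs x) _

lemma TT_adj (s n : ℕ) {h g : ℝ → ℝ≥0∞} (hh : Measurable h) (hg : Measurable g) :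
    ∫⁻ x, g x * TT s n h x = ∫⁻ x, TT s n g x * h x := by
  unfold TT
  have m1 : Measurable fun p : ℝ × ℝ => kE s n (p.1 - p.2) :=
    (measurable_kE s n).comp (measurable_fst.sub measurable_snd)
  have hk : ∀ x, Measurable fun y => kE s n (x - y) := fun x =>
    (measurable_kE s n).comp (measurable_const.sub measurable_id)
  calc _ = ∫⁻ x, ∫⁻ y, g x * (kE s n (x - y) * h y) := by
        refine lintegral_congr fun x => ?_
        rw [lintegral_const_mul]
        exact (hk x).mul hh
    _ = ∫⁻ y, ∫⁻ x, g x * (kE s n (x - y) * h y) := by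
        apply lintegral_lintegral_swap
        exact ((hg.comp measurable_fst).mul (m1.mul (hh.comp measurable_snd))).aemeasurable
    _ = _ := by
        refine lintegral_congr fun y => ?_
        rw [← lintegral_mul_const]
        · refine lintegral_congr fun x => ?_
          rw [kE_sub_comm]; ring
        · exact (hk y).mul hg

/-- composition -/
lemma kE_comp {l n : ℕ} (h : l ≤ n) (s : ℕ) (hs : 1 ≤ s) (x z : ℝ) :
    ∫⁻ y, kE s n (x - y) * kE s l (y - z) ≤ (ENNReal.ofReal (2 * 8 ^ s * Real.pi)) * kE s l (x - z) := by
  have hk : Measurable fun y => kE s n (x - y) :=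
    (measurable_kE s n).comp (measurable_const.sub measurable_id)
  have hk' : Measurable fun y => kE s l (y - z) :=
    (measurable_kE s l).comp (measurable_id.sub measurable_const)
  have hp : ∀ y, kE s n (x - y) * kE s l (y - z) ≤
      ENNReal.ofReal (8 ^ s) * kE s l (x - z) * (kE s n (x - y) + kE s l (y - z)) := by
    intro y
    unfold kE
    have p1 := kk_pos n (x - y)
    have p2 := kk_pos l (y - z)
    have p3 := kk_pos l (x - z)
    rw [← ENNReal.ofReal_mul (by positivity), ← ENNReal.ofReal_mul (by positivity),
      ← ENNReal.ofReal_add (by positivity) (by positivity), ← ENNReal.ofReal_mul (by positivity)]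
    apply ENNReal.ofReal_le_ofReal
    have := mul_le_mul_of_nonneg_left (kk_K3 h s hs (x - y) (y - z)) (by positivity : (0:ℝ) ≤ 2 ^ l)
    rw [show x - y + (y - z) = x - z by ring] at this
    calc _ = 2 ^ l * (2 ^ n * kk n (x - y) ^ s * kk l (y - z) ^ s) := by ring
      _ ≤ _ := this
      _ = _ := by ring
  calc _ ≤ ∫⁻ y, ENNReal.ofReal (8 ^ s) * kE s l (x - z) * (kE s n (x - y) + kE s l (y - z)) :=
        lintegral_mono hp
    _ = ENNReal.ofReal (8 ^ s) * kE s l (x - z) * ((∫⁻ y, kE s n (x - y)) + ∫⁻ y, kE s l (y - z)) := by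
        rw [lintegral_const_mul, lintegral_add_left hk]
        exact hk.add hk'
    _ ≤ ENNReal.ofReal (8 ^ s) * kE s l (x - z) * (ENNReal.ofReal Real.pi + ENNReal.ofReal Real.pi) := by
        gcongr
        · exact lintegral_kE_sub s n hs x
        · exact lintegral_kE_sub' s l hs z
    _ = _ := by
        rw [← two_mul, ENNReal.ofReal_mul (by positivity), ENNReal.ofReal_mul (by positivity)]
        rw [ENNReal.ofReal_ofNat]
        ring

lemma TT_comp_aux (s n l r : ℕ) (K : ℝ≥0∞)
    (hK : ∀ x z, ∫⁻ y, kE s n (x - y) * kE s l (y - z) ≤ K * kE s r (x - z))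
    {g : ℝ → ℝ≥0∞} (hg : Measurable g) (x : ℝ) :
    TT s n (TT s l g) x ≤ K * TT s r g x := by
  unfold TT
  have hk : ∀ n, ∀ x, Measurable fun y => kE s n (x - y) := fun n x =>
    (measurable_kE s n).comp (measurable_const.sub measurable_id)
  have hk' : ∀ n, ∀ x, Measurable fun y => kE s n (y - x) := fun n x =>
    (measurable_kE s n).comp (measurable_id.sub measurable_const)
  have m1 : Measurable fun p : ℝ × ℝ => kE s l (p.1 - p.2) :=
    (measurable_kE s l).comp (measurable_fst.sub measurable_snd)
  calc _ = ∫⁻ y, ∫⁻ z, kE s n (x - y) * (kE s l (y - z) * g z) := by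
        refine lintegral_congr fun y => ?_
        rw [lintegral_const_mul]
        exact (hk l y).mul hg
    _ = ∫⁻ z, ∫⁻ y, kE s n (x - y) * (kE s l (y - z) * g z) := by
        apply lintegral_lintegral_swap
        exact (((hk n x).comp measurable_fst).mul (m1.mul (hg.comp measurable_snd))).aemeasurable
    _ = ∫⁻ z, (∫⁻ y, kE s n (x - y) * kE s l (y - z)) * g z := by
        refine lintegral_congr fun z => ?_
        rw [← lintegral_mul_const]
        · exact lintegral_congr fun y => by ring
        · exact (hk n x).mul (hk' l z)
    _ ≤ ∫⁻ z, K * (kE s r (x - z) * g z) := by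
        refine lintegral_mono fun z => ?_
        rw [← mul_assoc]
        exact mul_le_mul_left (hK x z) _
    _ = _ := by
        rw [lintegral_const_mul]
        exact (hk r x).mul hg

noncomputable def CK (s : ℕ) : ℝ≥0 := Real.toNNReal (2 * 8 ^ s * Real.pi)

lemma TT_comp1 {l n : ℕ} (h : l ≤ n) (s : ℕ) (hs : 1 ≤ s) {g : ℝ → ℝ≥0∞} (hg : Measurable g) (x : ℝ) :
    TT s n (TT s l g) x ≤ CK s * TT s l g x :=
  TT_comp_aux s n l l _ (fun x z => kE_comp h s hs x z) hg x

lemma TT_comp2 {l n : ℕ} (h : l ≤ n) (s : ℕ) (hs : 1 ≤ s) {g : ℝ → ℝ≥0∞} (hg : Measurable g) (x : ℝ) :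
    TT s l (TT s n g) x ≤ CK s * TT s l g x := by
  refine TT_comp_aux s l n l _ (fun x z => ?_) hg x
  have := kE_comp h s hs z x
  rw [kE_sub_comm s l x z]
  refine le_trans (le_of_eq ?_) this
  refine lintegral_congr fun y => ?_
  rw [kE_sub_comm s l x y, kE_sub_comm s n y z, mul_comm]

lemma TT_sq (s n : ℕ) (hs : 1 ≤ s) {h : ℝ → ℝ≥0∞} (hh : Measurable h) (x : ℝ) :
    TT s n h x ^ 2 ≤ ENNReal.ofReal Real.pi * TT s n (fun y => h y ^ 2) x := by
  have hk : Measurable fun y => kE s n (x - y) :=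
    (measurable_kE s n).comp (measurable_const.sub measurable_id)
  have := ENNReal.lintegral_mul_le_Lp_mul_Lq volume (Real.HolderConjugate.two_two)
    (f := fun y => (kE s n (x - y)) ^ (1 / 2 : ℝ)) (g := fun y => (kE s n (x - y)) ^ (1 / 2 : ℝ) * h y)
    (hk.pow_const _).aemeasurable ((hk.pow_const _).mul hh).aemeasurable
  have e0 : ∀ a : ℝ≥0∞, a ^ (1 / 2 : ℝ) * a ^ (1 / 2 : ℝ) = a := by
    intro a
    rw [← ENNReal.rpow_add_of_nonneg _ _ (by norm_num) (by norm_num)]; norm_num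
  have e1 : ∀ a : ℝ≥0∞, (a ^ (1 / 2 : ℝ)) ^ (2 : ℝ) = a := by
    intro a; rw [← ENNReal.rpow_mul]; norm_num
  have e2 : ∀ a : ℝ≥0∞, (a ^ (1 / 2 : ℝ)) ^ 2 = a := by
    intro a; rw [sq, e0]
  simp only [Pi.mul_apply, ← mul_assoc, e0, e1] at this
  have h2 := pow_le_pow_left' this 2
  rw [mul_pow, e2, e2] at h2
  refine h2.trans ?_
  refine mul_le_mul' (lintegral_kE_sub s n hs x) (le_of_eq ?_)
  unfold TT
  refine lintegral_congr fun y => ?_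
  rw [ENNReal.mul_rpow_of_nonneg _ _ (by norm_num), e1]
  norm_num

lemma TT_pow (s : ℕ) (hs : 1 ≤ s) (m : ℕ) : ∃ C : ℝ≥0, ∀ (n : ℕ) {h : ℝ → ℝ≥0∞}, Measurable h → ∀ x,
    TT s n h x ^ (2 ^ m) ≤ C * TT s n (fun y => h y ^ (2 ^ m)) x := by
  induction m with
  | zero => exact ⟨1, fun n h _ x => by simp⟩
  | succ m ih =>
    obtain ⟨C, hC⟩ := ih
    refine ⟨C ^ 2 * Real.toNNReal Real.pi, fun n h hh x => ?_⟩
    have h1 := hC n hh x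
    have h2 := pow_le_pow_left' h1 2
    rw [← pow_mul, ← pow_succ] at h2
    refine h2.trans ?_
    rw [mul_pow]
    push_cast
    rw [mul_assoc]
    gcongr
    refine (TT_sq s n hs (hh.pow_const _) x).trans (le_of_eq ?_)
    simp only [← pow_mul, ← pow_succ]
    rfl
end

section
open scoped ENNReal NNReal

lemma young_E (K B M : ℝ≥0∞) (r : ℕ) :
    2 * (K * B ^ r * M) ≤ B ^ (r + 1) + (2 * K * M) ^ (r + 1) := by
  have e : 2 * (K * B ^ r * M) = B ^ r * (2 * K * M) := by ring
  rw [e]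
  rcases le_total (2 * K * M) B with h | h
  · calc B ^ r * (2 * K * M) ≤ B ^ r * B := by gcongr
      _ = B ^ (r + 1) := by rw [pow_succ]
      _ ≤ _ := le_self_add
  · calc B ^ r * (2 * K * M) ≤ (2 * K * M) ^ r * (2 * K * M) := by gcongr
      _ = (2 * K * M) ^ (r + 1) := by rw [pow_succ]
      _ ≤ _ := le_add_self

lemma absorb_E {I Y : ℝ≥0∞} (hI : I ≠ ⊤) (h : 2 * I ≤ I + Y) : I ≤ Y := by
  rw [two_mul] at h
  exact (ENNReal.add_le_add_iff_left hI).mp h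

lemma add_sq_E (a b : ℝ≥0∞) : (a + b) ^ 2 ≤ 4 * (a ^ 2 + b ^ 2) := by
  rcases le_total a b with h | h
  · calc (a + b) ^ 2 ≤ (b + b) ^ 2 := by gcongr
      _ = 4 * b ^ 2 := by ring
      _ ≤ _ := by gcongr; exact le_add_self
  · calc (a + b) ^ 2 ≤ (a + a) ^ 2 := by gcongr
      _ = 4 * a ^ 2 := by ring
      _ ≤ _ := by gcongr; exact le_self_add

lemma pow_step_E (B b : ℝ≥0∞) (r : ℕ) : (B + b) ^ (r + 1) ≤ B ^ (r + 1) + (r + 1 : ℕ) * (b * (B + b) ^ r) := by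
  induction r with
  | zero => simp
  | succ r ih =>
    calc (B + b) ^ (r + 1 + 1) = B * (B + b) ^ (r + 1) + b * (B + b) ^ (r + 1) := by ring
      _ ≤ B * (B ^ (r + 1) + (r + 1 : ℕ) * (b * (B + b) ^ r)) + b * (B + b) ^ (r + 1) := by gcongr
      _ = B ^ (r + 1 + 1) + (r + 1 : ℕ) * (b * (B * (B + b) ^ r)) + b * (B + b) ^ (r + 1) := by ring
      _ ≤ B ^ (r + 1 + 1) + (r + 1 : ℕ) * (b * ((B + b) * (B + b) ^ r)) + b * (B + b) ^ (r + 1) := by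
          gcongr; exact le_self_add
      _ = _ := by push_cast; ring

lemma garsia_E (b : ℕ → ℝ≥0∞) (J r : ℕ) : (∑ j ∈ Finset.range J, b j) ^ (r + 1) ≤
    (r + 1 : ℕ) * ∑ n ∈ Finset.range J, b n * (∑ j ∈ Finset.range (n + 1), b j) ^ r := by
  induction J with
  | zero => simp
  | succ J ih =>
    rw [Finset.sum_range_succ (fun n => b n * (∑ j ∈ Finset.range (n + 1), b j) ^ r)]
    rw [Finset.sum_range_succ b J]
    refine (pow_step_E _ _ _).trans ?_
    rw [mul_add]
    gcongr

lemma TT_L2 (s n : ℕ) (hs : 1 ≤ s) {h : ℝ → ℝ≥0∞} (hh : Measurable h) :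
    ∫⁻ x, TT s n h x ^ 2 ≤ ENNReal.ofReal Real.pi * ENNReal.ofReal Real.pi * ∫⁻ x, h x ^ 2 := by
  calc _ ≤ ∫⁻ x, ENNReal.ofReal Real.pi * TT s n (fun y => h y ^ 2) x :=
        lintegral_mono fun x => TT_sq s n hs hh x
    _ = ENNReal.ofReal Real.pi * ∫⁻ x, 1 * TT s n (fun y => h y ^ 2) x := by
        rw [lintegral_const_mul _ (measurable_TT s n (hh.pow_const 2))]; simp
    _ = ENNReal.ofReal Real.pi * ∫⁻ x, TT s n (fun _ => 1) x * h x ^ 2 := by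
        rw [TT_adj s n (hh.pow_const 2) measurable_const]
    _ ≤ ENNReal.ofReal Real.pi * ∫⁻ x, ENNReal.ofReal Real.pi * h x ^ 2 := by
        gcongr with x
        have := TT_le_const s n hs (h := fun _ => 1) 1 (fun _ => le_rfl) x
        simpa using this
    _ = _ := by rw [lintegral_const_mul _ (hh.pow_const 2), mul_assoc]

noncomputable def mx (h : ℝ → ℝ≥0∞) : ℕ → ℝ → ℝ≥0∞
  | 0 => fun _ => 0
  | n + 1 => fun x => max (mx h n x) (TT 1 n h x)

lemma measurable_mx {h : ℝ → ℝ≥0∞} (hh : Measurable h) (n : ℕ) : Measurable (mx h n) := by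
  induction n with
  | zero => exact measurable_const
  | succ n ih => exact ih.max (measurable_TT 1 n hh)

lemma mx_le_succ (h : ℝ → ℝ≥0∞) (n : ℕ) (x : ℝ) : mx h n x ≤ mx h (n + 1) x := le_max_left _ _

lemma TT_le_mx (h : ℝ → ℝ≥0∞) {n J : ℕ} (hn : n < J) (x : ℝ) : TT 1 n h x ≤ mx h J x := by
  induction J with
  | zero => omega
  | succ J ih =>
    rcases Nat.lt_succ_iff_lt_or_eq.mp hn with h1 | h1
    · exact (ih h1).trans (mx_le_succ h J x)
    · subst h1; exact le_max_right _ _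

noncomputable def gx (h : ℝ → ℝ≥0∞) (n : ℕ) (x : ℝ) : ℝ≥0∞ := mx h (n + 1) x - mx h n x

lemma measurable_gx {h : ℝ → ℝ≥0∞} (hh : Measurable h) (n : ℕ) : Measurable (gx h n) :=
  (measurable_mx hh (n + 1)).sub (measurable_mx hh n)

lemma sum_gx (h : ℝ → ℝ≥0∞) (J : ℕ) (x : ℝ) : ∑ n ∈ Finset.range J, gx h n x = mx h J x := by
  induction J with
  | zero => simp [mx]
  | succ J ih => rw [Finset.sum_range_succ, ih]; exact add_tsub_cancel_of_le (mx_le_succ h J x)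

lemma mx_sq (h : ℝ → ℝ≥0∞) (J : ℕ) (x : ℝ) :
    mx h J x ^ 2 ≤ 2 * ∑ n ∈ Finset.range J, gx h n x * TT 1 n h x := by
  have := garsia_E (fun n => gx h n x) J 1
  simp only [pow_one, sum_gx] at this
  refine this.trans ?_
  norm_num
  refine mul_le_mul_right (Finset.sum_le_sum fun n hn => ?_) _
  rcases le_total (TT 1 n h x) (mx h n x) with h1 | h1
  · have : gx h n x = 0 := by
      unfold gx; simp only [mx]; rw [max_eq_left h1]; simp
    rw [this]; simp
  · have : mx h (n + 1) x = TT 1 n h x := max_eq_right h1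
    rw [this]

lemma L2_sum {h : ℕ → ℝ → ℝ≥0∞} (hh : ∀ i, Measurable (h i)) (hf : ∀ i, ∫⁻ x, h i x ^ 2 < ⊤) (J : ℕ) :
    ∫⁻ x, (∑ i ∈ Finset.range J, h i x) ^ 2 < ⊤ := by
  induction J with
  | zero => simp
  | succ J ih =>
    simp_rw [Finset.sum_range_succ]
    calc _ ≤ ∫⁻ x, 4 * ((∑ i ∈ Finset.range J, h i x) ^ 2 + h J x ^ 2) :=
          lintegral_mono fun x => add_sq_E _ _
      _ = 4 * ((∫⁻ x, (∑ i ∈ Finset.range J, h i x) ^ 2) + ∫⁻ x, h J x ^ 2) := by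
          rw [lintegral_const_mul, lintegral_add_right]
          · exact (hh J).pow_const 2
          · exact ((Finset.measurable_sum _ fun i _ => hh i).pow_const 2).add ((hh J).pow_const 2)
      _ < ⊤ := ENNReal.mul_lt_top (by simp) (ENNReal.add_lt_top.mpr ⟨ih, hf J⟩)

lemma TT_L2_fin (s n : ℕ) (hs : 1 ≤ s) {h : ℝ → ℝ≥0∞} (hh : Measurable h) (hf : ∫⁻ x, h x ^ 2 < ⊤) :
    ∫⁻ x, TT s n h x ^ 2 < ⊤ :=
  (TT_L2 s n hs hh).trans_lt (ENNReal.mul_lt_top (ENNReal.mul_lt_top (by simp) (by simp)) hf)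

lemma mx_L2_fin {h : ℝ → ℝ≥0∞} (hh : Measurable h) (hf : ∫⁻ x, h x ^ 2 < ⊤) (J : ℕ) :
    ∫⁻ x, mx h J x ^ 2 < ⊤ := by
  refine lt_of_le_of_lt (lintegral_mono fun x => ?_) (L2_sum (h := fun n => TT 1 n h)
    (fun i => measurable_TT 1 i hh) (fun i => TT_L2_fin 1 i le_rfl hh hf) J)
  refine pow_le_pow_left' ?_ 2
  induction J with
  | zero => simp [mx]
  | succ J ih =>
    rw [Finset.sum_range_succ]
    exact max_le (ih.trans le_self_add) le_add_self

lemma one_le_CK (s : ℕ) : 1 ≤ CK s := by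
  unfold CK
  rw [Real.one_le_toNNReal]
  have := Real.two_le_pi
  have : (1:ℝ) ≤ 8 ^ s := one_le_pow₀ (by norm_num)
  nlinarith

theorem maximal_L2 : ∃ C : ℝ≥0, ∀ (J : ℕ) {h : ℝ → ℝ≥0∞}, Measurable h → (∫⁻ x, h x ^ 2 < ⊤) →
    ∫⁻ x, mx h J x ^ 2 ≤ C * ∫⁻ x, h x ^ 2 := by
  set c : ℝ≥0 := CK 1 with hc
  refine ⟨4096 * c ^ 4, fun J h hh hf => ?_⟩
  have hg := measurable_gx hh
  have hTg : ∀ n, Measurable (TT 1 n (gx h n)) := fun n => measurable_TT 1 n (hg n)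
  set G : ℝ → ℝ≥0∞ := fun x => ∑ n ∈ Finset.range J, TT 1 n (gx h n) x with hG
  have hGm : Measurable G := Finset.measurable_sum _ fun i _ => hTg i
  have hmm := measurable_mx hh J
  have hXf := mx_L2_fin hh hf
  have hmG : Measurable fun x => mx h J x * G x := hmm.mul hGm
  have hGh : Measurable fun x => G x * h x := hGm.mul hh
  have hGf : ∫⁻ x, G x ^ 2 < ⊤ := by
    refine L2_sum (h := fun n => TT 1 n (gx h n)) hTg (fun n => TT_L2_fin 1 n le_rfl (hg n) ?_) J
    refine lt_of_le_of_lt (lintegral_mono fun x => ?_) (hXf (n + 1))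
    exact pow_le_pow_left' tsub_le_self 2
  have s1 : ∫⁻ x, mx h J x ^ 2 ≤ 2 * ∫⁻ x, G x * h x := by
    calc _ ≤ ∫⁻ x, 2 * ∑ n ∈ Finset.range J, gx h n x * TT 1 n h x := lintegral_mono fun x => mx_sq h J x
      _ = 2 * ∑ n ∈ Finset.range J, ∫⁻ x, gx h n x * TT 1 n h x := by
          rw [lintegral_const_mul, lintegral_finsetSum]
          · exact fun n _ => (hg n).mul (measurable_TT 1 n hh)
          · exact Finset.measurable_sum _ fun n _ => (hg n).mul (measurable_TT 1 n hh)
      _ = 2 * ∑ n ∈ Finset.range J, ∫⁻ x, TT 1 n (gx h n) x * h x := by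
          congr 1
          exact Finset.sum_congr rfl fun n _ => TT_adj 1 n hh (hg n)
      _ = _ := by
          rw [← lintegral_finsetSum]
          · simp only [hG, Finset.sum_mul]
          · exact fun n _ => (hTg n).mul hh
  have s2 : ∫⁻ x, G x ^ 2 ≤ 2 * (c * ∫⁻ x, mx h J x * G x) := by
    calc _ ≤ ∫⁻ x, 2 * ∑ n ∈ Finset.range J, ∑ l ∈ Finset.range (n + 1),
            TT 1 n (gx h n) x * TT 1 l (gx h l) x := by
          refine lintegral_mono fun x => ?_
          have := garsia_E (fun n => TT 1 n (gx h n) x) J 1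
          simp only [pow_one, Finset.mul_sum] at this ⊢
          exact_mod_cast this
      _ = 2 * ∑ n ∈ Finset.range J, ∑ l ∈ Finset.range (n + 1),
            ∫⁻ x, TT 1 n (gx h n) x * TT 1 l (gx h l) x := by
          rw [lintegral_const_mul, lintegral_finsetSum]
          · congr 1
            refine Finset.sum_congr rfl fun n _ => ?_
            rw [lintegral_finsetSum]
            exact fun l _ => (hTg n).mul (hTg l)
          · exact fun n _ => Finset.measurable_sum _ fun l _ => (hTg n).mul (hTg l)
          · exact Finset.measurable_sum _ fun n _ => Finset.measurable_sum _ fun l _ => (hTg n).mul (hTg l)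
      _ ≤ 2 * ∑ n ∈ Finset.range J, ∑ l ∈ Finset.range (n + 1),
            c * ∫⁻ x, gx h n x * TT 1 l (gx h l) x := by
          gcongr with n hn l hl
          rw [← TT_adj 1 n (hTg l) (hg n)]
          rw [← lintegral_const_mul]
          · refine lintegral_mono fun x => ?_
            have := TT_comp1 (l := l) (n := n) (by rw [Finset.mem_range] at hl; omega) 1 le_rfl (hg l) x
            calc _ ≤ gx h n x * (c * TT 1 l (gx h l) x) := by gcongr
              _ = _ := by ring
          · exact (hg n).mul (hTg l)
      _ ≤ 2 * ∑ n ∈ Finset.range J, ∑ l ∈ Finset.range J,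
            c * ∫⁻ x, gx h n x * TT 1 l (gx h l) x := by
          gcongr with n hn
          rw [Finset.mem_range] at hn
          omega
      _ = _ := by
          simp_rw [← Finset.mul_sum]
          congr 2
          have : ∀ x, mx h J x * G x = ∑ n ∈ Finset.range J, ∑ l ∈ Finset.range J,
              gx h n x * TT 1 l (gx h l) x := by
            intro x; rw [← sum_gx, hG, Finset.sum_mul_sum]
          simp_rw [this]
          rw [lintegral_finsetSum]
          · refine Finset.sum_congr rfl fun n _ => ?_
            rw [lintegral_finsetSum]
            exact fun l _ => (hg n).mul (hTg l)
          · exact fun n _ => Finset.measurable_sum _ fun l _ => (hg n).mul (hTg l)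
  have s3 : ∫⁻ x, G x ^ 2 ≤ 16 * c ^ 2 * ∫⁻ x, mx h J x ^ 2 := by
    apply absorb_E hGf.ne
    calc 2 * ∫⁻ x, G x ^ 2 ≤ 2 * (2 * (c * ∫⁻ x, mx h J x * G x)) := by gcongr
      _ = ∫⁻ x, 2 * ((2 * c) * G x ^ 1 * mx h J x) := by
          rw [← mul_assoc 2 (c : ℝ≥0∞), ← lintegral_const_mul _ hmG, ← lintegral_const_mul]
          · refine lintegral_congr fun x => ?_
            ring
          · exact hmG.const_mul _
      _ ≤ ∫⁻ x, (G x ^ 2 + (2 * (2 * c) * mx h J x) ^ 2) :=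
          lintegral_mono fun x => young_E _ _ _ _
      _ = _ := by
          rw [lintegral_add_left (hGm.pow_const 2)]
          congr 1
          rw [← lintegral_const_mul _ (hmm.pow_const 2)]
          refine lintegral_congr fun x => ?_
          ring
  have s4 : 16 * c ^ 2 * ∫⁻ x, mx h J x ^ 2 ≤ 4096 * c ^ 4 * ∫⁻ x, h x ^ 2 := by
    apply absorb_E (ENNReal.mul_lt_top (by exact ENNReal.mul_lt_top (by simp) (by simp)) (hXf J)).ne
    calc 2 * (16 * c ^ 2 * ∫⁻ x, mx h J x ^ 2) ≤ 2 * (16 * c ^ 2 * (2 * ∫⁻ x, G x * h x)) := by gcongr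
      _ = ∫⁻ x, 2 * ((32 * c ^ 2) * G x ^ 1 * h x) := by
          rw [← lintegral_const_mul _ hGh, ← lintegral_const_mul, ← lintegral_const_mul]
          · refine lintegral_congr fun x => ?_
            ring
          · exact (hGh.const_mul _).const_mul _
          · exact hGh.const_mul _
      _ ≤ ∫⁻ x, (G x ^ 2 + (2 * (32 * c ^ 2) * h x) ^ 2) :=
          lintegral_mono fun x => young_E _ _ _ _
      _ = (∫⁻ x, G x ^ 2) + 4096 * c ^ 4 * ∫⁻ x, h x ^ 2 := by
          rw [lintegral_add_left (hGm.pow_const 2)]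
          congr 1
          rw [← lintegral_const_mul _ (hh.pow_const 2)]
          refine lintegral_congr fun x => ?_
          ring
      _ ≤ _ := by gcongr
  push_cast
  refine le_trans ?_ s4
  have h1 : (1 : ℝ≥0∞) ≤ 16 * c ^ 2 := by
    have : (1 : ℝ≥0∞) ≤ c := by exact_mod_cast one_le_CK 1
    calc (1 : ℝ≥0∞) = 1 * 1 ^ 2 := by norm_num
      _ ≤ _ := by gcongr; norm_num
  calc _ = 1 * ∫⁻ x, mx h J x ^ 2 := by rw [one_mul]
    _ ≤ _ := by gcongr
end

section
open scoped ENNReal NNReal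

noncomputable def k2 (n : ℕ) (t : ℝ) : ℝ≥0∞ := ENNReal.ofReal (kk n t ^ 2)

lemma measurable_k2 (n : ℕ) : Measurable (k2 n) := by
  unfold k2
  exact (ENNReal.continuous_ofReal.comp ((continuous_kk n).pow 2)).measurable

lemma measurable_kE_sub (s n : ℕ) (x : ℝ) : Measurable fun y => kE s n (x - y) :=
  (measurable_kE s n).comp (measurable_const.sub measurable_id)

lemma measurable_kE_sub' (s n : ℕ) (x : ℝ) : Measurable fun y => kE s n (y - x) :=
  (measurable_kE s n).comp (measurable_id.sub measurable_const)

lemma kE_harnack {j n : ℕ} (h : j ≤ n) (x y z : ℝ) :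
    kE 2 j (x - z) * k2 n (x - y) ≤ 4 * kE 2 j (y - z) := by
  unfold kE k2
  have p1 := kk_pos j (x - z)
  have p2 := kk_pos n (x - y)
  have p3 := kk_pos j (y - z)
  have h4 : (4 : ℝ≥0∞) = ENNReal.ofReal 4 := by simp
  rw [h4, ← ENNReal.ofReal_mul (by positivity), ← ENNReal.ofReal_mul (by positivity)]
  apply ENNReal.ofReal_le_ofReal
  have h1 := kk_harnack h (x - z) (y - x)
  rw [kk_sub_comm n y x, show x - z + (y - x) = y - z by ring] at h1
  have h2 : (kk j (x - z) * kk n (x - y)) ^ 2 ≤ (2 * kk j (y - z)) ^ 2 := by gcongr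
  calc _ = 2 ^ j * (kk j (x - z) * kk n (x - y)) ^ 2 := by ring
    _ ≤ 2 ^ j * (2 * kk j (y - z)) ^ 2 := by gcongr
    _ = _ := by ring

def Har (n : ℕ) (W : ℝ → ℝ≥0∞) : Prop := ∀ x y, W x * k2 n (x - y) ≤ 4 * W y

lemma Har_TT {j n : ℕ} (h : j ≤ n) {g : ℝ → ℝ≥0∞} (hg : Measurable g) : Har n (TT 2 j g) := by
  intro x y
  unfold TT
  rw [← lintegral_mul_const, ← lintegral_const_mul]
  · refine lintegral_mono fun z => ?_
    calc _ = (kE 2 j (x - z) * k2 n (x - y)) * g z := by ring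
      _ ≤ (4 * kE 2 j (y - z)) * g z := mul_le_mul_left (kE_harnack h x y z) _
      _ = _ := by ring
  · exact (measurable_kE_sub 2 j y).mul hg
  · exact (measurable_kE_sub 2 j x).mul hg

lemma Har_om (n : ℕ) (x0 : ℝ) : Har n (fun x => kE 2 0 (x - x0)) := fun x y =>
  kE_harnack (Nat.zero_le n) x y x0

lemma Har_sum {n : ℕ} {W : ℕ → ℝ → ℝ≥0∞} (t : Finset ℕ) (hW : ∀ i ∈ t, Har n (W i)) :
    Har n (fun x => ∑ i ∈ t, W i x) := by
  intro x y
  simp only [Finset.sum_mul, Finset.mul_sum]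
  exact Finset.sum_le_sum fun i hi => hW i hi x y

lemma har_V {n r : ℕ} {o b B : ℝ → ℝ≥0∞} (ho : Har n o) (hb : Har n b) (hB : Har n B) (x y : ℝ) :
    (o x * (b x * B x ^ r)) * k2 n (x - y) ^ (r + 2) ≤ 4 ^ (r + 2) * (o y * (b y * B y ^ r)) := by
  calc _ = (o x * k2 n (x - y)) * ((b x * k2 n (x - y)) * (B x * k2 n (x - y)) ^ r) := by ring
    _ ≤ (4 * o y) * ((4 * b y) * (4 * B y) ^ r) := 
        mul_le_mul' (ho x y) (mul_le_mul' (hb x y) (pow_le_pow_left' (hB x y) r))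
    _ = _ := by ring

lemma V_le_TT {n q : ℕ} {V : ℝ → ℝ≥0∞} (hV : Measurable V)
    (h : ∀ x y, V x * k2 n (x - y) ^ q ≤ 4 ^ q * V y) (x : ℝ) :
    V x ≤ (2 ^ (2 + 2 * q) * 4 ^ q : ℝ≥0) * TT 2 n V x := by
  have h1 : V x * ∫⁻ y, kE (2 + 2 * q) n (x - y) ≤ 4 ^ q * TT 2 n V x := by
    unfold TT
    rw [← lintegral_const_mul _ (measurable_kE_sub _ _ _), ← lintegral_const_mul]
    · refine lintegral_mono fun y => ?_
      have e : kE (2 + 2 * q) n (x - y) = kE 2 n (x - y) * k2 n (x - y) ^ q := by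
        unfold kE k2
        have := kk_pos n (x - y)
        rw [← ENNReal.ofReal_pow (by positivity), ← ENNReal.ofReal_mul (by positivity)]
        congr 1; ring
      calc _ = kE 2 n (x - y) * (V x * k2 n (x - y) ^ q) := by rw [e]; ring
        _ ≤ kE 2 n (x - y) * (4 ^ q * V y) := mul_le_mul_right (h x y) _
        _ = _ := by ring
    · exact (measurable_kE_sub 2 n x).mul hV
  have h2 : ENNReal.ofReal (1 / 2 ^ (2 + 2 * q)) ≤ ∫⁻ y, kE (2 + 2 * q) n (x - y) := by
    rw [lintegral_sub_left_eq_self (kE (2 + 2 * q) n) x]; exact kE_zero_le _ _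
  have h3 : (2:ℝ≥0∞) ^ (2 + 2 * q) * ENNReal.ofReal (1 / 2 ^ (2 + 2 * q)) = 1 := by
    have : (2:ℝ≥0∞) ^ (2 + 2 * q) = ENNReal.ofReal (2 ^ (2 + 2 * q)) := by
      rw [ENNReal.ofReal_pow (by norm_num)]; simp
    rw [this, ← ENNReal.ofReal_mul (by positivity)]
    rw [mul_one_div_cancel (by positivity)]; simp
  calc V x = 2 ^ (2 + 2 * q) * (V x * ENNReal.ofReal (1 / 2 ^ (2 + 2 * q))) := by
        rw [mul_left_comm, h3, mul_one]
    _ ≤ 2 ^ (2 + 2 * q) * (4 ^ q * TT 2 n V x) := 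
        mul_le_mul_right (le_trans (mul_le_mul_right h2 _) h1) _
    _ = _ := by push_cast; ring

section
variable {J : ℕ} {a : ℕ → ℝ → ℝ≥0∞} {F : ℝ → ℝ≥0∞} {θ : ℕ → ℝ → ℝ≥0∞} {Cθ CL : ℝ≥0}

lemma W_le (hθm : ∀ n, Measurable (θ n)) (hθ : ∀ n, 1 ≤ Cθ * ∫⁻ t, θ n t * k2 n t)
    {n : ℕ} {W : ℝ → ℝ≥0∞} (hWm : Measurable W) (hW : Har n W) (x : ℝ) :
    W x ≤ 4 * Cθ * ∫⁻ y, θ n (x - y) * W y := by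
  have hm1 : Measurable fun y => θ n (x - y) := (hθm n).comp (measurable_const.sub measurable_id)
  have hm2 : Measurable fun y => k2 n (x - y) :=
    (measurable_k2 n).comp (measurable_const.sub measurable_id)
  have h1 : W x * ∫⁻ y, θ n (x - y) * k2 n (x - y) ≤ 4 * ∫⁻ y, θ n (x - y) * W y := by
    rw [← lintegral_const_mul, ← lintegral_const_mul]
    · refine lintegral_mono fun y => ?_
      calc _ = θ n (x - y) * (W x * k2 n (x - y)) := by ring
        _ ≤ θ n (x - y) * (4 * W y) := mul_le_mul_right (hW x y) _
        _ = _ := by ring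
    · exact hm1.mul hWm
    · exact hm1.mul hm2
  rw [lintegral_sub_left_eq_self (fun t => θ n t * k2 n t) x] at h1
  calc W x = W x * 1 := by rw [mul_one]
    _ ≤ W x * (Cθ * ∫⁻ t, θ n t * k2 n t) := by gcongr; exact hθ n
    _ = Cθ * (W x * ∫⁻ t, θ n t * k2 n t) := by ring
    _ ≤ Cθ * (4 * ∫⁻ y, θ n (x - y) * W y) := by gcongr
    _ = _ := by ring

lemma local_sum (hθm : ∀ n, Measurable (θ n)) (hθ : ∀ n, 1 ≤ Cθ * ∫⁻ t, θ n t * k2 n t)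
    (ha : ∀ j, Measurable (a j)) (hF : Measurable F)
    (hL : ∀ n y, ∑ i ∈ Finset.Ico n J, ∫⁻ x, θ n (x - y) * a i x ≤ CL * TT 2 n F y)
    {n : ℕ} {W : ℝ → ℝ≥0∞} (hWm : Measurable W) (hW : Har n W) :
    ∑ i ∈ Finset.Ico n J, ∫⁻ x, W x * a i x ≤ (4 * Cθ * CL) * ∫⁻ y, W y * TT 2 n F y := by
  have hm1 : ∀ x, Measurable fun y => θ n (x - y) := fun x =>
    (hθm n).comp (measurable_const.sub measurable_id)
  have hm1' : ∀ x, Measurable fun y => θ n (y - x) := fun x =>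
    (hθm n).comp (measurable_id.sub measurable_const)
  have hm2 : Measurable fun p : ℝ × ℝ => θ n (p.1 - p.2) :=
    (hθm n).comp (measurable_fst.sub measurable_snd)
  have hm3 : ∀ i, Measurable fun y => ∫⁻ x, θ n (x - y) * a i x := fun i =>
    Measurable.lintegral_prod_left' (f := fun p : ℝ × ℝ => θ n (p.1 - p.2) * a i p.1)
      (hm2.mul ((ha i).comp measurable_fst))
  have h1 : ∀ i, ∫⁻ x, W x * a i x ≤ (4 * Cθ) * ∫⁻ y, W y * ∫⁻ x, θ n (x - y) * a i x := by
    intro i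
    calc _ ≤ ∫⁻ x, (4 * Cθ) * ∫⁻ y, θ n (x - y) * W y * a i x := by
          refine lintegral_mono fun x => ?_
          rw [lintegral_mul_const]
          · rw [← mul_assoc]
            gcongr
            exact W_le hθm hθ hWm hW x
          · exact (hm1 x).mul hWm
      _ = (4 * Cθ) * ∫⁻ x, ∫⁻ y, θ n (x - y) * W y * a i x := by
          rw [lintegral_const_mul]
          exact Measurable.lintegral_prod_right'
            (f := fun p : ℝ × ℝ => θ n (p.1 - p.2) * W p.2 * a i p.1)
            ((hm2.mul (hWm.comp measurable_snd)).mul ((ha i).comp measurable_fst))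
      _ = (4 * Cθ) * ∫⁻ y, ∫⁻ x, θ n (x - y) * W y * a i x := by
          congr 1
          apply lintegral_lintegral_swap
          exact ((hm2.mul (hWm.comp measurable_snd)).mul ((ha i).comp measurable_fst)).aemeasurable
      _ = _ := by
          congr 1
          refine lintegral_congr fun y => ?_
          rw [← lintegral_const_mul]
          · exact lintegral_congr fun x => by ring
          · exact (hm1' y).mul (ha i)
  calc _ ≤ ∑ i ∈ Finset.Ico n J, (4 * Cθ) * ∫⁻ y, W y * ∫⁻ x, θ n (x - y) * a i x :=
        Finset.sum_le_sum fun i _ => h1 i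
    _ = (4 * Cθ) * ∫⁻ y, W y * ∑ i ∈ Finset.Ico n J, ∫⁻ x, θ n (x - y) * a i x := by
        rw [← Finset.mul_sum, ← lintegral_finsetSum]
        · simp_rw [Finset.mul_sum]
        · exact fun i _ => hWm.mul (hm3 i)
    _ ≤ (4 * Cθ) * ∫⁻ y, CL * (W y * TT 2 n F y) := by
        refine mul_le_mul_right (lintegral_mono fun y => ?_) _
        calc _ ≤ W y * (CL * TT 2 n F y) := mul_le_mul_right (hL n y) _
          _ = _ := by ring
    _ = _ := by
        rw [lintegral_const_mul]
        · ring
        · exact hWm.mul (measurable_TT 2 n hF)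

lemma chain_sum (hθm : ∀ n, Measurable (θ n)) (hθ : ∀ n, 1 ≤ Cθ * ∫⁻ t, θ n t * k2 n t)
    (ha : ∀ j, Measurable (a j)) (hF : Measurable F)
    (hL : ∀ n y, ∑ i ∈ Finset.Ico n J, ∫⁻ x, θ n (x - y) * a i x ≤ CL * TT 2 n F y)
    {n q : ℕ} {V : ℝ → ℝ≥0∞} (hV : Measurable V)
    (h : ∀ x y, V x * k2 n (x - y) ^ q ≤ 4 ^ q * V y) :
    ∑ i ∈ Finset.Ico n J, ∫⁻ x, V x * TT 2 i (a i) x ≤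
      ((2 ^ (2 + 2 * q) * 4 ^ q : ℝ≥0) * CK 2 * (4 * Cθ * CL) * CK 2) * ∫⁻ y, V y * TT 2 n F y := by
  set c : ℝ≥0 := 2 ^ (2 + 2 * q) * 4 ^ q with hc
  have hW := measurable_TT 2 n hV
  calc _ ≤ ∑ i ∈ Finset.Ico n J, (c * CK 2) * ∫⁻ x, TT 2 n V x * a i x := by
        refine Finset.sum_le_sum fun i hi => ?_
        rw [TT_adj 2 i (ha i) hV, ← lintegral_const_mul]
        · refine lintegral_mono fun x => ?_
          rw [← mul_assoc]
          gcongr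
          calc TT 2 i V x ≤ TT 2 i (fun y => c * TT 2 n V y) x :=
                TT_mono 2 i (fun y => V_le_TT hV h y) x
            _ = c * TT 2 i (TT 2 n V) x := TT_const_mul 2 i hW _ _
            _ ≤ c * (CK 2 * TT 2 n V x) := by
                gcongr
                exact TT_comp1 (Finset.mem_Ico.mp hi).1 2 (by norm_num) hV x
            _ = _ := by ring
        · exact hW.mul (ha i)
    _ = (c * CK 2) * ∑ i ∈ Finset.Ico n J, ∫⁻ x, TT 2 n V x * a i x := by rw [Finset.mul_sum]
    _ ≤ (c * CK 2) * ((4 * Cθ * CL) * ∫⁻ y, TT 2 n V y * TT 2 n F y) := by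
        gcongr
        exact local_sum hθm hθ ha hF hL hW (Har_TT le_rfl hV)
    _ = (c * CK 2) * ((4 * Cθ * CL) * ∫⁻ y, V y * TT 2 n (TT 2 n F) y) := by
        rw [TT_adj 2 n (measurable_TT 2 n hF) hV]
    _ ≤ (c * CK 2) * ((4 * Cθ * CL) * ∫⁻ y, CK 2 * (V y * TT 2 n F y)) := by
        refine mul_le_mul_right (mul_le_mul_right (lintegral_mono fun y => ?_) _) _
        calc _ ≤ V y * (CK 2 * TT 2 n F y) :=
              mul_le_mul_right (TT_comp1 le_rfl 2 (by norm_num) hF y) _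
          _ = _ := by ring
    _ = _ := by
        rw [lintegral_const_mul]
        · ring
        · exact hV.mul (measurable_TT 2 n hF)
end

lemma garsia2_E (b : ℕ → ℝ≥0∞) (J r : ℕ) : (∑ j ∈ Finset.range J, b j) ^ (r + 2) ≤
    ((r + 2) * (r + 1) : ℕ) * ∑ n ∈ Finset.range J, ∑ i ∈ Finset.Ico n J,
      (b n * (∑ j ∈ Finset.range (n + 1), b j) ^ r) * b i := by
  refine (garsia_E b J (r + 1)).trans ?_
  push_cast
  rw [mul_assoc]
  refine mul_le_mul' (le_of_eq (by ring)) ?_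
  calc ∑ i ∈ Finset.range J, b i * (∑ j ∈ Finset.range (i + 1), b j) ^ (r + 1)
      ≤ ∑ i ∈ Finset.range J, b i * ((r + 1 : ℕ) * ∑ n ∈ Finset.range (i + 1),
          b n * (∑ j ∈ Finset.range (n + 1), b j) ^ r) := by
        gcongr with i hi
        exact garsia_E b (i + 1) r
    _ = (r + 1 : ℕ) * ∑ i ∈ Finset.range J, ∑ n ∈ Finset.range (i + 1),
          (b n * (∑ j ∈ Finset.range (n + 1), b j) ^ r) * b i := by
        rw [Finset.mul_sum]
        refine Finset.sum_congr rfl fun i _ => ?_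
        rw [mul_left_comm, Finset.mul_sum]
        congr 1
        exact Finset.sum_congr rfl fun n _ => by ring
    _ = _ := by
        push_cast
        congr 1
        apply Finset.sum_comm'
        intro i n
        simp only [Finset.mem_range, Finset.mem_Ico]
        omega

theorem LP_abstract (m : ℕ) (CR CL Cθ : ℝ≥0) (θ : ℕ → ℝ → ℝ≥0∞) (hθm : ∀ n, Measurable (θ n))
    (hθ : ∀ n, 1 ≤ Cθ * ∫⁻ t, θ n t * k2 n t) :
    ∃ C : ℝ≥0, ∀ (J : ℕ) (a : ℕ → ℝ → ℝ≥0∞) (F : ℝ → ℝ≥0∞) (D : ℝ≥0) (x0 : ℝ),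
      (∀ j, Measurable (a j)) → Measurable F → (∀ j x, a j x ≤ D) → (∀ x, F x ≤ D) →
      (∀ j x, a j x ≤ CR * TT 2 j (a j) x) →
      (∀ n y, ∑ i ∈ Finset.Ico n J, ∫⁻ x, θ n (x - y) * a i x ≤ CL * TT 2 n F y) →
      ∫⁻ x, kE 2 0 (x - x0) * (∑ j ∈ Finset.range J, a j x) ^ (2 ^ m) ≤
        C * ∫⁻ x, kE 2 0 (x - x0) * F x ^ (2 ^ m) := by
  rcases m with _ | m
  · refine ⟨4 * Cθ * CL * CK 2, fun J a F D x0 ha hF haD hFD hR hL => ?_⟩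
    have hom : Measurable fun x => kE 2 0 (x - x0) := measurable_kE_sub' 2 0 x0
    have h1 := local_sum hθm hθ ha hF hL hom (Har_om 0 x0)
    simp only [pow_zero, pow_one, Finset.mul_sum]
    rw [lintegral_finsetSum]
    swap
    · exact fun i _ => hom.mul (ha i)
    rw [Finset.range_eq_Ico]
    refine h1.trans ?_
    have h2 := TT_comp1 (le_refl 0) 2 (by norm_num) hF x0
    have e : ∀ g : ℝ → ℝ≥0∞, ∫⁻ y, kE 2 0 (y - x0) * g y = TT 2 0 g x0 := by
      intro g; unfold TT; simp_rw [kE_sub_comm 2 0 _ x0]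
    rw [e, e]
    push_cast
    rw [mul_assoc _ (CK 2 : ℝ≥0∞)]
    gcongr
  · obtain ⟨Cm, hCm⟩ := maximal_L2
    obtain ⟨Cp, hCp⟩ := TT_pow 2 (by norm_num) m
    obtain ⟨r, hr⟩ : ∃ r, 2 ^ (m + 1) = r + 2 := ⟨2 ^ (m + 1) - 2, by
      have : 1 ≤ 2 ^ m := Nat.one_le_two_pow
      rw [pow_succ]; omega⟩
    set K0 : ℝ≥0 := ((2 ^ (2 + 2 * (r + 2)) * 4 ^ (r + 2) : ℝ≥0) * CK 2 * (4 * Cθ * CL) * CK 2) with hK0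
    set K : ℝ≥0 := ((r + 2) * (r + 1) : ℕ) * K0 with hK
    refine ⟨CR ^ (r + 2) * ((2 * K) ^ (r + 2) * (4 * Cp ^ 2 * Cm)), 
      fun J a F D x0 ha hF haD hFD hR hL => ?_⟩
    set om : ℝ → ℝ≥0∞ := fun x => kE 2 0 (x - x0) with hom_def
    have hom : Measurable om := measurable_kE_sub' 2 0 x0
    set b : ℕ → ℝ → ℝ≥0∞ := fun j => TT 2 j (a j) with hb_def
    have hb : ∀ j, Measurable (b j) := fun j => measurable_TT 2 j (ha j)
    set B : ℕ → ℝ → ℝ≥0∞ := fun n x => ∑ j ∈ Finset.range n, b j x with hB_def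
    have hB : ∀ n, Measurable (B n) := fun n => Finset.measurable_sum _ fun j _ => hb j
    set M : ℝ → ℝ≥0∞ := fun x => (Finset.range J).sup fun n => TT 2 n F x with hM_def
    have hM : Measurable M := by
      have : ∀ t : Finset ℕ, Measurable fun x => t.sup fun n => TT 2 n F x := by
        intro t
        induction t using Finset.induction_on with
        | empty => simp
        | insert i t hi ih =>
          simp only [Finset.sup_insert]
          exact (measurable_TT 2 i hF).sup ih
      exact this _
    have homI : ∫⁻ x, om x ≤ ENNReal.ofReal Real.pi := lintegral_kE_sub' 2 0 (by norm_num) x0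
    have hX : ∫⁻ x, om x * B J x ^ (r + 2) < ⊤ := by
      have : ∀ x, B J x ≤ J * (ENNReal.ofReal Real.pi * D) := by
        intro x
        calc B J x ≤ ∑ j ∈ Finset.range J, ENNReal.ofReal Real.pi * D :=
              Finset.sum_le_sum fun j _ => TT_le_const 2 j (by norm_num) D (haD j) x
          _ = _ := by simp
      calc _ ≤ ∫⁻ x, om x * (J * (ENNReal.ofReal Real.pi * D)) ^ (r + 2) := by
            gcongr with x; exact this x
        _ = (∫⁻ x, om x) * (J * (ENNReal.ofReal Real.pi * D)) ^ (r + 2) := by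
            rw [lintegral_mul_const _ hom]
        _ < ⊤ := by
            refine ENNReal.mul_lt_top (homI.trans_lt (by simp)) (ENNReal.pow_lt_top ?_)
            exact ENNReal.mul_lt_top (by simp) (ENNReal.mul_lt_top (by simp) (by simp))
    set V : ℕ → ℝ → ℝ≥0∞ := fun n x => om x * (b n x * B (n + 1) x ^ r) with hV_def
    have hV : ∀ n, Measurable (V n) := fun n => hom.mul ((hb n).mul ((hB _).pow_const r))
    have hVh : ∀ n x y, V n x * k2 n (x - y) ^ (r + 2) ≤ 4 ^ (r + 2) * V n y := fun n x y =>
      har_V (Har_om n x0) (Har_TT le_rfl (ha n))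
        (Har_sum (Finset.range (n + 1)) fun i hi => Har_TT (by rw [Finset.mem_range] at hi; omega) (ha i)) x y
    have s1 : ∫⁻ x, om x * B J x ^ (r + 2) ≤ K * ∫⁻ x, om x * (B J x ^ (r + 1) * M x) := by
      calc _ ≤ ∫⁻ x, ((r + 2) * (r + 1) : ℕ) * ∑ n ∈ Finset.range J, ∑ i ∈ Finset.Ico n J,
              V n x * b i x := by
            refine lintegral_mono fun x => ?_
            calc _ ≤ om x * (((r + 2) * (r + 1) : ℕ) * ∑ n ∈ Finset.range J, ∑ i ∈ Finset.Ico n J,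
                    (b n x * (∑ j ∈ Finset.range (n + 1), b j x) ^ r) * b i x) := by
                  gcongr; exact garsia2_E (fun j => b j x) J r
              _ = _ := by
                  rw [mul_left_comm]
                  congr 1
                  simp_rw [Finset.mul_sum]
                  exact Finset.sum_congr rfl fun n _ => Finset.sum_congr rfl fun i _ => by
                    simp only [hV_def, hB_def]; ring
        _ = ((r + 2) * (r + 1) : ℕ) * ∑ n ∈ Finset.range J, ∑ i ∈ Finset.Ico n J,
              ∫⁻ x, V n x * b i x := by
            rw [lintegral_const_mul, lintegral_finsetSum]
            · congr 1
              refine Finset.sum_congr rfl fun n _ => ?_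
              rw [lintegral_finsetSum]
              exact fun i _ => (hV n).mul (hb i)
            · exact fun n _ => Finset.measurable_sum _ fun i _ => (hV n).mul (hb i)
            · exact Finset.measurable_sum _ fun n _ => Finset.measurable_sum _ fun i _ => (hV n).mul (hb i)
        _ ≤ ((r + 2) * (r + 1) : ℕ) * ∑ n ∈ Finset.range J, K0 * ∫⁻ x, V n x * TT 2 n F x := by
            gcongr with n hn
            rw [hK0]
            push_cast
            have := chain_sum hθm hθ ha hF hL (hV n) (hVh n)
            push_cast at this
            exact this
        _ = K * ∑ n ∈ Finset.range J, ∫⁻ x, V n x * TT 2 n F x := by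
            rw [← Finset.mul_sum, hK]; push_cast; ring
        _ ≤ K * ∑ n ∈ Finset.range J, ∫⁻ x, V n x * M x := by
            gcongr with n hn x
            exact Finset.le_sup (f := fun n => TT 2 n F x) hn
        _ = K * ∫⁻ x, ∑ n ∈ Finset.range J, V n x * M x := by
            rw [lintegral_finsetSum]
            exact fun n _ => (hV n).mul hM
        _ ≤ _ := by
            gcongr with x
            rw [← Finset.sum_mul, ← mul_assoc]
            gcongr
            calc ∑ n ∈ Finset.range J, V n x ≤ ∑ n ∈ Finset.range J, om x * (b n x * B J x ^ r) := by
                  refine Finset.sum_le_sum fun n hn => ?_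
                  simp only [hV_def]
                  gcongr
                  refine Finset.sum_le_sum_of_subset ?_
                  rw [Finset.mem_range] at hn
                  exact Finset.range_mono (by omega)
              _ = _ := by
                  rw [← Finset.mul_sum, ← Finset.sum_mul, pow_succ, mul_comm (B J x ^ r)]
    have s2 : ∫⁻ x, om x * B J x ^ (r + 2) ≤ (2 * K) ^ (r + 2) * ∫⁻ x, om x * M x ^ (r + 2) := by
      apply absorb_E hX.ne
      calc _ ≤ 2 * (K * ∫⁻ x, om x * (B J x ^ (r + 1) * M x)) := by gcongr
        _ = ∫⁻ x, om x * (2 * (K * B J x ^ (r + 1) * M x)) := by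
            rw [← lintegral_const_mul, ← lintegral_const_mul]
            · exact lintegral_congr fun x => by ring
            · exact (hom.mul (((hB J).pow_const _).mul hM)).const_mul _
            · exact hom.mul (((hB J).pow_const _).mul hM)
        _ ≤ ∫⁻ x, (om x * B J x ^ (r + 2) + (2 * K) ^ (r + 2) * (om x * M x ^ (r + 2))) := by
            refine lintegral_mono fun x => ?_
            calc _ ≤ om x * (B J x ^ (r + 2) + (2 * K * M x) ^ (r + 2)) := by
                  gcongr; exact young_E _ _ _ _
              _ = _ := by ring
        _ = _ := by
            rw [lintegral_add_left, lintegral_const_mul]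
            · exact hom.mul (hM.pow_const _)
            · exact hom.mul ((hB J).pow_const _)
    set ρ : ℝ → ℝ≥0∞ := fun x => ENNReal.ofReal (kk 0 (x - x0)) with hρ
    have hρm : Measurable ρ := (ENNReal.continuous_ofReal.comp ((continuous_kk 0).comp
      (continuous_id.sub continuous_const))).measurable
    have hρ2 : ∀ x, om x = ρ x ^ 2 := by
      intro x
      simp only [hom_def, hρ, kE]
      rw [← ENNReal.ofReal_pow (kk_pos _ _).le]; simp
    set h : ℝ → ℝ≥0∞ := fun x => ρ x * F x ^ (2 ^ m) with hh_def
    have hh : Measurable h := hρm.mul (hF.pow_const _)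
    have hh2 : ∀ x, h x ^ 2 = om x * F x ^ (2 ^ (m + 1)) := by
      intro x; simp only [hh_def]; rw [hρ2, mul_pow, ← pow_mul, ← pow_succ]
    have hhf : ∫⁻ x, h x ^ 2 < ⊤ := by
      simp_rw [hh2]
      calc _ ≤ ∫⁻ x, om x * (D : ℝ≥0∞) ^ (2 ^ (m + 1)) := by
            gcongr with x; exact hFD x
        _ = (∫⁻ x, om x) * (D : ℝ≥0∞) ^ (2 ^ (m + 1)) := by rw [lintegral_mul_const _ hom]
        _ < ⊤ := ENNReal.mul_lt_top (homI.trans_lt (by simp)) (ENNReal.pow_lt_top (by simp))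
    have hρT : ∀ n (g : ℝ → ℝ≥0∞), Measurable g → ∀ x, ρ x * TT 2 n g x ≤
        2 * TT 1 n (fun y => ρ y * g y) x := by
      intro n g hg x
      unfold TT
      rw [← lintegral_const_mul, ← lintegral_const_mul]
      · refine lintegral_mono fun y => ?_
        have : ρ x * kE 2 n (x - y) ≤ 2 * (kE 1 n (x - y) * ρ y) := by
          simp only [hρ, kE]
          have p1 := kk_pos 0 (x - x0)
          have p2 := kk_pos n (x - y)
          have p3 := kk_pos 0 (y - x0)
          have h4 : (2 : ℝ≥0∞) = ENNReal.ofReal 2 := by simp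
          rw [h4, ← ENNReal.ofReal_mul (by positivity), ← ENNReal.ofReal_mul (by positivity),
            ← ENNReal.ofReal_mul (by positivity)]
          apply ENNReal.ofReal_le_ofReal
          have h1 := kk_harnack (Nat.zero_le n) (x - x0) (y - x)
          rw [kk_sub_comm n y x, show x - x0 + (y - x) = y - x0 by ring] at h1
          calc _ = 2 ^ n * kk n (x - y) * (kk 0 (x - x0) * kk n (x - y)) := by ring
            _ ≤ 2 ^ n * kk n (x - y) * (2 * kk 0 (y - x0)) := by gcongr
            _ = _ := by ring
        calc _ = (ρ x * kE 2 n (x - y)) * g y := by ring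
          _ ≤ (2 * (kE 1 n (x - y) * ρ y)) * g y := by gcongr
          _ = _ := by ring
      · exact (measurable_kE_sub 1 n x).mul (hρm.mul hg)
      · exact (measurable_kE_sub 2 n x).mul hg
    have hMm : ∀ x, ρ x * M x ^ (2 ^ m) ≤ 2 * Cp * mx h J x := by
      intro x
      by_cases hJ : (Finset.range J).Nonempty
      · obtain ⟨n, hn, hne⟩ := Finset.exists_mem_eq_sup (Finset.range J) hJ (fun n => TT 2 n F x)
        simp only [hM_def]
        rw [hne]
        calc _ ≤ ρ x * (Cp * TT 2 n (fun y => F y ^ (2 ^ m)) x) := by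
              gcongr; exact hCp n hF x
          _ = Cp * (ρ x * TT 2 n (fun y => F y ^ (2 ^ m)) x) := by ring
          _ ≤ Cp * (2 * TT 1 n h x) := mul_le_mul_right (hρT n _ (hF.pow_const _) x) _
          _ ≤ Cp * (2 * mx h J x) := by gcongr; exact TT_le_mx h (Finset.mem_range.mp hn) x
          _ = _ := by ring
      · rw [Finset.not_nonempty_iff_eq_empty] at hJ
        simp [hM_def, hJ]
    have s3 : ∫⁻ x, om x * M x ^ (r + 2) ≤ 4 * Cp ^ 2 * Cm * ∫⁻ x, om x * F x ^ (2 ^ (m + 1)) := by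
      calc _ ≤ ∫⁻ x, 4 * Cp ^ 2 * mx h J x ^ 2 := by
            refine lintegral_mono fun x => ?_
            calc _ = (ρ x * M x ^ (2 ^ m)) ^ 2 := by rw [hρ2, ← hr, mul_pow, ← pow_mul, ← pow_succ]
              _ ≤ (2 * Cp * mx h J x) ^ 2 := pow_le_pow_left' (hMm x) 2
              _ = _ := by ring
        _ = 4 * Cp ^ 2 * ∫⁻ x, mx h J x ^ 2 := by
            rw [lintegral_const_mul _ ((measurable_mx hh J).pow_const 2)]
        _ ≤ 4 * Cp ^ 2 * (Cm * ∫⁻ x, h x ^ 2) := by gcongr; exact hCm J hh hhf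
        _ = _ := by simp_rw [hh2]; ring
    calc _ ≤ ∫⁻ x, CR ^ (r + 2) * (om x * B J x ^ (r + 2)) := by
          refine lintegral_mono fun x => ?_
          rw [hr]
          have : ∑ j ∈ Finset.range J, a j x ≤ CR * B J x := by
            simp only [hB_def, Finset.mul_sum]
            exact Finset.sum_le_sum fun j _ => hR j x
          calc _ ≤ om x * (CR * B J x) ^ (r + 2) := by gcongr
            _ = _ := by ring
      _ = CR ^ (r + 2) * ∫⁻ x, om x * B J x ^ (r + 2) := by
          rw [lintegral_const_mul]
          exact hom.mul ((hB J).pow_const _)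
      _ ≤ CR ^ (r + 2) * ((2 * K) ^ (r + 2) * (4 * Cp ^ 2 * Cm * ∫⁻ x, om x * F x ^ (2 ^ (m + 1)))) := by
          gcongr
          exact s2.trans (by gcongr)
      _ = _ := by push_cast; ring
end

section
open scoped ENNReal NNReal FourierTransform

lemma schwartz_decay (φ : SchwartzMap ℝ ℂ) (s : ℕ) : ∃ C : ℝ, 0 < C ∧ ∀ t, ‖φ t‖ ≤ C * kk 0 t ^ s := by
  refine ⟨2 ^ (2 * s) * ((Finset.Iic (2 * s, 0)).sup fun m => SchwartzMap.seminorm ℝ m.1 m.2) φ + 1,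
    by positivity, fun t => ?_⟩
  have h := SchwartzMap.one_add_le_sup_seminorm_apply (𝕜 := ℝ) (m := (2 * s, 0)) le_rfl le_rfl φ t
  simp only [norm_iteratedFDeriv_zero] at h
  unfold kk
  rw [inv_pow, ← div_eq_mul_inv, le_div_iff₀ (by positivity)]
  have h2 : (1 + (2 ^ 0 * t) ^ 2) ^ s ≤ (1 + ‖t‖) ^ (2 * s) := by
    rw [pow_mul]
    gcongr
    have : ‖t‖ ^ 2 = t ^ 2 := by rw [Real.norm_eq_abs, sq_abs]
    nlinarith [norm_nonneg t]
  calc _ ≤ ‖φ t‖ * (1 + ‖t‖) ^ (2 * s) := by gcongr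
    _ ≤ _ := by rw [mul_comm]; linarith

lemma er_cd (lam : ℝ) : ContDiff ℝ (⊤ : ℕ∞) (er lam) := by
  unfold er
  have : ContDiff ℝ (⊤ : ℕ∞) (fun x : ℝ => (x : ℂ)) := Complex.ofRealCLM.contDiff
  exact (contDiff_const.mul this).cexp

lemma er_tg (lam : ℝ) : (er lam).HasTemperateGrowth := by
  refine ⟨er_cd lam, fun n => ⟨0, |lam| ^ n, fun x => ?_⟩⟩
  rw [norm_iteratedFDeriv_eq_norm_iteratedDeriv]
  have : ∀ n, iteratedDeriv n (er lam) = fun x => (Complex.I * lam) ^ n * er lam x := by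
    intro n
    induction n with
    | zero => simp
    | succ n ih =>
      rw [iteratedDeriv_succ, ih]
      ext x
      have h1 : HasDerivAt (er lam) (Complex.I * lam * er lam x) x := by
        unfold er
        have h0 : HasDerivAt (fun x : ℝ => Complex.I * (lam : ℂ) * (x : ℂ)) (Complex.I * lam) x := by
          simpa using (Complex.ofRealCLM.hasDerivAt (x := x)).const_mul (Complex.I * (lam : ℂ))
        simpa [mul_comm] using h0.cexp
      rw [(h1.const_mul _).deriv]; ring
  rw [this]
  simp [norm_er]

lemma rp_tg (N : ℕ) (c : ℕ → ℂ) (Λ : ℕ → ℝ) : (rp N c Λ).HasTemperateGrowth := by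
  unfold rp
  apply Function.HasTemperateGrowth.sum
  intro n _
  exact (Function.HasTemperateGrowth.const _).mul (er_tg _)

/-- dilation -/
noncomputable def dil (i : ℕ) (φ : SchwartzMap ℝ ℂ) : SchwartzMap ℝ ℂ :=
  ((2:ℂ) ^ i) • SchwartzMap.compCLMOfContinuousLinearEquiv ℂ
    (ContinuousLinearEquiv.unitsEquivAut ℝ (Units.mk0 ((2:ℝ) ^ i) (by positivity))) φ

lemma dil_apply (i : ℕ) (φ : SchwartzMap ℝ ℂ) (t : ℝ) : dil i φ t = 2 ^ i * φ (2 ^ i * t) := by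
  simp [dil, mul_comm]

lemma kk_resc (n : ℕ) (t : ℝ) : kk 0 (2 ^ n * t) = kk n t := by simp [kk]

lemma dil_bound {φ : SchwartzMap ℝ ℂ} {s : ℕ} {C : ℝ} (h : ∀ t, ‖φ t‖ ≤ C * kk 0 t ^ s) (i : ℕ) (t : ℝ) :
    ‖dil i φ t‖ ≤ C * (2 ^ i * kk i t ^ s) := by
  rw [dil_apply, norm_mul]
  have := h (2 ^ i * t)
  rw [kk_resc] at this
  calc _ ≤ 2 ^ i * (C * kk i t ^ s) := by
        rw [norm_pow, Complex.norm_ofNat]; gcongr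
    _ = _ := by ring

lemma dil_fourier (i : ℕ) (φ : SchwartzMap ℝ ℂ) (l : ℝ) :
    myFourier (fun t => dil i φ t) l = myFourier (fun t => φ t) (((2:ℝ) ^ i)⁻¹ * l) := by
  unfold myFourier
  have hp : (0:ℝ) < 2 ^ i := by positivity
  have h := Measure.integral_comp_mul_left (fun t : ℝ => φ t *
    Complex.exp (-Complex.I * (t : ℂ) * ((((2:ℝ) ^ i)⁻¹ * l : ℝ) : ℂ))) ((2:ℝ) ^ i)
  rw [abs_of_pos (by positivity)] at h
  calc _ = ∫ t : ℝ, (2 ^ i : ℝ) • (φ (2 ^ i * t) *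
    Complex.exp (-Complex.I * ((2 ^ i * t : ℝ) : ℂ) * ((((2:ℝ) ^ i)⁻¹ * l : ℝ) : ℂ))) := by
        refine integral_congr_ae (Filter.Eventually.of_forall fun t => ?_)
        simp only [dil_apply, Complex.real_smul]
        push_cast
        rw [mul_assoc]
        congr 3
        field_simp
    _ = _ := by
        rw [integral_smul, h, smul_smul, mul_inv_cancel₀ hp.ne', one_smul]

lemma conv_er (g : SchwartzMap ℝ ℂ) (l x : ℝ) :
    ∫ z : ℝ, g (x - z) * er l z = myFourier (fun t => g t) l * er l x := by
  rw [← integral_sub_left_eq_self _ _ x]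
  unfold myFourier
  rw [← integral_mul_const]
  refine integral_congr_ae (Filter.Eventually.of_forall fun t => ?_)
  simp only [sub_sub_cancel]
  rw [mul_assoc]
  congr 1
  unfold er
  rw [← Complex.exp_add]
  congr 1
  push_cast; ring

lemma integrable_schwartz_sub (g : SchwartzMap ℝ ℂ) (x : ℝ) : Integrable fun z => g (x - z) :=
  g.integrable.comp_sub_left x

lemma integrable_schwartz_rp (g : SchwartzMap ℝ ℂ) (N : ℕ) (c : ℕ → ℂ) (Λ : ℕ → ℝ) (x : ℝ) :
    Integrable fun z => g (x - z) * rp N c Λ z := by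
  refine (integrable_schwartz_sub g x).mul_bdd (c := ∑ n ∈ Finset.range N, ‖c n‖)
    (continuous_rp N c Λ).aestronglyMeasurable ?_
  exact Filter.Eventually.of_forall fun z => norm_rp_le N c Λ z

lemma conv_rp (g : SchwartzMap ℝ ℂ) (N : ℕ) (c : ℕ → ℂ) (Λ : ℕ → ℝ) (x : ℝ) :
    ∫ z : ℝ, g (x - z) * rp N c Λ z = rp N (fun n => myFourier (fun t => g t) (Λ n) * c n) Λ x := by
  unfold rp
  simp_rw [Finset.mul_sum]
  rw [integral_finsetSum]
  · refine Finset.sum_congr rfl fun n _ => ?_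
    rw [show (fun z => g (x - z) * (c n * er (Λ n) z)) = fun z => c n * (g (x - z) * er (Λ n) z) by
      ext z; ring, integral_const_mul, conv_er]
    ring
  · intro n _
    have := integrable_schwartz_rp g (n+1) (fun m => if m = n then c n else 0) Λ x
    refine this.congr (Filter.Eventually.of_forall fun z => ?_)
    simp [rp, Finset.sum_ite_eq']

lemma myFourier_eq (g : SchwartzMap ℝ ℂ) (ξ : ℝ) :
    𝓕 g ξ = myFourier (fun t => g t) (2 * Real.pi * ξ) := by
  rw [SchwartzMap.fourier_coe, Real.fourier_eq']
  unfold myFourier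
  refine integral_congr_ae (Filter.Eventually.of_forall fun t => ?_)
  simp only [smul_eq_mul]
  rw [mul_comm]
  congr 2
  simp
  ring

lemma lint_sq (g : SchwartzMap ℝ ℂ) : ∫⁻ x, ‖g x‖ₑ ^ 2 = ENNReal.ofReal (∫ x, ‖g x‖ ^ 2) := by
  have hi : Integrable fun x => ‖g x‖ ^ 2 :=
    MemLp.integrable_norm_pow (p := 2) (g.memLp 2) (by norm_num)
  rw [ofReal_integral_eq_lintegral_ofReal hi (Filter.Eventually.of_forall fun x => by positivity)]
  refine lintegral_congr fun x => ?_
  rw [ENNReal.ofReal_pow (norm_nonneg _), ofReal_norm]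

lemma planch (g : SchwartzMap ℝ ℂ) : ∫⁻ x, ‖𝓕 g x‖ₑ ^ 2 = ∫⁻ x, ‖g x‖ₑ ^ 2 := by
  rw [lint_sq, lint_sq, SchwartzMap.integral_norm_sq_fourier]

lemma planch_sum (ψ : ℕ → SchwartzMap ℝ ℂ) (t : Finset ℕ) (K : ℝ≥0∞)
    (hK : ∀ l, ∑ i ∈ t, ‖myFourier (fun x => ψ i x) l‖ₑ ^ 2 ≤ K) (G : SchwartzMap ℝ ℂ) :
    ∑ i ∈ t, ∫⁻ x, ‖∫ z, ψ i (x - z) * G z‖ₑ ^ 2 ≤ K * ∫⁻ x, ‖G x‖ₑ ^ 2 := by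
  have h1 : ∀ i, ∫⁻ x, ‖∫ z, ψ i (x - z) * G z‖ₑ ^ 2
      = ∫⁻ ξ, ‖myFourier (fun x => ψ i x) (2 * Real.pi * ξ)‖ₑ ^ 2 * ‖𝓕 G ξ‖ₑ ^ 2 := by
    intro i
    set H := SchwartzMap.convolution (ContinuousLinearMap.mul ℂ ℂ) (ψ i) G with hH
    have e : ∀ x, H x = ∫ z, ψ i (x - z) * G z := by
      intro x
      rw [hH, SchwartzMap.convolution_apply, convolution_mul_swap]
    simp_rw [← e]
    rw [← planch]
    refine lintegral_congr fun ξ => ?_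
    rw [hH, SchwartzMap.fourier_convolution, SchwartzMap.pairing_apply_apply,
      ContinuousLinearMap.mul_apply', enorm_mul, mul_pow, myFourier_eq (ψ i)]
  have hm : ∀ g : SchwartzMap ℝ ℂ, Measurable fun ξ => ‖𝓕 g ξ‖ₑ ^ 2 := fun g =>
    ((𝓕 g).continuous.enorm.measurable).pow_const 2
  simp_rw [h1]
  rw [← lintegral_finsetSum]
  · calc _ ≤ ∫⁻ ξ, K * ‖𝓕 G ξ‖ₑ ^ 2 := by
          refine lintegral_mono fun ξ => ?_
          simp only
          rw [← Finset.sum_mul]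
          exact mul_le_mul_left (hK _) _
      _ = _ := by rw [lintegral_const_mul _ (hm G), planch]
  · intro i _
    refine Measurable.mul ?_ (hm G)
    simp_rw [← myFourier_eq]
    exact hm (ψ i)
end

section
open scoped ENNReal NNReal FourierTransform

structure Good (φ : SchwartzMap ℝ ℂ) : Prop where
  im : ∀ ξ : ℝ, (myFourier (fun t => φ t) ξ).im = 0
  range : ∀ ξ : ℝ, 0 ≤ (myFourier (fun t => φ t) ξ).re ∧ (myFourier (fun t => φ t) ξ).re ≤ 1
  zero : ∀ ξ : ℝ, 1 < |ξ| → myFourier (fun t => φ t) ξ = 0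
  one : ∀ ξ : ℝ, |ξ| ≤ 1 / 2 → myFourier (fun t => φ t) ξ = 1

noncomputable def psi (φ : SchwartzMap ℝ ℂ) (i : ℕ) : SchwartzMap ℝ ℂ := dil (i + 1) φ - dil i φ

lemma integrable_fourier (g : SchwartzMap ℝ ℂ) (ξ : ℝ) :
    Integrable fun t : ℝ => g t * Complex.exp (-Complex.I * (t : ℂ) * (ξ : ℂ)) := by
  refine g.integrable.mul_bdd (c := 1) (by fun_prop) (Filter.Eventually.of_forall fun t => ?_)
  rw [show -Complex.I * (t : ℂ) * (ξ : ℂ) = ((-(t * ξ) : ℝ) : ℂ) * Complex.I by push_cast; ring,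
    Complex.norm_exp_ofReal_mul_I]

lemma psi_fourier (φ : SchwartzMap ℝ ℂ) (i : ℕ) (l : ℝ) : myFourier (fun t => psi φ i t) l =
    myFourier (fun t => φ t) (((2:ℝ) ^ (i + 1))⁻¹ * l) - myFourier (fun t => φ t) (((2:ℝ) ^ i)⁻¹ * l) := by
  rw [← dil_fourier, ← dil_fourier]
  unfold myFourier
  rw [← integral_sub (integrable_fourier _ _) (integrable_fourier _ _)]
  refine integral_congr_ae (Filter.Eventually.of_forall fun t => ?_)
  simp [psi, sub_mul]

variable {φ : SchwartzMap ℝ ℂ}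

lemma Good.norm_le (h : Good φ) (i : ℕ) (l : ℝ) : ‖myFourier (fun t => psi φ i t) l‖ ≤ 1 := by
  rw [psi_fourier]
  set u := (((2:ℝ) ^ (i + 1))⁻¹ * l)
  set v := (((2:ℝ) ^ i)⁻¹ * l)
  have e : myFourier (fun t => φ t) u - myFourier (fun t => φ t) v =
      (((myFourier (fun t => φ t) u).re - (myFourier (fun t => φ t) v).re : ℝ) : ℂ) := by
    apply Complex.ext <;> simp [h.im]
  rw [e, Complex.norm_real, Real.norm_eq_abs, abs_le]
  have := h.range u
  have := h.range v
  constructor <;> linarith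

lemma abs_resc (i : ℕ) (l : ℝ) : |((2:ℝ) ^ i)⁻¹ * l| = |l| / 2 ^ i := by
  rw [abs_mul, abs_of_pos (by positivity), div_eq_inv_mul]

lemma Good.supp (h : Good φ) (i : ℕ) (l : ℝ) (hne : myFourier (fun t => psi φ i t) l ≠ 0) :
    2 ^ i < 2 * |l| ∧ |l| ≤ 2 ^ (i + 1) := by
  rw [psi_fourier] at hne
  by_contra hc
  rw [not_and_or, not_lt, not_le] at hc
  apply hne
  have p1 : (0:ℝ) < 2 ^ i := by positivity
  rcases hc with hc | hc
  · rw [h.one, h.one, sub_self]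
    · rw [abs_resc, div_le_iff₀ (by positivity)]; linarith
    · rw [abs_resc, div_le_iff₀ (by positivity), pow_succ]; linarith
  · rw [h.zero, h.zero, sub_self]
    · rw [abs_resc, lt_div_iff₀ (by positivity)]; rw [pow_succ] at hc; linarith
    · rw [abs_resc, lt_div_iff₀ (by positivity)]; linarith

lemma Good.sum_le (h : Good φ) (t : Finset ℕ) (l : ℝ) :
    ∑ i ∈ t, ‖myFourier (fun x => psi φ i x) l‖ₑ ^ 2 ≤ 2 := by
  classical
  set s := t.filter (fun i => myFourier (fun x => psi φ i x) l ≠ 0) with hs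
  have h1 : ∑ i ∈ t, ‖myFourier (fun x => psi φ i x) l‖ₑ ^ 2
      = ∑ i ∈ s, ‖myFourier (fun x => psi φ i x) l‖ₑ ^ 2 := by
    rw [hs, Finset.sum_filter_of_ne]
    intro i _ hi h0
    simp [h0] at hi
  rw [h1]
  have hcard : s.card ≤ 2 := by
    by_cases hne : s.Nonempty
    · have hsub : s ⊆ Finset.Icc (s.min' hne) (s.min' hne + 1) := by
        intro i hi
        rw [Finset.mem_Icc]
        refine ⟨Finset.min'_le _ _ hi, ?_⟩
        have hm := Finset.min'_mem s hne
        set i0 := s.min' hne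
        have a1 := (h.supp i l (Finset.mem_filter.mp hi).2).1
        have a2 := (h.supp i0 l (Finset.mem_filter.mp hm).2).2
        have a3 : (2:ℝ) ^ i < 2 ^ (i0 + 2) := by
          calc (2:ℝ) ^ i < 2 * |l| := a1
            _ ≤ 2 * 2 ^ (i0 + 1) := by linarith
            _ = _ := by ring
        have := (pow_lt_pow_iff_right₀ (by norm_num : (1:ℝ) < 2)).mp a3
        omega
      refine (Finset.card_le_card hsub).trans ?_
      rw [Nat.card_Icc]; omega
    · rw [Finset.not_nonempty_iff_eq_empty] at hne; simp [hne]
  calc _ ≤ ∑ i ∈ s, (1:ℝ≥0∞) := by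
        refine Finset.sum_le_sum fun i _ => ?_
        apply pow_le_one'
        rw [← ofReal_norm]
        exact ENNReal.ofReal_le_one.mpr (h.norm_le i l)
    _ = s.card := by simp
    _ ≤ 2 := by exact_mod_cast hcard

lemma psi_bound {s : ℕ} {C : ℝ} (hC : 0 < C) (h : ∀ t, ‖φ t‖ ≤ C * kk 0 t ^ s) (i : ℕ) (t : ℝ) :
    ‖psi φ i t‖ ≤ 3 * C * (2 ^ i * kk i t ^ s) := by
  have p := kk_pos i t
  have p' := kk_pos (i+1) t
  calc ‖psi φ i t‖ = ‖dil (i + 1) φ t - dil i φ t‖ := by simp [psi]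
    _ ≤ ‖dil (i + 1) φ t‖ + ‖dil i φ t‖ := norm_sub_le _ _
    _ ≤ C * (2 ^ (i + 1) * kk (i + 1) t ^ s) + C * (2 ^ i * kk i t ^ s) :=
        add_le_add (dil_bound h _ _) (dil_bound h _ _)
    _ ≤ C * (2 ^ (i + 1) * kk i t ^ s) + C * (2 ^ i * kk i t ^ s) := by
        gcongr; exact kk_anti (by omega) t
    _ = _ := by ring

/-- smooth LP pieces -/
noncomputable def dl (φ : SchwartzMap ℝ ℂ) (N : ℕ) (c : ℕ → ℂ) (Λ : ℕ → ℝ) (i : ℕ) : ℝ → ℂ :=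
  rp N (fun n => myFourier (fun t => psi φ i t) (Λ n) * c n) Λ

lemma dl_conv (N : ℕ) (c : ℕ → ℂ) (Λ : ℕ → ℝ) (i : ℕ) (x : ℝ) :
    dl φ N c Λ i x = ∫ z, psi φ i (x - z) * rp N c Λ z := (conv_rp _ _ _ _ _).symm

lemma dl_repr (h : Good φ) (N : ℕ) (c : ℕ → ℂ) (Λ : ℕ → ℝ) (i : ℕ) (x : ℝ) :
    dl φ N c Λ i x = ∫ z, dil (i + 2) φ (x - z) * dl φ N c Λ i z := by
  unfold dl
  rw [conv_rp]
  congr 1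
  ext n
  by_cases h0 : myFourier (fun t => psi φ i t) (Λ n) = 0
  · simp [h0]
  · have := (h.supp i _ h0).2
    rw [dil_fourier, h.one, one_mul]
    rw [abs_resc, div_le_iff₀ (by positivity)]
    calc |Λ n| ≤ 2 ^ (i + 1) := this
      _ = _ := by ring

lemma enorm_sq_meas {f : ℝ → ℂ} (hf : Continuous f) : Measurable fun x => ‖f x‖ₑ ^ 2 :=
  hf.enorm.measurable.pow_const 2

lemma repr_bound (h : Good φ) : ∃ CR : ℝ≥0, ∀ (N : ℕ) (c : ℕ → ℂ) (Λ : ℕ → ℝ) (i : ℕ) (x : ℝ),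
    ‖dl φ N c Λ i x‖ₑ ^ 2 ≤ CR * TT 2 i (fun z => ‖dl φ N c Λ i z‖ₑ ^ 2) x := by
  obtain ⟨C, hC, hd⟩ := schwartz_decay φ 2
  refine ⟨Real.toNNReal ((4 * C) ^ 2 * Real.pi), fun N c Λ i x => ?_⟩
  have hc : Continuous (dl φ N c Λ i) := continuous_rp _ _ _
  have h1 : ‖dl φ N c Λ i x‖ₑ ≤ ENNReal.ofReal (4 * C) * TT 2 i (fun z => ‖dl φ N c Λ i z‖ₑ) x := by
    rw [dl_repr h]
    refine (enorm_integral_le_lintegral_enorm _).trans ?_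
    unfold TT
    rw [← lintegral_const_mul]
    · refine lintegral_mono fun z => ?_
      simp only
      rw [enorm_mul, ← mul_assoc]
      refine mul_le_mul_left ?_ _
      rw [← ofReal_norm, kE, ← ENNReal.ofReal_mul (by positivity)]
      apply ENNReal.ofReal_le_ofReal
      have p := kk_pos (i+2) (x-z)
      calc _ ≤ C * (2 ^ (i + 2) * kk (i + 2) (x - z) ^ 2) := dil_bound hd _ _
        _ ≤ C * (2 ^ (i + 2) * kk i (x - z) ^ 2) := by gcongr; exact kk_anti (by omega) _
        _ = _ := by ring
    · exact (measurable_kE_sub 2 i x).mul hc.enorm.measurable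
  calc _ ≤ (ENNReal.ofReal (4 * C) * TT 2 i (fun z => ‖dl φ N c Λ i z‖ₑ) x) ^ 2 :=
        pow_le_pow_left' h1 2
    _ = ENNReal.ofReal (4 * C) ^ 2 * (TT 2 i (fun z => ‖dl φ N c Λ i z‖ₑ) x) ^ 2 := by ring
    _ ≤ ENNReal.ofReal (4 * C) ^ 2 * (ENNReal.ofReal Real.pi *
          TT 2 i (fun z => ‖dl φ N c Λ i z‖ₑ ^ 2) x) :=
        mul_le_mul_right (TT_sq 2 i (by norm_num) hc.enorm.measurable x) _
    _ = _ := by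
        rw [← mul_assoc, ← ENNReal.ofReal_pow (by positivity), ← ENNReal.ofReal_mul (by positivity)]
        rfl

lemma lip_decay (φ : SchwartzMap ℝ ℂ) : ∃ C : ℝ, 0 < C ∧ ∀ u v : ℝ,
    ‖φ u - φ v‖ ≤ C * |u - v| * (1 + (u - v) ^ 2) * kk 0 v := by
  obtain ⟨C, hC, hd⟩ := schwartz_decay (SchwartzMap.derivCLM ℝ ℂ φ) 1
  refine ⟨2 * C, by positivity, fun u v => ?_⟩
  have h := Convex.norm_image_sub_le_of_norm_deriv_le (𝕜 := ℝ) (f := φ) (s := Set.uIcc v u) (x := v) (y := u)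
    (C := C * (2 * (1 + (u - v) ^ 2) * kk 0 v)) (fun w _ => φ.differentiableAt) (fun w hw => ?_)
    (convex_uIcc v u) Set.left_mem_uIcc Set.right_mem_uIcc
  · refine h.trans (le_of_eq ?_)
    rw [Real.norm_eq_abs]; ring
  · have := hd w
    rw [SchwartzMap.derivCLM_apply, pow_one] at this
    refine this.trans ?_
    gcongr
    have hw2 : (w - v) ^ 2 ≤ (u - v) ^ 2 := by
      rw [sq_le_sq]
      exact Set.abs_sub_left_of_mem_uIcc hw
    simp only [kk, pow_zero, one_mul]
    rw [← div_eq_mul_inv, inv_eq_one_div, div_le_div_iff₀ (by positivity) (by positivity)]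
    have : 1 + v ^ 2 ≤ 2 * (1 + (w - v) ^ 2) * (1 + w ^ 2) := by
      nlinarith [sq_nonneg (2 * w - v), sq_nonneg (w * (w - v))]
    calc _ ≤ 2 * (1 + (w - v) ^ 2) * (1 + w ^ 2) := by linarith
      _ ≤ _ := by gcongr
end

section
open scoped ENNReal NNReal FourierTransform

lemma comm_real {C3 CL : ℝ} (hC3 : 0 < C3) (hCL : 0 < CL) {φ : SchwartzMap ℝ ℂ}
    (hd : ∀ t, ‖φ t‖ ≤ C3 * kk 0 t ^ 3)
    (hl : ∀ u v : ℝ, ‖φ u - φ v‖ ≤ CL * |u - v| * (1 + (u - v) ^ 2) * kk 0 v)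
    {n i : ℕ} (h : n ≤ i) (x y z : ℝ) :
    ‖psi φ i (x - z)‖ * ‖φ (2 ^ n * (x - y)) - φ (2 ^ n * (z - y))‖ ≤
      3 * C3 * CL * (2 ^ n / 2 ^ i) * (2 ^ i * kk i (x - z) ^ 1) * kk n (z - y) := by
  have h1 := psi_bound hC3 hd i (x - z)
  have h2 := hl (2 ^ n * (x - y)) (2 ^ n * (z - y))
  rw [kk_resc, show (2:ℝ) ^ n * (x - y) - 2 ^ n * (z - y) = 2 ^ n * (x - z) by ring] at h2
  set d := x - z
  have pK := kk_pos i d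
  have pk := kk_pos n (z - y)
  have hn : (0:ℝ) < 2 ^ n := by positivity
  have hi : (0:ℝ) < 2 ^ i := by positivity
  have hni : (2:ℝ) ^ n ≤ 2 ^ i := pow_le_pow_right₀ (by norm_num) h
  have hK : kk i d * (1 + (2 ^ i * d) ^ 2) = 1 := by
    unfold kk; exact inv_mul_cancel₀ (by positivity)
  have e1 : (1 + (2 ^ n * d) ^ 2) * kk i d ≤ 1 := by
    have : (2 ^ n * d) ^ 2 ≤ (2 ^ i * d) ^ 2 := by
      rw [mul_pow, mul_pow]; gcongr
    calc (1 + (2 ^ n * d) ^ 2) * kk i d ≤ (1 + (2 ^ i * d) ^ 2) * kk i d := by gcongr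
      _ = 1 := by rw [mul_comm]; exact hK
  have e2 : 2 ^ i * |d| * kk i d ≤ 1 := by
    have : 2 ^ i * |d| ≤ 1 + (2 ^ i * d) ^ 2 := by
      rw [show (2 ^ i * d) ^ 2 = (2 ^ i * |d|) ^ 2 by rw [mul_pow, mul_pow, sq_abs]]
      nlinarith [sq_nonneg (2 ^ i * |d| - 1)]
    calc 2 ^ i * |d| * kk i d ≤ (1 + (2 ^ i * d) ^ 2) * kk i d := by gcongr
      _ = 1 := by rw [mul_comm]; exact hK
  have e3 : |(2:ℝ) ^ n * d| = 2 ^ n * |d| := by rw [abs_mul, abs_of_pos hn]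
  rw [e3] at h2
  calc _ ≤ (3 * C3 * (2 ^ i * kk i d ^ 3)) *
        (CL * (2 ^ n * |d|) * (1 + (2 ^ n * d) ^ 2) * kk n (z - y)) := by gcongr
    _ = 3 * C3 * CL * (2 ^ n / 2 ^ i) * (2 ^ i * kk i d ^ 1) * kk n (z - y) *
        ((2 ^ i * |d| * kk i d) * ((1 + (2 ^ n * d) ^ 2) * kk i d)) := by
        field_simp
    _ ≤ 3 * C3 * CL * (2 ^ n / 2 ^ i) * (2 ^ i * kk i d ^ 1) * kk n (z - y) * (1 * 1) := by
        gcongr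
    _ = _ := by ring

noncomputable def thet (φ : SchwartzMap ℝ ℂ) (n : ℕ) (t : ℝ) : ℝ≥0∞ :=
  ENNReal.ofReal (2 ^ n) * ‖φ (2 ^ n * t)‖ₑ ^ 2

lemma measurable_thet (φ : SchwartzMap ℝ ℂ) (n : ℕ) : Measurable (thet φ n) := by
  unfold thet
  have : Continuous fun t => φ (2 ^ n * t) := φ.continuous.comp (by fun_prop)
  exact (enorm_sq_meas this).const_mul _

lemma sum_quarter (n J : ℕ) : ∑ i ∈ Finset.Ico n J, ((2:ℝ) ^ n / 2 ^ i) ^ 2 ≤ 2 := by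
  rw [Finset.sum_Ico_eq_sum_range]
  refine le_trans (Finset.sum_le_sum fun k _ => ?_) (sum_geometric_two_le (J - n))
  rw [pow_add]
  have : (2:ℝ) ^ n / (2 ^ n * 2 ^ k) = (1 / 2) ^ k := by
    rw [one_div, inv_pow]; field_simp
  rw [this]
  have h0 : (0:ℝ) ≤ (1/2) ^ k := by positivity
  have h1 : ((1:ℝ)/2) ^ k ≤ 1 := pow_le_one₀ (by norm_num) (by norm_num)
  nlinarith

lemma local_bound {φ : SchwartzMap ℝ ℂ} (h : Good φ) : ∃ CL : ℝ≥0, ∀ (N : ℕ) (c : ℕ → ℂ) (Λ : ℕ → ℝ)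
    (J n : ℕ) (y : ℝ), ∑ i ∈ Finset.Ico n J, ∫⁻ x, thet φ n (x - y) * ‖dl φ N c Λ i x‖ₑ ^ 2 ≤
      CL * TT 2 n (fun z => ‖rp N c Λ z‖ₑ ^ 2) y := by
  obtain ⟨C1, hC1, hd1⟩ := schwartz_decay φ 1
  obtain ⟨C3, hC3, hd3⟩ := schwartz_decay φ 3
  obtain ⟨CL, hCL, hl⟩ := lip_decay φ
  set Cc : ℝ := 3 * C3 * CL with hCc
  have hCcp : 0 < Cc := by positivity
  refine ⟨Real.toNNReal (4 * (2 * C1 ^ 2 + Cc ^ 2 * 2 * (Real.pi * Real.pi))), fun N c Λ J n y => ?_⟩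
  set f := rp N c Λ with hf
  have hfc : Continuous f := continuous_rp N c Λ
  set Θ : ℝ → ℂ := fun x => φ (2 ^ n * (x - y)) with hΘ
  have hΘc : Continuous Θ := φ.continuous.comp (by fun_prop)
  obtain ⟨G, hG⟩ : ∃ G : SchwartzMap ℝ ℂ, ∀ x, G x = Θ x * f x := by
    refine ⟨SchwartzMap.smulLeftCLM ℂ f (SchwartzMap.compSubConstCLM ℂ y
      (SchwartzMap.compCLMOfContinuousLinearEquiv ℂ
      (ContinuousLinearEquiv.unitsEquivAut ℝ (Units.mk0 ((2:ℝ) ^ n) (by positivity))) φ)), fun x => ?_⟩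
    rw [SchwartzMap.smulLeftCLM_apply_apply (rp_tg N c Λ)]
    simp [hΘ, mul_comm]
    exact Or.inl rfl
  set hh : ℝ → ℝ≥0∞ := fun z => ENNReal.ofReal (kk n (z - y)) * ‖f z‖ₑ with hhdef
  have hkm : Measurable fun z => ENNReal.ofReal (kk n (z - y)) :=
    (ENNReal.continuous_ofReal.comp ((continuous_kk n).comp (continuous_id.sub continuous_const))).measurable
  have hhm : Measurable hh := hkm.mul hfc.enorm.measurable
  have hI : ENNReal.ofReal (2 ^ n) * ∫⁻ z, hh z ^ 2 = TT 2 n (fun z => ‖f z‖ₑ ^ 2) y := by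
    unfold TT
    rw [← lintegral_const_mul _ (hhm.pow_const 2)]
    refine lintegral_congr fun z => ?_
    have := kk_pos n (z - y)
    rw [kE_sub_comm, kE, ENNReal.ofReal_mul (by positivity), ENNReal.ofReal_pow this.le]
    simp only [hhdef]
    ring
  have hpt : ∀ i, n ≤ i → ∀ x, ‖Θ x‖ₑ * ‖dl φ N c Λ i x‖ₑ ≤ ‖∫ z, psi φ i (x - z) * G z‖ₑ +
      ENNReal.ofReal (Cc * (2 ^ n / 2 ^ i)) * TT 1 i hh x := by
    intro i hi x
    have i1 : Integrable fun z => psi φ i (x - z) * f z := integrable_schwartz_rp _ _ _ _ _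
    have i2 : Integrable fun z => psi φ i (x - z) * G z := by
      refine (integrable_schwartz_sub (psi φ i) x).mul_bdd (c := SchwartzMap.seminorm ℝ 0 0 G)
        G.continuous.aestronglyMeasurable ?_
      exact Filter.Eventually.of_forall fun z => SchwartzMap.norm_le_seminorm ℝ G z
    have e : Θ x * dl φ N c Λ i x = (∫ z, psi φ i (x - z) * G z) +
        ∫ z, psi φ i (x - z) * (Θ x - Θ z) * f z := by
      have i3 : Integrable fun z => psi φ i (x - z) * (Θ x - Θ z) * f z := by
        refine ((i1.const_mul (Θ x)).sub i2).congr (Filter.Eventually.of_forall fun z => ?_)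
        simp only [Pi.sub_apply, hG]; ring
      rw [← integral_add i2 i3, dl_conv, ← integral_const_mul]
      refine integral_congr_ae (Filter.Eventually.of_forall fun z => ?_)
      simp only [hG, ← hf]; ring
    rw [← enorm_mul, e]
    refine (enorm_add_le _ _).trans (add_le_add_right ?_ _)
    refine (enorm_integral_le_lintegral_enorm _).trans ?_
    unfold TT
    rw [← lintegral_const_mul]
    swap
    · exact (measurable_kE_sub 1 i x).mul hhm
    refine lintegral_mono fun z => ?_
    simp only [hhdef]
    rw [enorm_mul, ← mul_assoc, ← mul_assoc]
    refine mul_le_mul_left ?_ _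
    have := comm_real hC3 hCL hd3 hl hi x y z
    have pk := kk_pos i (x - z)
    rw [enorm_mul, ← ofReal_norm, ← ofReal_norm, kE, ← ENNReal.ofReal_mul (by positivity),
      ← ENNReal.ofReal_mul (by positivity), ← ENNReal.ofReal_mul (by positivity)]
    exact ENNReal.ofReal_le_ofReal this
  have hmc : ∀ i, Measurable fun x => ‖∫ z, psi φ i (x - z) * G z‖ₑ ^ 2 := by
    intro i
    have e : ∀ x, SchwartzMap.convolution (ContinuousLinearMap.mul ℂ ℂ) (psi φ i) G x
        = ∫ z, psi φ i (x - z) * G z := by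
      intro x
      rw [SchwartzMap.convolution_apply, convolution_mul_swap]
    simp_rw [← e]
    exact enorm_sq_meas (SchwartzMap.continuous _)
  have hint : ∀ i ∈ Finset.Ico n J, ∫⁻ x, thet φ n (x - y) * ‖dl φ N c Λ i x‖ₑ ^ 2 ≤
      ENNReal.ofReal (2 ^ n) * (4 * ((∫⁻ x, ‖∫ z, psi φ i (x - z) * G z‖ₑ ^ 2) +
        ENNReal.ofReal (Cc ^ 2 * ((2 ^ n / 2 ^ i) ^ 2 * (Real.pi * Real.pi))) * ∫⁻ z, hh z ^ 2)) := by
    intro i hi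
    have hni := (Finset.mem_Ico.mp hi).1
    have m2 := (measurable_TT 1 i hhm).pow_const 2
    calc _ ≤ ∫⁻ x, ENNReal.ofReal (2 ^ n) * (4 * (‖∫ z, psi φ i (x - z) * G z‖ₑ ^ 2 +
          ENNReal.ofReal (Cc ^ 2 * (2 ^ n / 2 ^ i) ^ 2) * TT 1 i hh x ^ 2)) := by
          refine lintegral_mono fun x => ?_
          calc _ = ENNReal.ofReal (2 ^ n) * (‖Θ x‖ₑ * ‖dl φ N c Λ i x‖ₑ) ^ 2 := by
                simp only [thet, hΘ]; ring
            _ ≤ ENNReal.ofReal (2 ^ n) * (‖∫ z, psi φ i (x - z) * G z‖ₑ +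
                  ENNReal.ofReal (Cc * (2 ^ n / 2 ^ i)) * TT 1 i hh x) ^ 2 :=
                mul_le_mul_right (pow_le_pow_left' (hpt i hni x) 2) _
            _ ≤ ENNReal.ofReal (2 ^ n) * (4 * (‖∫ z, psi φ i (x - z) * G z‖ₑ ^ 2 +
                  (ENNReal.ofReal (Cc * (2 ^ n / 2 ^ i)) * TT 1 i hh x) ^ 2)) :=
                mul_le_mul_right (add_sq_E _ _) _
            _ = _ := by
                rw [mul_pow (ENNReal.ofReal _), ← ENNReal.ofReal_pow (by positivity), mul_pow Cc]
      _ = ENNReal.ofReal (2 ^ n) * (4 * ((∫⁻ x, ‖∫ z, psi φ i (x - z) * G z‖ₑ ^ 2) +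
          ENNReal.ofReal (Cc ^ 2 * (2 ^ n / 2 ^ i) ^ 2) * ∫⁻ x, TT 1 i hh x ^ 2)) := by
          rw [lintegral_const_mul, lintegral_const_mul, lintegral_add_left (hmc i),
            lintegral_const_mul _ m2]
          · exact (hmc i).add (m2.const_mul _)
          · exact ((hmc i).add (m2.const_mul _)).const_mul _
      _ ≤ _ := by
          refine mul_le_mul_right (mul_le_mul_right (add_le_add_right ?_ _) _) _
          refine (mul_le_mul_right (TT_L2 1 i (by norm_num) hhm) _).trans (le_of_eq ?_)
          rw [← mul_assoc (Cc ^ 2), ENNReal.ofReal_mul (by positivity : 0 ≤ Cc ^ 2 * (2 ^ n / 2 ^ i : ℝ) ^ 2), 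
            ENNReal.ofReal_mul Real.pi_pos.le]
          ring
  have hGh : ∫⁻ x, ‖G x‖ₑ ^ 2 ≤ ENNReal.ofReal (C1 ^ 2) * ∫⁻ z, hh z ^ 2 := by
    rw [← lintegral_const_mul _ (hhm.pow_const 2)]
    refine lintegral_mono fun z => ?_
    simp only
    rw [ENNReal.ofReal_pow hC1.le, ← mul_pow]
    apply pow_le_pow_left'
    rw [hG, enorm_mul]
    simp only [hhdef]
    rw [← mul_assoc]
    refine mul_le_mul_left ?_ _
    rw [← ofReal_norm, ← ENNReal.ofReal_mul hC1.le]
    apply ENNReal.ofReal_le_ofReal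
    have := hd1 (2 ^ n * (z - y))
    rwa [kk_resc, pow_one] at this
  calc _ ≤ ∑ i ∈ Finset.Ico n J, ENNReal.ofReal (2 ^ n) * (4 * ((∫⁻ x, ‖∫ z, psi φ i (x - z) * G z‖ₑ ^ 2) +
        ENNReal.ofReal (Cc ^ 2 * ((2 ^ n / 2 ^ i) ^ 2 * (Real.pi * Real.pi))) * ∫⁻ z, hh z ^ 2)) :=
        Finset.sum_le_sum hint
    _ = ENNReal.ofReal (2 ^ n) * (4 * ((∑ i ∈ Finset.Ico n J, ∫⁻ x, ‖∫ z, psi φ i (x - z) * G z‖ₑ ^ 2) +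
        ENNReal.ofReal (∑ i ∈ Finset.Ico n J, Cc ^ 2 * ((2 ^ n / 2 ^ i) ^ 2 * (Real.pi * Real.pi))) *
          ∫⁻ z, hh z ^ 2)) := by
        rw [← Finset.mul_sum, ← Finset.mul_sum, Finset.sum_add_distrib, ← Finset.sum_mul,
          ENNReal.ofReal_sum_of_nonneg (fun i _ => by positivity)]
    _ ≤ ENNReal.ofReal (2 ^ n) * (4 * (2 * (ENNReal.ofReal (C1 ^ 2) * ∫⁻ z, hh z ^ 2) +
        ENNReal.ofReal (Cc ^ 2 * 2 * (Real.pi * Real.pi)) * ∫⁻ z, hh z ^ 2)) := by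
        refine mul_le_mul_right (mul_le_mul_right (add_le_add ?_ ?_) _) _
        · exact (planch_sum (psi φ) _ 2 (fun l => h.sum_le _ l) G).trans (mul_le_mul_right hGh _)
        · refine mul_le_mul_left (ENNReal.ofReal_le_ofReal ?_) _
          rw [← Finset.mul_sum, ← Finset.sum_mul, mul_assoc]
          have := sum_quarter n J
          gcongr
    _ = ENNReal.ofReal (4 * (2 * C1 ^ 2 + Cc ^ 2 * 2 * (Real.pi * Real.pi))) *
          (ENNReal.ofReal (2 ^ n) * ∫⁻ z, hh z ^ 2) := by
        have h2 : (2:ℝ≥0∞) = ENNReal.ofReal 2 := by simp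
        have h4 : (4:ℝ≥0∞) = ENNReal.ofReal 4 := by simp
        rw [ENNReal.ofReal_mul (by norm_num : (0:ℝ) ≤ 4), ENNReal.ofReal_add (by positivity) (by positivity),
          ENNReal.ofReal_mul (by norm_num : (0:ℝ) ≤ 2) (q := C1 ^ 2), ← h2, ← h4]
        ring
    _ = _ := by rw [hI]; rfl

lemma theta_lower {φ : SchwartzMap ℝ ℂ} (h : Good φ) : ∃ C : ℝ≥0, ∀ n,
    1 ≤ C * ∫⁻ t, thet φ n t * k2 n t := by
  have hcont : Continuous fun t => ‖φ t‖ ^ 2 * kk 0 t ^ 2 :=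
    (φ.continuous.norm.pow 2).mul ((continuous_kk 0).pow 2)
  have hi : Integrable fun t => ‖φ t‖ ^ 2 * kk 0 t ^ 2 := by
    refine (MemLp.integrable_norm_pow (p := 2) (φ.memLp 2) (by norm_num)).mul_bdd (c := 1)
      ((continuous_kk 0).pow 2).aestronglyMeasurable (Filter.Eventually.of_forall fun t => ?_)
    rw [Real.norm_eq_abs, abs_of_nonneg (by positivity)]
    exact pow_le_one₀ (kk_pos 0 t).le (kk_le_one 0 t)
  obtain ⟨t0, ht0⟩ : ∃ t, φ t ≠ 0 := by
    by_contra hc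
    push Not at hc
    have := h.one 0 (by norm_num)
    simp [myFourier, hc] at this
  have hpos : 0 < ∫ t, ‖φ t‖ ^ 2 * kk 0 t ^ 2 := by
    apply integral_pos_of_integrable_nonneg_nonzero hcont hi
    · intro t; have := kk_pos 0 t; positivity
    · have := kk_pos 0 t0
      have := norm_pos_iff.mpr ht0
      positivity
    
  set I0 := ∫ t, ‖φ t‖ ^ 2 * kk 0 t ^ 2 with hI0
  refine ⟨Real.toNNReal I0⁻¹, fun n => ?_⟩
  have hp : (0:ℝ) < 2 ^ n := by positivity
  have e : ∫⁻ t, thet φ n t * k2 n t = ENNReal.ofReal I0 := by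
    have h1 := Measure.integral_comp_mul_left (fun t => ‖φ t‖ ^ 2 * kk 0 t ^ 2) ((2:ℝ) ^ n)
    rw [abs_of_pos (by positivity), smul_eq_mul] at h1
    have h2 : I0 = ∫ t, 2 ^ n * (‖φ (2 ^ n * t)‖ ^ 2 * kk 0 (2 ^ n * t) ^ 2) := by
      rw [integral_const_mul, h1, ← mul_assoc, mul_inv_cancel₀ hp.ne', one_mul]
    rw [h2, ofReal_integral_eq_lintegral_ofReal]
    · refine lintegral_congr fun t => ?_
      simp only [thet, k2, kk_resc]
      have := kk_pos n t
      rw [ENNReal.ofReal_mul hp.le, ENNReal.ofReal_mul (by positivity), ENNReal.ofReal_pow (norm_nonneg _),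
        ofReal_norm, mul_assoc]
    · exact (hi.comp_mul_left' hp.ne').const_mul _
    · exact Filter.Eventually.of_forall fun t => by positivity
  rw [e]
  change 1 ≤ ENNReal.ofReal _ * _
  rw [← ENNReal.ofReal_mul (by positivity), inv_mul_cancel₀ hpos.ne']
  simp
end

section
open scoped ENNReal NNReal FourierTransform

lemma kE_two_shift (t u : ℝ) (hu : u ∈ Set.Icc (0:ℝ) 1) : kE 2 0 t ≤ ENNReal.ofReal 9 * kE 2 0 (t - u) := by
  unfold kE kk
  rw [← ENNReal.ofReal_mul (by norm_num)]
  apply ENNReal.ofReal_le_ofReal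
  simp only [pow_zero, one_mul]
  have : (1 + t ^ 2)⁻¹ ≤ 3 * (1 + (t - u) ^ 2)⁻¹ := by
    rw [← div_eq_mul_inv, inv_eq_one_div, div_le_div_iff₀ (by positivity) (by positivity)]
    obtain ⟨h0, h1⟩ := hu
    nlinarith [sq_nonneg (t + u), mul_nonneg h0 (sub_nonneg.2 h1)]
  calc ((1 + t ^ 2)⁻¹) ^ 2 ≤ (3 * (1 + (t - u) ^ 2)⁻¹) ^ 2 := by gcongr
    _ = _ := by ring

lemma avg_bound {h : ℝ → ℝ≥0∞} (hh : Measurable h) (M : ℝ≥0∞)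
    (hM : ∀ z, ∫⁻ u in Set.Ioc (0:ℝ) 1, h (z + u) ≤ M) (x0 : ℝ) :
    ∫⁻ x, kE 2 0 (x - x0) * h x ≤ ENNReal.ofReal 9 * ENNReal.ofReal Real.pi * M := by
  have mk : ∀ a, Measurable fun x => kE 2 0 (x - a) := fun a =>
    (measurable_kE 2 0).comp (measurable_id.sub measurable_const)
  have mk2 : Measurable fun p : ℝ × ℝ => kE 2 0 (p.1 - x0) * h (p.1 + p.2) :=
    ((measurable_kE 2 0).comp (measurable_fst.sub measurable_const)).mul
      (hh.comp (measurable_fst.add measurable_snd))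
  have m1 : Measurable fun x => kE 2 0 (x - x0) * h x := (mk x0).mul hh
  have key : ∀ u ∈ Set.Ioc (0:ℝ) 1, ∫⁻ x, kE 2 0 (x - x0) * h x ≤
      ENNReal.ofReal 9 * ∫⁻ x, kE 2 0 (x - x0) * h (x + u) := by
    intro u hu
    rw [← lintegral_add_right_eq_self _ u, ← lintegral_const_mul]
    swap
    · exact (mk x0).mul (hh.comp (measurable_id.add measurable_const))
    refine lintegral_mono fun x => ?_
    have := kE_two_shift (x + u - x0) u ⟨hu.1.le, hu.2⟩
    rw [show x + u - x0 - u = x - x0 by ring] at this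
    simp only
    rw [← mul_assoc]
    exact mul_le_mul_left this _
  calc _ = ∫⁻ u in Set.Ioc (0:ℝ) 1, ∫⁻ x, kE 2 0 (x - x0) * h x := by
        rw [lintegral_const]; simp
    _ ≤ ∫⁻ u in Set.Ioc (0:ℝ) 1, ENNReal.ofReal 9 * ∫⁻ x, kE 2 0 (x - x0) * h (x + u) :=
        setLIntegral_mono' measurableSet_Ioc key
    _ = ENNReal.ofReal 9 * ∫⁻ u in Set.Ioc (0:ℝ) 1, ∫⁻ x, kE 2 0 (x - x0) * h (x + u) := by
        rw [lintegral_const_mul]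
        exact mk2.lintegral_prod_left'
    _ = ENNReal.ofReal 9 * ∫⁻ x, ∫⁻ u in Set.Ioc (0:ℝ) 1, kE 2 0 (x - x0) * h (x + u) := by
        rw [lintegral_lintegral_swap]
        exact (mk2.comp measurable_swap).aemeasurable
    _ ≤ ENNReal.ofReal 9 * ∫⁻ x, kE 2 0 (x - x0) * M := by
        refine mul_le_mul_right (lintegral_mono fun x => ?_) _
        simp only
        rw [lintegral_const_mul]
        · exact mul_le_mul_right (hM x) _
        · exact hh.comp (measurable_const.add measurable_id)
    _ ≤ _ := by
        rw [lintegral_mul_const _ (mk x0), mul_assoc]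
        exact mul_le_mul_right (mul_le_mul_left (lintegral_kE_sub' 2 0 (by norm_num) x0) _) _

lemma LP_rp (m : ℕ) {φ : SchwartzMap ℝ ℂ} (h : Good φ) : ∃ C : ℝ≥0, ∀ (J N : ℕ) (c : ℕ → ℂ) (Λ : ℕ → ℝ) (x0 : ℝ),
    ∫⁻ x, kE 2 0 (x - x0) * (∑ j ∈ Finset.range J, ‖dl φ N c Λ j x‖ₑ ^ 2) ^ (2 ^ m) ≤
      C * ∫⁻ x, kE 2 0 (x - x0) * (‖rp N c Λ x‖ₑ ^ 2) ^ (2 ^ m) := by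
  obtain ⟨CR, hCR⟩ := repr_bound h
  obtain ⟨CL, hCL⟩ := local_bound h
  obtain ⟨Cθ, hCθ⟩ := theta_lower h
  obtain ⟨C, hC⟩ := LP_abstract m CR CL Cθ (thet φ) (measurable_thet φ) hCθ
  refine ⟨C, fun J N c Λ x0 => ?_⟩
  have hb : ∀ (c' : ℕ → ℂ), (∀ n, ‖c' n‖ ≤ ‖c n‖) → ∀ x, ‖rp N c' Λ x‖ₑ ^ 2 ≤
      ((Real.toNNReal ((∑ n ∈ Finset.range N, ‖c n‖) ^ 2) : ℝ≥0) : ℝ≥0∞) := by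
    intro c' hc' x
    change _ ≤ ENNReal.ofReal _
    rw [← ofReal_norm, ← ENNReal.ofReal_pow (norm_nonneg _)]
    apply ENNReal.ofReal_le_ofReal
    have := (norm_rp_le N c' Λ x).trans (Finset.sum_le_sum fun n _ => hc' n)
    gcongr
  refine hC J (fun j x => ‖dl φ N c Λ j x‖ₑ ^ 2) (fun x => ‖rp N c Λ x‖ₑ ^ 2) _ x0
    (fun j => enorm_sq_meas (continuous_rp _ _ _)) (enorm_sq_meas (continuous_rp _ _ _))
    (fun j x => hb _ (fun n => ?_) x) (fun x => hb c (fun n => le_rfl) x)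
    (fun j x => hCR N c Λ j x) (fun n y => hCL N c Λ J n y)
  rw [norm_mul]
  exact mul_le_of_le_one_left (norm_nonneg _) (h.norm_le _ _)

lemma main_int (m : ℕ) {α : ℝ} (hα : 0 < α) {φ : SchwartzMap ℝ ℂ} (h : Good φ) : ∃ C > 0, ∀ (J N : ℕ) (c : ℕ → ℂ)
    (Λ : ℕ → ℝ), (∀ n, n + 1 < N → α < Λ (n + 1) - Λ n) → ∀ (x0 M : ℝ),
    (∀ z, ∫ x in z..(z+1), ‖rp N c Λ x‖ ^ (2 ^ (m + 1)) ≤ M) →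
    ∫ x in x0..(x0+1), (∑ j ∈ Finset.range J,
      ‖rp N (fun n => if |Λ n| ≤ 2 ^ j then myFourier (fun t => psi φ j t) (Λ n) * c n else 0) Λ x‖ ^ 2) ^ (2 ^ m)
    ≤ C * M := by
  obtain ⟨Q, hQ⟩ := exists_nat_gt (2 / α)
  have hQ0 : (0:ℝ) < Q := lt_trans (by positivity) hQ
  have hQ1 : 1 ≤ Q := by exact_mod_cast hQ0
  obtain ⟨C1, hC1, h1⟩ := sharp_bound m Q hQ1
  obtain ⟨C2, h2⟩ := LP_rp m h
  refine ⟨C1 * ((C2 + 1) * (9 * Real.pi)), by have := Real.pi_pos; positivity, fun J N c Λ hs x0 M hM => ?_⟩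
  have hM0 : 0 ≤ M := le_trans (intervalIntegral.integral_nonneg (by linarith) fun x _ => by positivity) (hM 0)
  have hl : ∀ n, n + 1 < N → 2 / (Q : ℝ) ≤ Λ (n + 1) - Λ n := by
    intro n hn
    refine le_trans ?_ (hs n hn).le
    rw [div_le_iff₀ hQ0]
    rw [div_lt_iff₀ hα] at hQ
    linarith
  refine (h1 J N Λ hl (fun j n => myFourier (fun t => psi φ j t) (Λ n) * c n) (fun j => 2 ^ j)
    (fun j => by positivity) x0).trans ?_
  rw [mul_assoc]
  refine mul_le_mul_of_nonneg_left ?_ hC1.le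
  have hcont : ∀ j, Continuous (dl φ N c Λ j) := fun j => continuous_rp _ _ _
  have hfc : Continuous (rp N c Λ) := continuous_rp _ _ _
  rw [integral_eq_lintegral_of_nonneg_ae (Filter.Eventually.of_forall fun x => by positivity)]
  swap
  · apply Continuous.aestronglyMeasurable
    refine Continuous.mul ?_ ?_
    · refine Continuous.pow (Continuous.inv₀ (by fun_prop) fun x => by positivity) 2
    · exact (continuous_finsetSum _ fun j _ => ((hcont j).norm.pow 2)).pow _
  apply ENNReal.toReal_le_of_le_ofReal (by have := Real.pi_pos; positivity)
  have e : ∀ x, ENNReal.ofReal (((1 + (x - x0) ^ 2)⁻¹) ^ 2 *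
      (∑ j ∈ Finset.range J, ‖rp N (fun n => myFourier (fun t => psi φ j t) (Λ n) * c n) Λ x‖ ^ 2) ^ (2 ^ m))
      = kE 2 0 (x - x0) * (∑ j ∈ Finset.range J, ‖dl φ N c Λ j x‖ₑ ^ 2) ^ (2 ^ m) := by
    intro x
    rw [ENNReal.ofReal_mul (by positivity), ENNReal.ofReal_pow (p := ∑ j ∈ Finset.range J, _) (by positivity),
      ENNReal.ofReal_sum_of_nonneg (fun j _ => by positivity)]
    congr 2
    · simp [kk]
    · refine Finset.sum_congr rfl fun j _ => ?_
      rw [ENNReal.ofReal_pow (norm_nonneg _), ofReal_norm]; rfl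
  simp_rw [e]
  refine (h2 J N c Λ x0).trans ?_
  have hm : Measurable fun x => (‖rp N c Λ x‖ₑ ^ 2) ^ (2 ^ m) := (enorm_sq_meas hfc).pow_const _
  refine (mul_le_mul_right (avg_bound hm (ENNReal.ofReal M) (fun z => ?_) x0) _).trans ?_
  · have e2 : ∀ x, (‖rp N c Λ x‖ₑ ^ 2) ^ (2 ^ m) = ENNReal.ofReal (‖rp N c Λ x‖ ^ (2 ^ (m + 1))) := by
      intro x
      rw [ENNReal.ofReal_pow (norm_nonneg _), ofReal_norm, ← pow_mul, pow_succ, mul_comm 2]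
    simp_rw [e2]
    have hc2 : Continuous fun u => ‖rp N c Λ (z + u)‖ ^ (2 ^ (m + 1)) :=
      ((hfc.comp (continuous_const.add continuous_id)).norm).pow _
    rw [← ofReal_integral_eq_lintegral_ofReal]
    · apply ENNReal.ofReal_le_ofReal
      rw [← intervalIntegral.integral_of_le (by norm_num)]
      have := intervalIntegral.integral_comp_add_left (fun x => ‖rp N c Λ x‖ ^ (2 ^ (m + 1))) z (a := 0) (b := 1)
      rw [this, add_zero]
      exact hM z
    · exact (hc2.integrableOn_Icc).mono_set Set.Ioc_subset_Icc_self
    · exact Filter.Eventually.of_forall fun x => by positivity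
  · have hp := Real.pi_pos
    rw [← ENNReal.ofReal_mul (by norm_num), ← ENNReal.ofReal_mul (by positivity), ← ENNReal.ofReal_coe_nnreal,
      ← ENNReal.ofReal_mul (by positivity)]
    apply ENNReal.ofReal_le_ofReal
    nlinarith [mul_nonneg (mul_nonneg (by norm_num : (0:ℝ) ≤ 9) hp.le) hM0]
end

section
open scoped ENNReal NNReal FourierTransform

noncomputable def Aj (φ : SchwartzMap ℝ ℂ) (N : ℕ) (c : ℕ → ℂ) (Λ : ℕ → ℝ) (j : ℕ) : ℝ → ℂ :=
  rp N (fun n => if |Λ n| ≤ 2 ^ j then myFourier (fun t => psi φ j t) (Λ n) * c n else 0) Λ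

lemma Aj_eq {φ : SchwartzMap ℝ ℂ} (h : Good φ) (P : TrigPoly) (j : ℕ) (x : ℝ) :
    P.sharpSum j x - TrigPoly.smoothSum (fun t => φ t) P j x = Aj φ P.N P.c P.Λ j x := by
  unfold TrigPoly.sharpSum TrigPoly.smoothSum Aj rp er
  rw [← Finset.sum_sub_distrib]
  refine Finset.sum_congr rfl fun n _ => ?_
  beta_reduce
  rw [psi_fourier]
  split_ifs with hc
  · rw [h.one (((2:ℝ) ^ (j + 1))⁻¹ * P.Λ n)]
    · ring
    · rw [abs_resc, div_le_iff₀ (by positivity), pow_succ]; linarith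
  · rw [h.zero (((2:ℝ) ^ j)⁻¹ * P.Λ n)]
    · ring
    · rw [abs_resc, lt_div_iff₀ (by positivity)]; linarith

lemma Aj_zero {φ : SchwartzMap ℝ ℂ} (h : Good φ) (N : ℕ) (c : ℕ → ℂ) (Λ : ℕ → ℝ) : ∃ J : ℕ, ∀ j ≥ J, ∀ x,
    Aj φ N c Λ j x = 0 := by
  obtain ⟨J, hJ⟩ := pow_unbounded_of_one_lt (2 * ∑ n ∈ Finset.range N, |Λ n|) (by norm_num : (1:ℝ) < 2)
  refine ⟨J, fun j hj x => ?_⟩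
  unfold Aj rp
  refine Finset.sum_eq_zero fun n hn => ?_
  have h1 : |Λ n| ≤ ∑ n ∈ Finset.range N, |Λ n| :=
    Finset.single_le_sum (f := fun n => |Λ n|) (fun _ _ => abs_nonneg _) hn
  have h2 : (2:ℝ) ^ J ≤ 2 ^ j := pow_le_pow_right₀ (by norm_num) hj
  have h3 : myFourier (fun t => psi φ j t) (Λ n) = 0 := by
    by_contra hne
    have := (h.supp j (Λ n) hne).1
    linarith
  simp [h3]

lemma final_aux (m : ℕ) {α : ℝ} (hα : 0 < α) {φ : SchwartzMap ℝ ℂ} (h : Good φ) :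
    ∃ C : ℝ, 0 < C ∧ ∀ P : TrigPoly, P.sep α →
      stepanovNorm ((2 : ℝ) ^ (m + 1))
          (fun s => Real.sqrt (∑' j : ℕ,
            ‖P.sharpSum (j + 1) s - TrigPoly.smoothSum (fun t => φ t) P (j + 1) s‖ ^ 2))
        ≤ C * stepanovNorm ((2 : ℝ) ^ (m + 1)) (fun s => ‖P.eval s‖) := by
  obtain ⟨C, hC, hmain⟩ := main_int m hα h
  refine ⟨C ^ (1 / (2:ℝ) ^ (m + 1)), Real.rpow_pos_of_pos hC _, fun P hP => ?_⟩
  have hp : (2:ℝ) ^ (m + 1) = ((2 ^ (m + 1) : ℕ) : ℝ) := by push_cast; rfl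
  have hcA : ∀ j, Continuous (Aj φ P.N P.c P.Λ j) := fun j => continuous_rp _ _ _
  have hfc : Continuous (rp P.N P.c P.Λ) := continuous_rp _ _ _
  set If : ℝ → ℝ := fun x => ∫ s in x..(x + 1), |‖P.eval s‖| ^ ((2:ℝ) ^ (m + 1)) with hIf
  have eIf : ∀ x, If x = ∫ s in x..(x + 1), ‖rp P.N P.c P.Λ s‖ ^ (2 ^ (m + 1)) := by
    intro x
    simp only [hIf]
    refine intervalIntegral.integral_congr fun s _ => ?_
    beta_reduce
    rw [hp, Real.rpow_natCast, abs_norm]; rfl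
  have hbdd : BddAbove (Set.range If) := by
    refine ⟨(∑ n ∈ Finset.range P.N, ‖P.c n‖) ^ (2 ^ (m + 1)), ?_⟩
    rintro _ ⟨x, rfl⟩
    rw [eIf]
    have := intervalIntegral.integral_mono_on (μ := volume) (a := x) (b := x + 1) (by linarith)
      ((hfc.norm.pow (2 ^ (m + 1))).intervalIntegrable x (x + 1))
      (intervalIntegrable_const (c := (∑ n ∈ Finset.range P.N, ‖P.c n‖) ^ (2 ^ (m + 1))))
      (fun s _ => by
        have := norm_rp_le P.N P.c P.Λ s
        simp only [Pi.pow_apply]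
        gcongr)
    simpa using this
  set M := ⨆ x, If x with hM
  have hMle : ∀ z, ∫ x in z..(z+1), ‖rp P.N P.c P.Λ x‖ ^ (2 ^ (m + 1)) ≤ M := by
    intro z
    rw [← eIf]
    exact le_ciSup hbdd z
  have hM0 : 0 ≤ M := le_trans (intervalIntegral.integral_nonneg (by linarith) fun x _ => by positivity) (hMle 0)
  obtain ⟨J, hJ⟩ := Aj_zero h P.N P.c P.Λ
  have hS : ∀ s, (∑' j : ℕ, ‖P.sharpSum (j + 1) s - TrigPoly.smoothSum (fun t => φ t) P (j + 1) s‖ ^ 2) =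
      ∑ j ∈ Finset.range J, ‖Aj φ P.N P.c P.Λ (j + 1) s‖ ^ 2 := by
    intro s
    simp_rw [Aj_eq h]
    refine tsum_eq_sum fun j hj => ?_
    rw [Finset.mem_range, not_lt] at hj
    rw [hJ _ (by omega)]; simp
  unfold stepanovNorm
  have hle : (⨆ x : ℝ, ∫ s in x..(x + 1), |Real.sqrt (∑' j : ℕ,
      ‖P.sharpSum (j + 1) s - TrigPoly.smoothSum (fun t => φ t) P (j + 1) s‖ ^ 2)| ^ ((2:ℝ) ^ (m + 1))) ≤ C * M := by
    refine ciSup_le fun x => ?_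
    refine le_trans ?_ (hmain (J + 1) P.N P.c P.Λ hP x M hMle)
    have e : ∀ s, |Real.sqrt (∑' j : ℕ,
      ‖P.sharpSum (j + 1) s - TrigPoly.smoothSum (fun t => φ t) P (j + 1) s‖ ^ 2)| ^ ((2:ℝ) ^ (m + 1)) =
        (∑ j ∈ Finset.range J, ‖Aj φ P.N P.c P.Λ (j + 1) s‖ ^ 2) ^ (2 ^ m) := by
      intro s
      rw [hS, hp, Real.rpow_natCast, abs_of_nonneg (Real.sqrt_nonneg _), pow_succ, mul_comm (2 ^ m), pow_mul,
        Real.sq_sqrt (by positivity)]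
    simp_rw [e]
    refine intervalIntegral.integral_mono_on (by linarith) ?_ ?_ fun s _ => ?_
    · exact ((continuous_finsetSum _ fun j _ => ((hcA (j + 1)).norm.pow 2)).pow _).intervalIntegrable _ _
    · exact ((continuous_finsetSum _ fun j _ => ((hcA j).norm.pow 2)).pow _).intervalIntegrable _ _
    · refine pow_le_pow_left₀ (by positivity) ?_ _
      rw [Finset.sum_range_succ']
      exact le_add_of_nonneg_right (by positivity)
  have h0 : 0 ≤ (⨆ x : ℝ, ∫ s in x..(x + 1), |Real.sqrt (∑' j : ℕ,
      ‖P.sharpSum (j + 1) s - TrigPoly.smoothSum (fun t => φ t) P (j + 1) s‖ ^ 2)| ^ ((2:ℝ) ^ (m + 1))) :=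
    Real.iSup_nonneg fun x => intervalIntegral.integral_nonneg (by linarith) fun s _ => by positivity
  rw [← Real.mul_rpow hC.le hM0]
  exact Real.rpow_le_rpow h0 hle (by positivity)
end

/-- Square function bound: with `φ` Schwartz, `φ̂` real-valued with values in `[0,1]`,
`supp φ̂ ⊆ [-1,1]` and `φ̂ = 1` on `[-1/2, 1/2]`, for every `k ≥ 1` and `α > 0` there is
`C = C(k, α, φ) > 0` such that `‖(Σ_{j≥1} |S_j f - R_j f|²)^{1/2}‖_{S^{2^k}} ≤ C ‖f‖_{S^{2^k}}`
for every `α`-separated trigonometric polynomial `f`. -/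
theorem stmt_14 (k : ℕ) (hk : 1 ≤ k) (α : ℝ) (hα : 0 < α) (φ : SchwartzMap ℝ ℂ)
    (hreal : ∀ ξ : ℝ, (myFourier (fun t => φ t) ξ).im = 0)
    (hrange : ∀ ξ : ℝ, 0 ≤ (myFourier (fun t => φ t) ξ).re
      ∧ (myFourier (fun t => φ t) ξ).re ≤ 1)
    (hsupp : Function.support (fun ξ : ℝ => myFourier (fun t => φ t) ξ)
      ⊆ Set.Icc (-1 : ℝ) 1)
    (hone : ∀ ξ ∈ Set.Icc (-(1 : ℝ) / 2) (1 / 2), myFourier (fun t => φ t) ξ = 1) :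
    ∃ C : ℝ, 0 < C ∧ ∀ P : TrigPoly, P.sep α →
      stepanovNorm ((2 : ℝ) ^ k)
          (fun s => Real.sqrt (∑' j : ℕ,
            ‖P.sharpSum (j + 1) s - TrigPoly.smoothSum (fun t => φ t) P (j + 1) s‖ ^ 2))
        ≤ C * stepanovNorm ((2 : ℝ) ^ k) (fun s => ‖P.eval s‖) := by
  obtain ⟨m, rfl⟩ : ∃ m, k = m + 1 := ⟨k - 1, by omega⟩
  refine final_aux m hα ⟨hreal, hrange, fun ξ hξ => ?_, fun ξ hξ => hone ξ ?_⟩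
  · by_contra hne
    have := hsupp (Function.mem_support.mpr hne)
    exact absurd (abs_le.mpr ⟨this.1, this.2⟩) (not_le.mpr hξ)
  · rw [abs_le] at hξ
    exact ⟨by linarith [hξ.1], hξ.2⟩
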